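/- For the bRT shuffle with |A| = |B| = n and N = 2n, for every starting permutation x ∈ 𝔖_N and every integer t ≥ 0, d_TV(P^t(x, ·), U)² ≤ (1/4)·Σ_{λ ⊢ 2n, λ ≠ (2n)} Σ_{μ ⊢ n, ν ⊢ n} c^λ_{μ,ν}·f_λ·f_μ·f_ν·|Eig^λ_{μ,ν}|^{2t}. -/

import Mathlib

open scoped BigOperators

noncomputable section

namespace BRT

/-- The diagonal index `Diag(λ) = Σᵢ C(λᵢ,2) − Σᵢ C(λ*ᵢ,2)` of a Young diagram. -/
def diag (μ : YoungDiagram) : ℤ :=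
  (∑ᶠ i : ℕ, ((μ.rowLen i).choose 2 : ℤ)) - ∑ᶠ i : ℕ, ((μ.colLen i).choose 2 : ℤ)

/-- A semistandard tableau is standard if each value `k < |μ|` occurs in exactly one cell. -/
def IsStandard (μ : YoungDiagram) (T : SemistandardYoungTableau μ) : Prop :=
  ∀ k < μ.card, ∃! c : ℕ × ℕ, c ∈ μ.cells ∧ T c.1 c.2 = k

/-- `fSYT μ` is the number of standard Young tableaux of shape `μ`. -/
def fSYT (μ : YoungDiagram) : ℕ :=
  Nat.card {T : SemistandardYoungTableau μ // IsStandard μ T}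

/-- Number of entries equal to `k` in the prefix of the reverse reading word of the skew
filling `T` of shape `lam/mu` ending at position `(r, j)`: the prefix consists of the rows
`< r` entirely, together with the cells of row `r` of column index `≥ j` (rows are read
right-to-left, top to bottom). -/
def prefixCount (lam mu : YoungDiagram) (T : ℕ → ℕ → ℕ) (r j k : ℕ) : ℕ :=
  (lam.cells.filter fun c =>
    c ∉ mu.cells ∧ T c.1 c.2 = k ∧ (c.1 < r ∨ (c.1 = r ∧ j ≤ c.2))).card

/-- `T : ℕ → ℕ → ℕ` is a Littlewood–Richardson skew tableau of shape `lam/mu` and content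
`nu`: it vanishes outside the skew shape, is weakly increasing along rows and strictly
increasing along columns of the skew shape, has exactly `nu_k` entries equal to `k` for
every `k`, and every prefix of its reverse reading word contains at least as many entries
equal to `k` as entries equal to `k + 1`, for every `k` (lattice word condition). -/
def IsLR (lam mu nu : YoungDiagram) (T : ℕ → ℕ → ℕ) : Prop :=
  (∀ i j : ℕ, ¬((i, j) ∈ lam ∧ (i, j) ∉ mu) → T i j = 0) ∧
  (∀ i j1 j2 : ℕ, j1 < j2 → (i, j1) ∈ lam → (i, j1) ∉ mu → (i, j2) ∈ lam → (i, j2) ∉ mu →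
    T i j1 ≤ T i j2) ∧
  (∀ i1 i2 j : ℕ, i1 < i2 → (i1, j) ∈ lam → (i1, j) ∉ mu → (i2, j) ∈ lam → (i2, j) ∉ mu →
    T i1 j < T i2 j) ∧
  (∀ k, (lam.cells.filter fun c => c ∉ mu.cells ∧ T c.1 c.2 = k).card = nu.rowLen k) ∧
  (∀ r j k, prefixCount lam mu T r j (k + 1) ≤ prefixCount lam mu T r j k)

/-- The Littlewood–Richardson coefficient `c^λ_{μ,ν}`: the number of Littlewood–Richardson
skew tableaux of shape `λ/μ` and content `ν` (and `0` if `μ ⊄ λ`). -/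
def lrCoeff (lam mu nu : YoungDiagram) : ℕ :=
  @ite _ (mu ≤ lam) (Classical.dec _) (Nat.card {T : ℕ → ℕ → ℕ // IsLR lam mu nu T}) 0

/-- The transition matrix of the biased random transposition shuffle on `𝔖_N` determined
by the set `A ⊆ [N]` (with `B = Aᶜ`) and the bias parameters `a`, `b`:
`P(x,y) = 2a²/N²` if `y x⁻¹` is a transposition of two elements of `A`, `2b²/N²` if it is a
transposition of two elements of `B`, `2ab/N²` if it transposes an element of `A` with one
of `B`, `(a²|A| + b²|B|)/N²` if `y = x`, and `0` otherwise. -/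
def transMat (a b : ℝ) {N : ℕ} (A : Finset (Fin N)) :
    Matrix (Equiv.Perm (Fin N)) (Equiv.Perm (Fin N)) ℝ :=
  fun x y =>
    if y = x then (a ^ 2 * A.card + b ^ 2 * Aᶜ.card) / (N : ℝ) ^ 2
    else if ∃ i j : Fin N, i ≠ j ∧ i ∈ A ∧ j ∈ A ∧ y * x⁻¹ = Equiv.swap i j then
      2 * a ^ 2 / (N : ℝ) ^ 2
    else if ∃ i j : Fin N, i ≠ j ∧ i ∉ A ∧ j ∉ A ∧ y * x⁻¹ = Equiv.swap i j then
      2 * b ^ 2 / (N : ℝ) ^ 2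
    else if ∃ i j : Fin N, i ∈ A ∧ j ∉ A ∧ y * x⁻¹ = Equiv.swap i j then
      2 * a * b / (N : ℝ) ^ 2
    else 0

/-- Total variation distance between two probability mass functions on a finite type. -/
def dTV {α : Type*} [Fintype α] (p q : α → ℝ) : ℝ :=
  (∑ x, |p x - q x|) / 2

/-- The uniform distribution on permutations of `Fin N`. -/
def unif (N : ℕ) : Equiv.Perm (Fin N) → ℝ :=
  fun _ => ((N.factorial : ℝ))⁻¹

/-- The eigenvalue `Eig^λ_{μ,ν}` of the biased random transposition shuffle in the case
`|A| = |B| = n`, `N = 2n`. -/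
def eig (a b : ℝ) (n : ℕ) (lam mu nu : YoungDiagram) : ℝ :=
  (a ^ 2 + b ^ 2) / (4 * (n : ℝ)) + (a ^ 2 - a * b) / (2 * (n : ℝ) ^ 2) * (diag mu : ℝ)
    + (b ^ 2 - a * b) / (2 * (n : ℝ) ^ 2) * (diag nu : ℝ)
    + a * b / (2 * (n : ℝ) ^ 2) * (diag lam : ℝ)

section part1
open MvPolynomial

/-! ### Young diagrams as row-length functions -/

theorem yd_ext {Y Z : YoungDiagram} (h : ∀ i, Y.rowLen i = Z.rowLen i) : Y = Z := by
  ext ⟨i, j⟩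
  rw [YoungDiagram.mem_cells, YoungDiagram.mem_cells, YoungDiagram.mem_iff_lt_rowLen,
    YoungDiagram.mem_iff_lt_rowLen, h]

theorem yd_exists (f : ℕ → ℕ) (M : ℕ) (hf : Antitone f) (hM : ∀ i, M ≤ i → f i = 0) :
    ∃ Y : YoungDiagram, ∀ i, Y.rowLen i = f i := by
  classical
  let Y : YoungDiagram :=
    { cells := (Finset.range M ×ˢ Finset.range (f 0)).filter fun c => c.2 < f c.1
      isLowerSet := by
        rintro ⟨i, j⟩ ⟨i', j'⟩ h hc
        simp only [Finset.coe_filter, Finset.mem_product, Finset.mem_range, Set.mem_ofPred_eq,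
          Prod.mk_le_mk] at *
        have h1 := hf h.1
        omega }
  refine ⟨Y, fun i => ?_⟩
  have key : ∀ j, j < Y.rowLen i ↔ j < f i := by
    intro j
    rw [← YoungDiagram.mem_iff_lt_rowLen, ← YoungDiagram.mem_cells]
    simp only [Y, Finset.mem_filter, Finset.mem_product, Finset.mem_range]
    constructor
    · exact fun h => h.2
    · intro h
      refine ⟨⟨?_, ?_⟩, h⟩
      · by_contra hc
        have := hM i (by omega)
        omega
      · have := hf (Nat.zero_le i)
        omega
  have h1 := key (Y.rowLen i)
  have h2 := key (f i)
  omega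

theorem yd_card_eq (Y : YoungDiagram) (M : ℕ) (h : ∀ i, M ≤ i → Y.rowLen i = 0) :
    Y.card = ∑ i ∈ Finset.range M, Y.rowLen i := by
  classical
  have : Y.cells = (Finset.range M).biUnion (fun i => Y.row i) := by
    ext ⟨i, j⟩
    simp only [Finset.mem_biUnion, Finset.mem_range, YoungDiagram.mem_row_iff,
      YoungDiagram.mem_cells]
    constructor
    · intro hc
      refine ⟨i, ?_, hc, rfl⟩
      by_contra hi
      have := h i (by omega)
      rw [YoungDiagram.mem_iff_lt_rowLen] at hc
      omega
    · rintro ⟨_, _, hc, _⟩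
      exact hc
  have hc : Y.card = Y.cells.card := rfl
  rw [hc, this, Finset.card_biUnion]
  · simp [YoungDiagram.rowLen_eq_card]
  · intro i _ j _ hij
    rw [Function.onFun, Finset.disjoint_left]
    intro c h1 h2
    rw [YoungDiagram.mem_row_iff] at h1 h2
    exact hij (h1.2.symm.trans h2.2)

theorem rowLen_zero_of_card_le (Y : YoungDiagram) (M : ℕ) (h : Y.card ≤ M) (i : ℕ) (hi : M ≤ i) :
    Y.rowLen i = 0 := by
  classical
  by_contra hne
  have hsub : (Finset.range (i + 1)).image (fun k => (k, 0)) ⊆ Y.cells := by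
    intro c hc
    simp only [Finset.mem_image, Finset.mem_range] at hc
    obtain ⟨k, hk, rfl⟩ := hc
    rw [YoungDiagram.mem_cells, YoungDiagram.mem_iff_lt_rowLen]
    have := Y.rowLen_anti k i (by omega)
    omega
  have := Finset.card_le_card hsub
  rw [Finset.card_image_of_injective _ (fun a b h => by simpa using h), Finset.card_range] at this
  have hc : Y.card = Y.cells.card := rfl
  omega

theorem card_eq_sum (Y : YoungDiagram) (M : ℕ) (h : Y.card ≤ M) :
    Y.card = ∑ i ∈ Finset.range M, Y.rowLen i :=
  yd_card_eq Y M (rowLen_zero_of_card_le Y M h)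

theorem yd_finite (N : ℕ) : {Y : YoungDiagram | Y.card = N}.Finite := by
  classical
  have hinj : Function.Injective YoungDiagram.cells := fun Y Z h => by
    cases Y; cases Z; simpa using h
  have hfin : ((Finset.range N ×ˢ Finset.range N).powerset : Set (Finset (ℕ × ℕ))).Finite :=
    Finset.finite_toSet _
  refine Set.Finite.subset (Set.Finite.preimage hinj.injOn hfin) ?_
  intro Y hY
  simp only [Set.mem_ofPred_eq] at hY
  simp only [Set.mem_preimage, Finset.mem_coe, Finset.mem_powerset]
  rintro ⟨i, j⟩ hc
  rw [YoungDiagram.mem_cells] at hc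
  simp only [Finset.mem_product, Finset.mem_range]
  constructor
  · by_contra hi
    have := rowLen_zero_of_card_le Y N hY.le i (by omega)
    rw [YoungDiagram.mem_iff_lt_rowLen] at hc
    omega
  · have h1 := rowLen_zero_of_card_le Y.transpose N ?_ j
    · by_contra hj
      have h2 := h1 (by omega)
      rw [YoungDiagram.rowLen_transpose] at h2
      rw [YoungDiagram.mem_iff_lt_colLen] at hc
      omega
    · have : Y.transpose.card = Y.card := by
        simp [YoungDiagram.card, YoungDiagram.transpose]
      omega

/-- the Young diagrams with `N` cells. -/
def YD (N : ℕ) : Finset YoungDiagram := (yd_finite N).toFinset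

@[simp] theorem mem_YD {N : ℕ} {Y : YoungDiagram} : Y ∈ YD N ↔ Y.card = N := by
  simp [YD]

/-! ### Monomials and coefficients -/

variable {M : ℕ}

def mon (β : Fin M → ℕ) : MvPolynomial (Fin M) ℝ :=
  monomial (Finsupp.equivFunOnFinite.symm β) 1

def cf (β : Fin M → ℕ) (f : MvPolynomial (Fin M) ℝ) : ℝ :=
  coeff (Finsupp.equivFunOnFinite.symm β) f

theorem cf_mon (β β' : Fin M → ℕ) : cf β (mon β') = if β = β' then 1 else 0 := by
  classical
  rw [cf, mon, coeff_monomial]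
  simp [eq_comm]

theorem cf_ext {f g : MvPolynomial (Fin M) ℝ} (h : ∀ β, cf β f = cf β g) : f = g := by
  ext m
  have := h (Finsupp.equivFunOnFinite m)
  simpa [cf] using this

@[simp] theorem cf_add (β : Fin M → ℕ) (f g) : cf β (f + g) = cf β f + cf β g := by
  simp [cf]
@[simp] theorem cf_sub (β : Fin M → ℕ) (f g) : cf β (f - g) = cf β f - cf β g := by
  simp [cf]
@[simp] theorem cf_smul (β : Fin M → ℕ) (c : ℝ) (f) : cf β (c • f) = c * cf β f := by
  simp [cf]
@[simp] theorem cf_zero (β : Fin M → ℕ) : cf β 0 = 0 := by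
  simp [cf]
@[simp] theorem cf_sum {ι : Type*} (s : Finset ι) (β : Fin M → ℕ)
    (f : ι → MvPolynomial (Fin M) ℝ) : cf β (∑ i ∈ s, f i) = ∑ i ∈ s, cf β (f i) := by
  simp [cf, coeff_sum]

theorem mon_mul (β β' : Fin M → ℕ) : mon β * mon β' = mon (β + β') := by
  have h : Finsupp.equivFunOnFinite.symm β + Finsupp.equivFunOnFinite.symm β' =
      Finsupp.equivFunOnFinite.symm (β + β') := by
    ext k; rfl
  rw [mon, mon, mon, monomial_mul, one_mul, h]

theorem mon_eq_prod (β : Fin M → ℕ) : mon β = ∏ k, X k ^ β k := by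
  rw [mon, monomial_eq]
  simp [Finsupp.prod_fintype]

open Classical in
theorem cf_mon_mul (β β' : Fin M → ℕ) (f) :
    cf β (mon β' * f) = if β' ≤ β then cf (β - β') f else 0 := by
  rw [cf, mon, coeff_monomial_mul']
  have h1 : (Finsupp.equivFunOnFinite.symm β' ≤ Finsupp.equivFunOnFinite.symm β) ↔ β' ≤ β := by
    rw [Finsupp.le_def]; rfl
  simp only [h1, one_mul]
  split_ifs
  · have h : Finsupp.equivFunOnFinite.symm β - Finsupp.equivFunOnFinite.symm β' =
        Finsupp.equivFunOnFinite.symm (β - β') := by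
      ext k; rfl
    rw [h]; rfl
  · rfl

theorem rename_mon (π : Equiv.Perm (Fin M)) (β : Fin M → ℕ) :
    rename π (mon β) = mon (β ∘ π.symm) := by
  rw [mon_eq_prod, mon_eq_prod, map_prod]
  simp only [map_pow, rename_X]
  exact Fintype.prod_equiv π _ _ (fun k => by simp)

theorem cf_rename (π : Equiv.Perm (Fin M)) (β : Fin M → ℕ) (f) :
    cf β (rename π f) = cf (β ∘ π) f := by
  rw [cf, cf]
  have : Finsupp.equivFunOnFinite.symm β =
      Finsupp.mapDomain π (Finsupp.equivFunOnFinite.symm (β ∘ π)) := by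
    ext k
    rw [Finsupp.mapDomain_equiv_apply]
    simp
  rw [this, coeff_rename_mapDomain _ π.injective]

def sg (π : Equiv.Perm (Fin M)) : ℝ := ((Equiv.Perm.sign π : ℤ) : ℝ)

theorem sg_mul (π τ : Equiv.Perm (Fin M)) : sg (π * τ) = sg π * sg τ := by
  simp [sg]
theorem sg_inv (π : Equiv.Perm (Fin M)) : sg π⁻¹ = sg π := by
  simp [sg]
@[simp] theorem sg_one : sg (1 : Equiv.Perm (Fin M)) = 1 := by
  simp [sg]
theorem sg_sq (π : Equiv.Perm (Fin M)) : sg π * sg π = 1 := by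
  rcases Int.units_eq_one_or (Equiv.Perm.sign π) with h | h <;> simp [sg, h]
theorem sg_swap {i j : Fin M} (h : i ≠ j) : sg (Equiv.swap i j) = -1 := by
  simp [sg, Equiv.Perm.sign_swap h]

def alt (α : Fin M → ℕ) : MvPolynomial (Fin M) ℝ :=
  ∑ π : Equiv.Perm (Fin M), sg π • mon (α ∘ π)

def Anti (f : MvPolynomial (Fin M) ℝ) : Prop := ∀ π : Equiv.Perm (Fin M), rename π f = sg π • f

theorem Anti.cf {f : MvPolynomial (Fin M) ℝ} (h : Anti f) (π : Equiv.Perm (Fin M))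
    (β : Fin M → ℕ) : cf (β ∘ π) f = sg π * cf β f := by
  rw [← cf_rename, h, cf_smul]

theorem Anti.mul {f g : MvPolynomial (Fin M) ℝ} (h : Anti f) (hg : IsSymmetric g) :
    Anti (f * g) := by
  intro π
  rw [map_mul, h π, hg π, smul_mul_assoc]

theorem Anti.sum {ι : Type*} (s : Finset ι) (c : ι → ℝ) (f : ι → MvPolynomial (Fin M) ℝ)
    (h : ∀ i, Anti (f i)) : Anti (∑ i ∈ s, c i • f i) := by
  intro π
  rw [map_sum, Finset.smul_sum]
  refine Finset.sum_congr rfl fun i _ => ?_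
  rw [map_smul, h i π, smul_comm]

theorem alt_anti (α : Fin M → ℕ) : Anti (alt α) := by
  intro π
  rw [alt, map_sum, Finset.smul_sum]
  refine Fintype.sum_equiv (Equiv.mulRight π⁻¹) _ _ fun τ => ?_
  rw [map_smul, rename_mon, smul_smul]
  simp only [Equiv.coe_mulRight]
  rw [sg_mul, sg_inv, mul_comm (sg τ), ← mul_assoc, sg_sq, one_mul]
  rfl

theorem Anti.cf_eq_zero {f : MvPolynomial (Fin M) ℝ} (h : Anti f) {β : Fin M → ℕ} {i j : Fin M}
    (hij : i ≠ j) (hb : β i = β j) : BRT.cf β f = 0 := by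
  have h1 := h.cf (Equiv.swap i j) β
  have h2 : β ∘ Equiv.swap i j = β := by
    funext k
    simp only [Function.comp]
    rcases eq_or_ne k i with rfl | hi
    · simp [hb]
    rcases eq_or_ne k j with rfl | hj
    · simp [hb]
    · rw [Equiv.swap_apply_of_ne_of_ne hi hj]
  rw [h2, sg_swap hij] at h1
  linarith

theorem exists_sort (β : Fin M → ℕ) (h : Function.Injective β) :
    ∃ π : Equiv.Perm (Fin M), StrictAnti (β ∘ π) := by
  refine ⟨Tuple.sort β * Fin.revPerm, ?_⟩
  have h1 : StrictMono (β ∘ Tuple.sort β) :=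
    (Tuple.monotone_sort β).strictMono_of_injective (h.comp (Equiv.injective _))
  intro i j hij
  have := h1 (Fin.rev_lt_rev.mpr hij)
  simpa using this

theorem anti_ext {f g : MvPolynomial (Fin M) ℝ} (hf : Anti f) (hg : Anti g)
    (h : ∀ α : Fin M → ℕ, StrictAnti α → cf α f = cf α g) : f = g := by
  refine cf_ext fun β => ?_
  by_cases hb : Function.Injective β
  · obtain ⟨π, hπ⟩ := exists_sort β hb
    have h1 := h _ hπ
    rw [hf.cf, hg.cf] at h1
    have h2 : sg π ≠ 0 := fun h0 => by
      have := sg_sq π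
      rw [h0] at this
      norm_num at this
    exact mul_left_cancel₀ h2 h1
  · rw [Function.Injective] at hb
    push Not at hb
    obtain ⟨i, j, h1, h2⟩ := hb
    rw [hf.cf_eq_zero h2 h1, hg.cf_eq_zero h2 h1]

theorem strictAnti_perm {α : Fin M → ℕ} (h : StrictAnti α) {π : Equiv.Perm (Fin M)}
    (hπ : StrictAnti (α ∘ π)) : π = 1 := by
  have h1 : StrictMono π := by
    intro i j hij
    have := hπ hij
    by_contra hc
    have h3 := h.antitone (not_lt.mp hc)
    simp only [Function.comp] at this
    omega
  have h2 : (π : Fin M → Fin M) = id := (StrictMono.range_inj h1 strictMono_id).mp (by simp)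
  ext k
  rw [h2]
  rfl

theorem strictAnti_comp_eq {α α' : Fin M → ℕ} (h : StrictAnti α) (h' : StrictAnti α')
    {π : Equiv.Perm (Fin M)} (hπ : α = α' ∘ π) : π = 1 :=
  strictAnti_perm h' (hπ ▸ h)

theorem cf_alt {α α' : Fin M → ℕ} (h : StrictAnti α) (h' : StrictAnti α') :
    cf α (alt α') = if α = α' then 1 else 0 := by
  rw [alt, cf_sum, Finset.sum_eq_single 1]
  · rw [cf_smul, cf_mon]; simp
  · intro π _ hπ
    rw [cf_smul, cf_mon, if_neg, mul_zero]
    intro hc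
    exact hπ (strictAnti_comp_eq h h' hc)
  · simp

/-- the staircase -/
def rho (M : ℕ) : Fin M → ℕ := fun k => (Fin.rev k : ℕ)

/-- the shifted row lengths -/
def sh (M : ℕ) (Y : YoungDiagram) : Fin M → ℕ := fun k => Y.rowLen k + rho M k

theorem rho_strictAnti : StrictAnti (rho M) := fun i j h => by
  simp only [rho, Fin.val_rev]
  have := j.isLt
  have : (i : ℕ) < j := h
  omega

theorem sh_strictAnti (Y : YoungDiagram) : StrictAnti (sh M Y) := fun i j h => by
  have h1 := Y.rowLen_anti i j (le_of_lt h)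
  have h2 := rho_strictAnti h
  simp only [sh]
  omega

theorem rowLen_bot (i : ℕ) : (⊥ : YoungDiagram).rowLen i = 0 := by
  by_contra h
  have : (i, 0) ∈ (⊥ : YoungDiagram) := by
    rw [YoungDiagram.mem_iff_lt_rowLen]; omega
  exact YoungDiagram.notMem_bot _ this

theorem sh_bot : sh M ⊥ = rho M := by
  funext k
  simp [sh, rowLen_bot]

theorem sh_sum (Y : YoungDiagram) (h : Y.card ≤ M) : ∑ k, sh M Y k = Y.card + ∑ k, rho M k := by
  simp only [sh, Finset.sum_add_distrib]
  rw [card_eq_sum Y M h, Finset.sum_range]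

theorem sh_inj {Y Z : YoungDiagram} (hY : Y.card ≤ M) (hZ : Z.card ≤ M) (h : sh M Y = sh M Z) :
    Y = Z := by
  refine yd_ext fun i => ?_
  by_cases hi : i < M
  · have := congrFun h ⟨i, hi⟩
    simpa [sh] using this
  · rw [rowLen_zero_of_card_le Y M hY i (by omega), rowLen_zero_of_card_le Z M hZ i (by omega)]

theorem strictAnti_bound {α : Fin M → ℕ} (h : StrictAnti α) (k : Fin M) : rho M k ≤ α k := by
  have : ∀ d : ℕ, ∀ k : Fin M, rho M k = d → d ≤ α k := by
    intro d
    induction d with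
    | zero => intros; omega
    | succ d ih =>
      intro k hk
      simp only [rho, Fin.val_rev] at hk
      have hlt : (k : ℕ) + 1 < M := by omega
      have h1 := ih ⟨k + 1, hlt⟩ (by simp only [rho, Fin.val_rev]; omega)
      have h2 : α ⟨k + 1, hlt⟩ < α k := h (by rw [Fin.lt_def]; simp)
      omega
  exact this _ k rfl

theorem exists_sh {α : Fin M → ℕ} (h : StrictAnti α) {N : ℕ}
    (hs : ∑ k, α k = N + ∑ k, rho M k) : ∃ Y : YoungDiagram, Y.card = N ∧ sh M Y = α := by
  let f : ℕ → ℕ := fun i => if hi : i < M then α ⟨i, hi⟩ - rho M ⟨i, hi⟩ else 0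
  have hstep : ∀ (i : ℕ), f (i + 1) ≤ f i := by
    intro i
    by_cases hi : i + 1 < M
    · have h2 : α ⟨i + 1, hi⟩ < α ⟨i, by omega⟩ := h (by rw [Fin.lt_def]; simp)
      simp only [f, hi, dif_pos, show i < M by omega, rho, Fin.val_rev]
      omega
    · simp [f, hi]
  obtain ⟨Y, hY⟩ := yd_exists f M (antitone_nat_of_succ_le hstep) (fun i hi => by
    simp [f, show ¬ i < M by omega])
  have hsh : sh M Y = α := by
    funext k
    have := strictAnti_bound h k
    simp only [sh, hY, f, k.isLt, dif_pos, Fin.eta]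
    omega
  refine ⟨Y, ?_, hsh⟩
  rw [← hsh] at hs
  simp only [sh, Finset.sum_add_distrib] at hs
  rw [yd_card_eq Y M (fun i hi => by rw [hY]; simp [f, show ¬ i < M by omega]), Finset.sum_range]
  omega

theorem anti_expand {f : MvPolynomial (Fin M) ℝ} (hf : Anti f) {N : ℕ} (hN : N ≤ M)
    (hdeg : ∀ β, cf β f ≠ 0 → ∑ k, β k = N + ∑ k, rho M k) :
    f = ∑ Y ∈ YD N, cf (sh M Y) f • alt (sh M Y) := by
  classical
  refine anti_ext hf (Anti.sum _ _ _ fun _ => alt_anti _) fun α hα => ?_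
  rw [cf_sum]
  by_cases h0 : ∑ k, α k = N + ∑ k, rho M k
  · obtain ⟨Y, hY, rfl⟩ := exists_sh hα h0
    rw [Finset.sum_eq_single Y]
    · rw [cf_smul, cf_alt hα hα, if_pos rfl, mul_one]
    · intro Z hZ hne
      rw [cf_smul, cf_alt hα (sh_strictAnti Z), if_neg, mul_zero]
      intro hc
      rw [mem_YD] at hZ
      exact hne (sh_inj (by omega) (by omega) hc.symm)
    · intro hn
      exact absurd (mem_YD.mpr hY) hn
  · have h1 : cf α f = 0 := by
      by_contra hc
      exact h0 (hdeg α hc)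
    rw [h1, eq_comm]
    refine Finset.sum_eq_zero fun Z hZ => ?_
    rw [cf_smul, cf_alt hα (sh_strictAnti Z), if_neg, mul_zero]
    rintro rfl
    rw [mem_YD] at hZ
    exact h0 (by rw [sh_sum Z (by omega), hZ])

/-- extraction of coefficients of a combination of alternants -/
theorem cf_sum_alt {N : ℕ} (hN : N ≤ M) (c : YoungDiagram → ℝ) {Z : YoungDiagram}
    (hZ : Z.card = N) : cf (sh M Z) (∑ Y ∈ YD N, c Y • alt (sh M Y)) = c Z := by
  classical
  rw [cf_sum, Finset.sum_eq_single Z]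
  · rw [cf_smul, cf_alt (sh_strictAnti Z) (sh_strictAnti Z), if_pos rfl, mul_one]
  · intro Y hY hne
    rw [cf_smul, cf_alt (sh_strictAnti Z) (sh_strictAnti Y), if_neg, mul_zero]
    intro hc
    rw [mem_YD] at hY
    exact hne (sh_inj (by omega) (by omega) hc.symm)
  · intro hn
    exact absurd (mem_YD.mpr hZ) hn
end part1

section part2
open MvPolynomial

variable {M : ℕ}

/-! ### Complete homogeneous polynomials and the Pieri rule -/

def hh (M r : ℕ) : MvPolynomial (Fin M) ℝ :=
  ∑ β ∈ Finset.piAntidiag (Finset.univ : Finset (Fin M)) r, mon β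

theorem cf_hh (r : ℕ) (β : Fin M → ℕ) : cf β (hh M r) = if ∑ k, β k = r then 1 else 0 := by
  rw [hh, cf_sum]
  simp only [cf_mon]
  rw [Finset.sum_ite_eq]
  simp

theorem hh_symm (r : ℕ) : IsSymmetric (hh M r) := by
  intro π
  refine cf_ext fun β => ?_
  rw [cf_rename, cf_hh, cf_hh]
  simp only [Function.comp]
  rw [Equiv.sum_comp π β]

/-- horizontal strip condition on row-length functions -/
def HS (p q : ℕ → ℕ) : Prop := (∀ i, p i ≤ q i) ∧ ∀ i, q (i + 1) ≤ p i

def thr (α β : Fin M → ℕ) : Matrix (Fin M) (Fin M) ℝ :=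
  fun i k => if α i ≤ β k then 1 else 0

theorem thr_det_zero {α β : Fin M → ℕ} (t : Fin M → Finset (Fin M))
    (ht : ∀ k, t k = Finset.univ.filter fun i => α i ≤ β k)
    {k l : Fin M} (hkl : k ≠ l) (hc : (t k).card = (t l).card) : (thr α β).det = 0 := by
  have main : t k = t l := by
    rcases le_total (β k) (β l) with h | h
    · refine Finset.eq_of_subset_of_card_le ?_ hc.ge
      rw [ht, ht]
      intro i
      simp only [Finset.mem_filter, Finset.mem_univ, true_and]
      omega
    · refine (Finset.eq_of_subset_of_card_le ?_ hc.le).symm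
      rw [ht, ht]
      intro i
      simp only [Finset.mem_filter, Finset.mem_univ, true_and]
      omega
  refine Matrix.det_zero_of_column_eq hkl fun i => ?_
  have : i ∈ t k ↔ i ∈ t l := by rw [main]
  rw [ht, ht] at this
  simp only [Finset.mem_filter, Finset.mem_univ, true_and] at this
  simp [thr, this]

open Classical in
theorem thr_det {α β : Fin M → ℕ} (hα : StrictAnti α) (hβ : StrictAnti β) :
    (thr α β).det = if (∀ k, α k ≤ β k) ∧ (∀ i k, i < k → β k < α i) then 1 else 0 := by
  split_ifs with h
  · rw [Matrix.det_of_isLowerTriangular]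
    · simp [thr, h.1]
    · intro i k hik
      have hik' : i < k := hik
      have := h.2 i k hik'
      simp only [thr]
      rw [if_neg (by omega)]
  · set t : Fin M → Finset (Fin M) := fun k => Finset.univ.filter fun i => α i ≤ β k with ht
    by_cases h1 : ∀ k, α k ≤ β k
    · have h2 : ∃ i k, i < k ∧ α i ≤ β k := by
        by_contra hc
        push Not at hc
        exact h ⟨h1, hc⟩
      obtain ⟨i, k, hik, hb⟩ := h2
      have hpig : ∃ x ∈ Finset.Iic k, ∃ y ∈ Finset.Iic k, x ≠ y ∧ (t x).card = (t y).card := by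
        refine Finset.exists_ne_map_eq_of_card_lt_of_maps_to (t := Finset.Icc (M - i) M) ?_ ?_
        · rw [Fin.card_Iic, Nat.card_Icc]
          have : (i : ℕ) < k := hik
          have := k.isLt
          omega
        · intro l hl
          have hl' : l ≤ k := by simpa using hl
          simp only [Finset.coe_Icc, Set.mem_Icc]
          constructor
          · have : Finset.Ici i ⊆ t l := by
              intro j hj
              rw [Finset.mem_Ici] at hj
              simp only [ht, Finset.mem_filter, Finset.mem_univ, true_and]
              have h3 := hα.antitone hj
              have h4 := hβ.antitone hl'
              omega
            have := Finset.card_le_card this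
            rwa [Fin.card_Ici] at this
          · exact (Finset.card_le_univ _).trans (by simp)
      obtain ⟨x, _, y, _, hxy, hc⟩ := hpig
      exact thr_det_zero t (fun _ => rfl) hxy hc
    · push Not at h1
      obtain ⟨k, hk⟩ := h1
      have hbound : ∀ l, k ≤ l → (t l).card ≤ M - 1 - k := by
        intro l hl
        have : t l ⊆ Finset.Ioi k := by
          intro j hj
          simp only [ht, Finset.mem_filter, Finset.mem_univ, true_and] at hj
          rw [Finset.mem_Ioi]
          by_contra hc
          have h3 := hα.antitone (not_lt.mp hc)
          have h4 := hβ.antitone hl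
          omega
        have := Finset.card_le_card this
        rwa [Fin.card_Ioi] at this
      by_cases hz : ∃ l, (t l).card = 0
      · obtain ⟨l, hl⟩ := hz
        rw [Finset.card_eq_zero] at hl
        refine Matrix.det_eq_zero_of_column_eq_zero l fun i => ?_
        have : i ∉ t l := by rw [hl]; simp
        simp only [ht, Finset.mem_filter, Finset.mem_univ, true_and] at this
        simp [thr, this]
      · push Not at hz
        have hpig : ∃ x ∈ Finset.Ici k, ∃ y ∈ Finset.Ici k, x ≠ y ∧ (t x).card = (t y).card := by
          refine Finset.exists_ne_map_eq_of_card_lt_of_maps_to (t := Finset.Icc 1 (M - 1 - k)) ?_ ?_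
          · rw [Fin.card_Ici, Nat.card_Icc]
            have := k.isLt
            omega
          · intro l hl
            have hl' : k ≤ l := by simpa using hl
            simp only [Finset.coe_Icc, Set.mem_Icc]
            have := hz l
            have := hbound l hl'
            omega
        obtain ⟨x, _, y, _, hxy, hc⟩ := hpig
        exact thr_det_zero t (fun _ => rfl) hxy hc

theorem cf_alt_mul_hh {α β : Fin M → ℕ} {r : ℕ} (hs : ∑ k, β k = ∑ k, α k + r) :
    cf β (alt α * hh M r) = (thr α β).det := by
  classical
  rw [alt, Finset.sum_mul, cf_sum, Matrix.det_apply']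
  refine Finset.sum_congr rfl fun π _ => ?_
  rw [smul_mul_assoc, cf_smul, cf_mon_mul]
  change _ = sg π * _
  congr 1
  simp only [thr]
  by_cases h : α ∘ π ≤ β
  · rw [if_pos h, cf_hh, if_pos, Finset.prod_eq_one]
    · intro i _
      exact if_pos (h i)
    · have h1 : ∑ k, (β - α ∘ π) k + ∑ k, α (π k) = ∑ k, β k := by
        rw [← Finset.sum_add_distrib]
        refine Finset.sum_congr rfl fun k _ => ?_
        have := h k
        simp only [Pi.sub_apply, Function.comp] at *
        omega
      rw [Equiv.sum_comp π α] at h1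
      omega
  · rw [if_neg h]
    rw [Pi.le_def] at h
    push Not at h
    obtain ⟨k, hk⟩ := h
    rw [Finset.prod_eq_zero (Finset.mem_univ k)]
    rw [if_neg]
    simp only [Function.comp] at hk
    omega

theorem alt_deg {α β : Fin M → ℕ} (h : cf β (alt α) ≠ 0) : ∑ k, β k = ∑ k, α k := by
  by_contra hne
  apply h
  rw [alt, cf_sum]
  refine Finset.sum_eq_zero fun π _ => ?_
  rw [cf_smul, cf_mon, if_neg, mul_zero]
  rintro rfl
  exact hne (by simp only [Function.comp]; rw [Equiv.sum_comp π α])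

/-- homogeneity through coefficients -/
def Hom (f : MvPolynomial (Fin M) ℝ) (d : ℕ) : Prop := ∀ β, cf β f ≠ 0 → ∑ k, β k = d

theorem Hom.mul {f g : MvPolynomial (Fin M) ℝ} {d e : ℕ} (hf : Hom f d) (hg : Hom g e) :
    Hom (f * g) (d + e) := by
  classical
  intro β hβ
  rw [cf, coeff_mul] at hβ
  obtain ⟨⟨u, v⟩, h1, h2⟩ := Finset.exists_ne_zero_of_sum_ne_zero hβ
  rw [Finset.HasAntidiagonal.mem_antidiagonal] at h1
  have hu := hf (Finsupp.equivFunOnFinite u) (by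
    simpa [cf] using left_ne_zero_of_mul h2)
  have hv := hg (Finsupp.equivFunOnFinite v) (by
    simpa [cf] using right_ne_zero_of_mul h2)
  rw [← hu, ← hv, ← Finset.sum_add_distrib]
  refine Finset.sum_congr rfl fun k _ => ?_
  have := DFunLike.congr_fun h1 k
  simpa using this.symm

theorem alt_hom (α : Fin M → ℕ) : Hom (alt α) (∑ k, α k) := fun _ h => alt_deg h

theorem hh_hom (r : ℕ) : Hom (hh M r) r := fun β h => by
  by_contra hc
  exact h (by rw [cf_hh, if_neg hc])

theorem HS_iff {Y Z : YoungDiagram} (hY : Y.card ≤ M) (hZ : Z.card ≤ M) :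
    HS Y.rowLen Z.rowLen ↔
      (∀ k, sh M Y k ≤ sh M Z k) ∧ (∀ i k, i < k → sh M Z k < sh M Y i) := by
  constructor
  · rintro ⟨h1, h2⟩
    refine ⟨fun k => ?_, fun i k hik => ?_⟩
    · have := h1 k
      simp only [sh]
      omega
    · have h3 := h2 i
      have h4 := Z.rowLen_anti (i + 1) k hik
      have h5 := rho_strictAnti hik
      simp only [sh]
      omega
  · rintro ⟨h1, h2⟩
    refine ⟨fun i => ?_, fun i => ?_⟩
    · by_cases hi : i < M
      · have := h1 ⟨i, hi⟩
        simp only [sh] at this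
        omega
      · rw [rowLen_zero_of_card_le Y M hY i (by omega)]
        omega
    · by_cases hi : i + 1 < M
      · have := h2 ⟨i, by omega⟩ ⟨i + 1, hi⟩ (by rw [Fin.lt_def]; simp)
        simp only [sh, rho, Fin.val_rev] at this
        omega
      · rw [rowLen_zero_of_card_le Z M hZ (i + 1) (by omega)]
        omega

open Classical in
theorem pieri (Y : YoungDiagram) (r : ℕ) (h : Y.card + r ≤ M) :
    alt (sh M Y) * hh M r = ∑ Z ∈ YD (Y.card + r),
      (if HS Y.rowLen Z.rowLen then (1 : ℝ) else 0) • alt (sh M Z) := by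
  have h0 : Anti (alt (sh M Y) * hh M r) := (alt_anti _).mul (hh_symm r)
  have h1 := anti_expand h0 h (by
    intro β hβ
    have := ((alt_hom (sh M Y)).mul (hh_hom r)) β hβ
    rw [sh_sum Y (by omega)] at this
    omega)
  rw [h1]
  refine Finset.sum_congr rfl fun Z hZ => ?_
  rw [mem_YD] at hZ
  congr 1
  rw [cf_alt_mul_hh, thr_det (sh_strictAnti Y) (sh_strictAnti Z)]
  · simp only [HS_iff (show Y.card ≤ M by omega) (show Z.card ≤ M by omega)]
  · rw [sh_sum Y (by omega), sh_sum Z (by omega)]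
    omega
end part2

section part3
open MvPolynomial

variable {M : ℕ}

/-! ### Chains of horizontal strips -/

def Chain (M K : ℕ) (p q γ : ℕ → ℕ) : Set (ℕ → ℕ → ℕ) :=
  {C | C 0 = p ∧ (∀ k, K ≤ k → C k = q) ∧ (∀ k, k < K → HS (C k) (C (k + 1))) ∧
    ∀ k, k < K → ∑ i ∈ Finset.range M, C (k + 1) i = ∑ i ∈ Finset.range M, C k i + γ k}

theorem chain_mono {K : ℕ} {p q γ : ℕ → ℕ} {C : ℕ → ℕ → ℕ} (h : C ∈ Chain M K p q γ) (i : ℕ) :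
    Monotone (fun k => C k i) := by
  refine monotone_nat_of_le_succ fun k => ?_
  by_cases hk : k < K
  · exact (h.2.2.1 k hk).1 i
  · rw [h.2.1 k (by omega), h.2.1 (k + 1) (by omega)]

theorem chain_le {K : ℕ} {p q γ : ℕ → ℕ} {C : ℕ → ℕ → ℕ} (h : C ∈ Chain M K p q γ) (k i : ℕ) :
    C k i ≤ q i := by
  have h1 := chain_mono h i (le_max_left k K)
  simp only at h1
  rwa [h.2.1 (max k K) (le_max_right _ _)] at h1

theorem chain_ge {K : ℕ} {p q γ : ℕ → ℕ} {C : ℕ → ℕ → ℕ} (h : C ∈ Chain M K p q γ) (k i : ℕ) :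
    p i ≤ C k i := by
  have h1 := chain_mono h i (Nat.zero_le k)
  simp only at h1
  rwa [h.1] at h1

theorem chain_sum {K : ℕ} {p q γ : ℕ → ℕ} {C : ℕ → ℕ → ℕ} (h : C ∈ Chain M K p q γ) :
    ∀ k, k ≤ K → ∑ i ∈ Finset.range M, C k i =
      ∑ i ∈ Finset.range M, p i + ∑ j ∈ Finset.range k, γ j := by
  intro k
  induction k with
  | zero => intro _; rw [h.1]; simp
  | succ k ih =>
    intro hk
    rw [h.2.2.2 k (by omega), ih (by omega), Finset.sum_range_succ]
    omega

theorem chain_anti {K : ℕ} {q γ : ℕ → ℕ} {Y : YoungDiagram} {C : ℕ → ℕ → ℕ}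
    (h : C ∈ Chain M K Y.rowLen q γ) : ∀ k, k ≤ K → Antitone (C k) := by
  intro k hk
  rcases k with _ | k
  · rw [h.1]
    exact fun i j hij => Y.rowLen_anti i j hij
  · have h1 := h.2.2.1 k (by omega)
    exact antitone_nat_of_succ_le fun i => (h1.2 i).trans (h1.1 i)

/-- prolonging a chain by one step -/
def extC (K : ℕ) (q : ℕ → ℕ) (C : ℕ → ℕ → ℕ) : ℕ → ℕ → ℕ := fun k => if k ≤ K then C k else q

theorem extC_mem {K : ℕ} {p q w γ : ℕ → ℕ} {C : ℕ → ℕ → ℕ} (h : C ∈ Chain M K p w γ)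
    (hw : HS w q)
    (hs : ∑ i ∈ Finset.range M, q i = ∑ i ∈ Finset.range M, w i + γ K) :
    extC K q C ∈ Chain M (K + 1) p q γ := by
  refine ⟨?_, ?_, ?_, ?_⟩
  · simp [extC, h.1]
  · intro k hk
    simp [extC, show ¬ k ≤ K by omega]
  · intro k hk
    rcases Nat.lt_or_ge k K with hk' | hk'
    · simp only [extC, show k ≤ K by omega, show k + 1 ≤ K by omega, if_true]
      exact h.2.2.1 k hk'
    · obtain rfl : k = K := by omega
      simp only [extC, le_refl, if_true, show ¬ k + 1 ≤ k by omega, if_false]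
      rwa [h.2.1 k le_rfl]
  · intro k hk
    rcases Nat.lt_or_ge k K with hk' | hk'
    · simp only [extC, show k ≤ K by omega, show k + 1 ≤ K by omega, if_true]
      exact h.2.2.2 k hk'
    · obtain rfl : k = K := by omega
      simp only [extC, le_refl, if_true, show ¬ k + 1 ≤ k by omega, if_false]
      rwa [h.2.1 k le_rfl]

open Classical in
abbrev StepI (nK : ℕ) (Z : YoungDiagram) : Type :=
  {W : YoungDiagram // W ∈ (YD nK).filter fun W => HS W.rowLen Z.rowLen}

open Classical in
theorem chain_step (K : ℕ) (Y Z : YoungDiagram) (γ : ℕ → ℕ) (nK : ℕ)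
    (hnK : nK = Y.card + ∑ k ∈ Finset.range K, γ k) (hZ : Z.card = nK + γ K) (hM : nK + γ K ≤ M)
    (hfin : ∀ W ∈ YD nK, Finite (Chain M K Y.rowLen W.rowLen γ)) :
    Finite (Chain M (K + 1) Y.rowLen Z.rowLen γ) ∧
    Nat.card (Chain M (K + 1) Y.rowLen Z.rowLen γ) =
      ∑ W ∈ YD nK, if HS W.rowLen Z.rowLen then Nat.card (Chain M K Y.rowLen W.rowLen γ) else 0 := by
  have hYM : Y.card ≤ M := by
    have : 0 ≤ ∑ k ∈ Finset.range K, γ k := Nat.zero_le _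
    omega
  have hI : ∀ W : StepI nK Z, W.1.card = nK ∧ HS W.1.rowLen Z.rowLen := fun W => by
    have := W.2
    rw [Finset.mem_filter, mem_YD] at this
    exact this
  have : ∀ W : StepI nK Z, Finite (Chain M K Y.rowLen W.1.rowLen γ) := fun W =>
    hfin _ (mem_YD.mpr (hI W).1)
  let F : (Σ W : StepI nK Z, Chain M K Y.rowLen W.1.rowLen γ) → Chain M (K + 1) Y.rowLen Z.rowLen γ :=
    fun x => ⟨extC K Z.rowLen x.2.1, extC_mem x.2.2 (hI x.1).2 (by
      rw [← card_eq_sum Z M (by omega), ← card_eq_sum x.1.1 M (by rw [(hI x.1).1]; omega),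
        (hI x.1).1, hZ])⟩
  have hF : Function.Bijective F := by
    constructor
    · rintro ⟨W, C, hC⟩ ⟨W', C', hC'⟩ h
      have h1 : extC K Z.rowLen C = extC K Z.rowLen C' := congrArg Subtype.val h
      have h2 : ∀ k, k ≤ K → C k = C' k := fun k hk => by
        have := congrFun h1 k
        simpa [extC, hk] using this
      have h3 : W = W' := by
        apply Subtype.ext
        refine yd_ext fun i => ?_
        rw [← hC.2.1 K le_rfl, ← hC'.2.1 K le_rfl, h2 K le_rfl]
      subst h3
      have h4 : C = C' := by
        funext k
        by_cases hk : k ≤ K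
        · exact h2 k hk
        · rw [hC.2.1 k (by omega), hC'.2.1 k (by omega)]
      subst h4
      rfl
    · rintro ⟨C, hC⟩
      obtain ⟨W, hW⟩ := yd_exists (C K) M (chain_anti hC K (by omega)) (fun i hi => by
        have := chain_le hC K i
        rw [rowLen_zero_of_card_le Z M (by omega) i hi] at this
        omega)
      have hW' : W.rowLen = C K := funext hW
      have hWc : W.card = nK := by
        rw [yd_card_eq W M, hW', chain_sum hC K (by omega), ← card_eq_sum Y M hYM, hnK]
        intro i hi
        rw [hW]
        have := chain_le hC K i
        rw [rowLen_zero_of_card_le Z M (by omega) i hi] at this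
        omega
      have hCK : C (K + 1) = Z.rowLen := hC.2.1 (K + 1) le_rfl
      have hWZ : HS W.rowLen Z.rowLen := by
        rw [hW', ← hCK]
        exact hC.2.2.1 K (by omega)
      refine ⟨⟨⟨W, ?_⟩, ⟨fun k => C (min k K), ?_, ?_, ?_, ?_⟩⟩, ?_⟩
      · rw [Finset.mem_filter, mem_YD]
        exact ⟨hWc, hWZ⟩
      · simp [hC.1]
      · intro k hk
        simp [hk, hW']
      · intro k hk
        simp only [min_eq_left hk.le, min_eq_left (Nat.succ_le_of_lt hk)]
        exact hC.2.2.1 k (by omega)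
      · intro k hk
        simp only [min_eq_left hk.le, min_eq_left (Nat.succ_le_of_lt hk)]
        exact hC.2.2.2 k (by omega)
      · apply Subtype.ext
        funext k
        simp only [F, extC]
        split_ifs with hk
        · rw [min_eq_left hk]
        · rw [hC.2.1 k (by omega)]
  refine ⟨Finite.of_surjective F hF.2, ?_⟩
  rw [← Nat.card_eq_of_bijective F hF, Nat.card_sigma, ← Finset.sum_filter]
  exact Finset.sum_coe_sort ((YD nK).filter fun W => HS W.rowLen Z.rowLen)
    (fun W => Nat.card (Chain M K Y.rowLen W.rowLen γ))

theorem chain_zero (Y Z : YoungDiagram) (γ : ℕ → ℕ) :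
    Finite (Chain M 0 Y.rowLen Z.rowLen γ) ∧
    (Y = Z → Nat.card (Chain M 0 Y.rowLen Z.rowLen γ) = 1) ∧
    (Y ≠ Z → Nat.card (Chain M 0 Y.rowLen Z.rowLen γ) = 0) := by
  have hss : Subsingleton (Chain M 0 Y.rowLen Z.rowLen γ) := by
    constructor
    rintro ⟨C, hC⟩ ⟨C', hC'⟩
    apply Subtype.ext
    funext k
    show C k = C' k
    rw [hC.2.1 k (Nat.zero_le _), hC'.2.1 k (Nat.zero_le _)]
  refine ⟨inferInstance, ?_, ?_⟩
  · rintro rfl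
    rw [Nat.card_eq_one_iff_unique]
    refine ⟨hss, ⟨⟨fun _ => Y.rowLen, rfl, fun _ _ => rfl, ?_, ?_⟩⟩⟩
    · intro k hk; omega
    · intro k hk; omega
  · intro hne
    have : IsEmpty (Chain M 0 Y.rowLen Z.rowLen γ) := by
      constructor
      rintro ⟨C, hC⟩
      refine hne (yd_ext fun i => ?_)
      rw [← hC.1, ← hC.2.1 0 le_rfl]
    simp

theorem chain_finite (K : ℕ) (Y : YoungDiagram) (γ : ℕ → ℕ) :
    Y.card + ∑ k ∈ Finset.range K, γ k ≤ M →
    ∀ Z ∈ YD (Y.card + ∑ k ∈ Finset.range K, γ k), Finite (Chain M K Y.rowLen Z.rowLen γ) := by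
  induction K with
  | zero => intro _ Z _; exact (chain_zero Y Z γ).1
  | succ K ih =>
    intro h Z hZ
    rw [Finset.sum_range_succ] at h hZ
    rw [mem_YD] at hZ
    exact (chain_step K Y Z γ _ rfl (by omega) (by omega) (ih (by omega))).1

/-- iterated Pieri rule -/
theorem multi_pieri (K : ℕ) (Y : YoungDiagram) (γ : ℕ → ℕ) :
    Y.card + ∑ k ∈ Finset.range K, γ k ≤ M →
    alt (sh M Y) * ∏ k ∈ Finset.range K, hh M (γ k) =
      ∑ Z ∈ YD (Y.card + ∑ k ∈ Finset.range K, γ k),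
        (Nat.card (Chain M K Y.rowLen Z.rowLen γ) : ℝ) • alt (sh M Z) := by
  classical
  induction K with
  | zero =>
    intro h
    simp only [Finset.range_zero, Finset.prod_empty, mul_one, Finset.sum_empty, add_zero]
    rw [Finset.sum_eq_single Y]
    · rw [(chain_zero Y Y γ).2.1 rfl]; simp
    · intro Z _ hne
      rw [(chain_zero Y Z γ).2.2 hne.symm]; simp
    · intro hn; exact absurd (mem_YD.mpr rfl) hn
  | succ K ih =>
    intro h
    rw [Finset.sum_range_succ] at h ⊢
    rw [Finset.prod_range_succ, ← mul_assoc, ih (by omega), Finset.sum_mul]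
    set nK := Y.card + ∑ k ∈ Finset.range K, γ k with hnK
    have e : Y.card + (∑ k ∈ Finset.range K, γ k + γ K) = nK + γ K := by omega
    rw [e] at h ⊢
    have h1 : ∀ W ∈ YD nK, (Nat.card (Chain M K Y.rowLen W.rowLen γ) : ℝ) • alt (sh M W) * hh M (γ K)
        = ∑ Z ∈ YD (nK + γ K), ((if HS W.rowLen Z.rowLen then
          (Nat.card (Chain M K Y.rowLen W.rowLen γ) : ℝ) else 0) • alt (sh M Z)) := by
      intro W hW
      rw [mem_YD] at hW
      rw [smul_mul_assoc, pieri W (γ K) (by omega), hW, Finset.smul_sum]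
      refine Finset.sum_congr rfl fun Z _ => ?_
      rw [smul_smul]
      split_ifs <;> simp
    rw [Finset.sum_congr rfl h1, Finset.sum_comm]
    refine Finset.sum_congr rfl fun Z hZ => ?_
    rw [mem_YD] at hZ
    rw [← Finset.sum_smul, (chain_step K Y Z γ nK hnK hZ h (chain_finite K Y γ (by omega))).2]
    push_cast
    rfl
end part3

section part4
open MvPolynomial

variable {M : ℕ}

/-! ### The toggle -/

abbrev SS (f : ℕ → ℕ) (r : ℕ) : ℕ := ∑ i ∈ Finset.range r, f i

theorem SS_succ (f : ℕ → ℕ) (r : ℕ) : SS f (r + 1) = SS f r + f r := Finset.sum_range_succ _ _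

theorem SS_congr {f g : ℕ → ℕ} {r : ℕ} (h : ∀ i, i < r → f i = g i) : SS f r = SS g r :=
  Finset.sum_congr rfl fun i hi => h i (Finset.mem_range.mp hi)

def Viol (r : ℕ) (p q s : ℕ → ℕ) : Prop := SS q r + SS q (r + 1) < SS p r + SS s (r + 1)

def tog (r : ℕ) (p q s : ℕ → ℕ) : ℕ → ℕ := fun i =>
  if i < r then q i
  else if i = r then max (p r) (s (r + 1)) + (SS p r + SS s (r + 1) - 2 * SS q r - 1) - q r
  else max (p i) (s (i + 1)) + min (s i) (p (i - 1)) - q i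

theorem tog_lt {r i : ℕ} (p q s : ℕ → ℕ) (h : i < r) : tog r p q s i = q i := by
  simp [tog, h]

theorem tog_eq (r : ℕ) (p q s : ℕ → ℕ) : tog r p q s r =
    max (p r) (s (r + 1)) + (SS p r + SS s (r + 1) - 2 * SS q r - 1) - q r := by
  simp [tog]

theorem tog_gt {r i : ℕ} (p q s : ℕ → ℕ) (h : r < i) : tog r p q s i =
    max (p i) (s (i + 1)) + min (s i) (p (i - 1)) - q i := by
  simp [tog, h.not_gt, h.ne']

theorem tog_SS {r r' : ℕ} (p q s : ℕ → ℕ) (h : r' ≤ r) : SS (tog r p q s) r' = SS q r' :=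
  SS_congr fun _ hi => tog_lt p q s (by omega)

theorem tog_core {r : ℕ} {p q s : ℕ → ℕ} (h1 : HS p q) (h2 : HS q s) (hv : Viol r p q s)
    (hn : ∀ r', r' < r → ¬ Viol r' p q s) :
    2 * SS q r + q r + 1 ≤ SS p r + SS s (r + 1) ∧ SS p r + SS s r ≤ 2 * SS q r ∧
      (0 < r → SS p r + SS s (r + 1) ≤ 2 * SS q r + p (r - 1)) := by
  have e1 := SS_succ q r
  have e2 := SS_succ s r
  unfold Viol at hv
  refine ⟨by omega, ?_, ?_⟩
  · rcases r with _ | r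
    · simp [SS]
    · have := hn r (by omega)
      unfold Viol at this
      have e3 := SS_succ q r
      have e4 := SS_succ p r
      have := h1.1 r
      omega
  · rcases r with _ | r
    · simp
    · intro _
      have := hn r (by omega)
      unfold Viol at this
      have e3 := SS_succ q r
      have e4 := SS_succ p r
      have := h1.1 r
      have := h2.2 r
      simp only [Nat.add_sub_cancel]
      omega

theorem tog_spec {r : ℕ} {p q s : ℕ → ℕ} (h1 : HS p q) (h2 : HS q s) (hv : Viol r p q s)
    (hn : ∀ r', r' < r → ¬ Viol r' p q s) :
    HS p (tog r p q s) ∧ HS (tog r p q s) s ∧ Viol r p (tog r p q s) s ∧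
      tog r p (tog r p q s) s = q ∧ 0 < s r := by
  obtain ⟨c1, c2, c3⟩ := tog_core h1 h2 hv hn
  have e2 := SS_succ s r
  have bnd : ∀ i, max (p i) (s (i + 1)) ≤ q i := fun i => max_le (h1.1 i) (h2.2 i)
  have bnd2 : ∀ i, r < i → q i ≤ min (s i) (p (i - 1)) := fun i hi => by
    refine le_min (h2.1 i) ?_
    have := h1.2 (i - 1)
    rwa [Nat.sub_add_cancel (by omega)] at this
  have b := bnd r
  have a1 : ∀ i, max (p i) (s (i + 1)) ≤ tog r p q s i := by
    intro i
    rcases lt_trichotomy i r with h | h | h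
    · rw [tog_lt p q s h]; exact bnd i
    · subst h; rw [tog_eq]; omega
    · rw [tog_gt p q s h]; have := bnd2 i h; omega
  have a2 : ∀ i, tog r p q s i ≤ s i := by
    intro i
    rcases lt_trichotomy i r with h | h | h
    · rw [tog_lt p q s h]; exact h2.1 i
    · subst h; rw [tog_eq]; omega
    · rw [tog_gt p q s h]; have := bnd i; have := min_le_left (s i) (p (i - 1)); omega
  have a3 : ∀ i, tog r p q s (i + 1) ≤ p i := by
    intro i
    rcases lt_trichotomy (i + 1) r with h | h | h
    · rw [tog_lt p q s h]; exact h1.2 i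
    · subst h
      rw [tog_eq]
      have := c3 (by omega)
      simp only [Nat.add_sub_cancel] at this
      omega
    · rw [tog_gt p q s h]; have := bnd (i + 1)
      have := min_le_right (s (i + 1)) (p (i + 1 - 1))
      simp only [Nat.add_sub_cancel] at this ⊢
      omega
  refine ⟨⟨fun i => (le_max_left _ _).trans (a1 i), a3⟩,
    ⟨a2, fun i => (le_max_right _ _).trans (a1 i)⟩, ?_, ?_, ?_⟩
  · unfold Viol
    rw [SS_succ (tog r p q s), tog_SS p q s le_rfl, tog_eq]
    omega
  · funext i
    rcases lt_trichotomy i r with h | h | h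
    · rw [tog_lt _ _ _ h, tog_lt _ _ _ h]
    · subst h; rw [tog_eq, tog_SS p q s le_rfl, tog_eq]; omega
    · rw [tog_gt _ _ _ h, tog_gt _ _ _ h]; have := bnd i; have := bnd2 i h; omega
  · omega

theorem tog_sum {r : ℕ} {p q s : ℕ → ℕ} (h1 : HS p q) (h2 : HS q s) (hv : Viol r p q s)
    (hn : ∀ r', r' < r → ¬ Viol r' p q s) (m : ℕ) (hm : r ≤ m) :
    SS q (m + 1) + SS (tog r p q s) (m + 1) + 1 =
      SS p m + SS s (m + 1) + max (p m) (s (m + 1)) := by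
  obtain ⟨c1, c2, c3⟩ := tog_core h1 h2 hv hn
  have bnd : ∀ i, max (p i) (s (i + 1)) ≤ q i := fun i => max_le (h1.1 i) (h2.2 i)
  induction m, hm using Nat.le_induction with
  | base =>
    rw [SS_succ q, SS_succ (tog r p q s), tog_SS p q s le_rfl, tog_eq]
    have := bnd r
    omega
  | succ m hm ih =>
    rw [SS_succ q, SS_succ (tog r p q s), tog_gt p q s (show r < m + 1 by omega), SS_succ s (m + 1),
      SS_succ p m]
    have := bnd (m + 1)
    have : q (m + 1) ≤ min (s (m + 1)) (p m) := le_min (h2.1 _) (h1.2 _)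
    simp only [Nat.add_sub_cancel]
    omega

theorem tog_sum_M {r : ℕ} {p q s : ℕ → ℕ} (h1 : HS p q) (h2 : HS q s) (hv : Viol r p q s)
    (hn : ∀ r', r' < r → ¬ Viol r' p q s) (hs : ∀ i, M ≤ i → s i = 0) :
    SS q M + SS (tog r p q s) M + 1 = SS p M + SS s M := by
  have hr : r < M := by
    by_contra hc
    have := (tog_spec h1 h2 hv hn).2.2.2.2
    rw [hs r (by omega)] at this
    omega
  obtain ⟨m, rfl⟩ : ∃ m, M = m + 1 := ⟨M - 1, by omega⟩
  rw [tog_sum h1 h2 hv hn m (by omega), SS_succ p, hs (m + 1) le_rfl]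
  simp
  omega

/-! ### The sign reversing involution -/

/-- chains with `M` steps, without content condition -/
def Pre (M : ℕ) (p q : ℕ → ℕ) : Set (ℕ → ℕ → ℕ) :=
  {C | C 0 = p ∧ (∀ k, M ≤ k → C k = q) ∧ (∀ k, k < M → HS (C k) (C (k + 1)))}

def Cond (α : Fin M → ℕ) (π : Equiv.Perm (Fin M)) (C : ℕ → ℕ → ℕ) : Prop :=
  ∀ k : Fin M, SS (C (k + 1)) M + rho M k = SS (C k) M + α (π k)

def Lat (M : ℕ) (C : ℕ → ℕ → ℕ) : Prop :=
  ∀ k r, k + 1 < M → ¬ Viol r (C k) (C (k + 1)) (C (k + 2))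

theorem pre_le {p q : ℕ → ℕ} {C : ℕ → ℕ → ℕ} (h : C ∈ Pre M p q) (k i : ℕ) :
    C k i ≤ q i := by
  have h0 : Monotone (fun k => C k i) := by
    refine monotone_nat_of_le_succ fun k => ?_
    by_cases hk : k < M
    · exact (h.2.2 k hk).1 i
    · rw [h.2.1 k (by omega), h.2.1 (k + 1) (by omega)]
  have h1 := h0 (le_max_left k M)
  simp only at h1
  rwa [h.2.1 (max k M) (le_max_right _ _)] at h1

theorem pre_finite (p q : ℕ → ℕ) (hq : ∀ i, M ≤ i → q i = 0) : (Pre M p q).Finite := by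
  let F : Pre M p q → (Fin M → (i : Fin M) → Fin (q i + 1)) := fun C k i =>
    ⟨C.1 k i, Nat.lt_succ_of_le (pre_le C.2 k i)⟩
  have hF : Function.Injective F := by
    rintro ⟨C, hC⟩ ⟨C', hC'⟩ h
    apply Subtype.ext
    funext k i
    show C k i = C' k i
    by_cases hk : k < M
    · by_cases hi : i < M
      · have := congrFun (congrFun h ⟨k, hk⟩) ⟨i, hi⟩
        simpa [F] using this
      · have h1 := pre_le hC k i
        have h2 := pre_le hC' k i
        rw [hq i (by omega)] at h1 h2
        omega
    · rw [hC.2.1 k (by omega), hC'.2.1 k (by omega)]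
  exact Set.finite_coe_iff.mp (Finite.of_injective F hF)

theorem pre_HS {p q : ℕ → ℕ} {C : ℕ → ℕ → ℕ} (h : C ∈ Pre M p q) (k : ℕ) (hk : k < M) :
    HS (C k) (C (k + 1)) := h.2.2 k hk

def IsSel (M r k : ℕ) (C : ℕ → ℕ → ℕ) : Prop :=
  k + 1 < M ∧ Viol r (C k) (C (k + 1)) (C (k + 2)) ∧
    (∀ r', r' < r → ∀ k', k' + 1 < M → ¬ Viol r' (C k') (C (k' + 1)) (C (k' + 2))) ∧
    (∀ k', k < k' → k' + 1 < M → ¬ Viol r (C k') (C (k' + 1)) (C (k' + 2)))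

theorem exists_sel {C : ℕ → ℕ → ℕ} (h : ¬ Lat M C) : ∃ x : ℕ × ℕ, IsSel M x.1 x.2 C := by
  classical
  unfold Lat at h
  push Not at h
  obtain ⟨k0, r0, hk0, hv0⟩ := h
  have ex : ∃ r, ∃ k, k + 1 < M ∧ Viol r (C k) (C (k + 1)) (C (k + 2)) := ⟨r0, k0, hk0, hv0⟩
  let P : ℕ → Prop := fun k => k + 1 < M ∧ Viol (Nat.find ex) (C k) (C (k + 1)) (C (k + 2))
  obtain ⟨k1, hk1⟩ := Nat.find_spec ex
  have hP : P (Nat.findGreatest P M) := Nat.findGreatest_spec (P := P) (by omega : k1 ≤ M) hk1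
  refine ⟨(Nat.find ex, Nat.findGreatest P M), hP.1, hP.2, ?_, ?_⟩
  · intro r' hr' k' hk' hv
    exact Nat.find_min ex hr' ⟨k', hk', hv⟩
  · intro k' hk' hk'' hv
    exact Nat.findGreatest_is_greatest hk' (by omega) ⟨hk'', hv⟩

theorem sel_unique {C : ℕ → ℕ → ℕ} {r k r' k' : ℕ} (h : IsSel M r k C) (h' : IsSel M r' k' C) :
    r = r' ∧ k = k' := by
  have hr : r = r' := by
    rcases lt_trichotomy r r' with hl | hl | hl
    · exact absurd h.2.1 (h'.2.2.1 r hl k h.1)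
    · exact hl
    · exact absurd h'.2.1 (h.2.2.1 r' hl k' h'.1)
  subst hr
  refine ⟨rfl, ?_⟩
  rcases lt_trichotomy k k' with hl | hl | hl
  · exact absurd h'.2.1 (h.2.2.2 k' hl h'.1)
  · exact hl
  · exact absurd h.2.1 (h'.2.2.2 k hl h.1)

def togC (r k : ℕ) (C : ℕ → ℕ → ℕ) : ℕ → ℕ → ℕ :=
  Function.update C (k + 1) (tog r (C k) (C (k + 1)) (C (k + 2)))

theorem togC_same (r k : ℕ) (C : ℕ → ℕ → ℕ) :
    togC r k C (k + 1) = tog r (C k) (C (k + 1)) (C (k + 2)) := by simp [togC]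

theorem togC_ne {r k l : ℕ} (C : ℕ → ℕ → ℕ) (h : l ≠ k + 1) :
    togC r k C l = C l := by simp [togC, h]

theorem togC_SS {r k l r' : ℕ} (C : ℕ → ℕ → ℕ) (h : r' ≤ r) :
    SS (togC r k C l) r' = SS (C l) r' := by
  by_cases hl : l = k + 1
  · subst hl; rw [togC_same, tog_SS _ _ _ h]
  · rw [togC_ne C hl]

theorem togC_spec {p q : ℕ → ℕ} (hq : ∀ i, M ≤ i → q i = 0) {r k : ℕ} {C : ℕ → ℕ → ℕ}
    (hC : C ∈ Pre M p q) (h : IsSel M r k C) :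
    togC r k C ∈ Pre M p q ∧ IsSel M r k (togC r k C) ∧ togC r k (togC r k C) = C ∧
      SS (C (k + 1)) M + SS (togC r k C (k + 1)) M + 1 = SS (C k) M + SS (C (k + 2)) M := by
  have hk := h.1
  have g1 := pre_HS hC k (by omega)
  have g2 : HS (C (k + 1)) (C (k + 2)) := pre_HS hC (k + 1) (by omega)
  have g3 : ∀ r', r' < r → ¬ Viol r' (C k) (C (k + 1)) (C (k + 2)) := fun r' hr' =>
    h.2.2.1 r' hr' k hk
  obtain ⟨s1, s2, s3, s4, s5⟩ := tog_spec g1 g2 h.2.1 g3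
  refine ⟨⟨?_, ?_, ?_⟩, ⟨hk, ?_, ?_, ?_⟩, ?_, ?_⟩
  · rw [togC_ne C (by omega)]; exact hC.1
  · intro l hl
    rw [togC_ne C (by omega)]; exact hC.2.1 l hl
  · intro l hl
    by_cases e1 : l = k
    · subst e1
      rw [togC_ne C (show l ≠ l + 1 by omega), togC_same]; exact s1
    · by_cases e2 : l = k + 1
      · subst e2
        rw [togC_ne C (show k + 1 + 1 ≠ k + 1 by omega), togC_same]; exact s2
      · rw [togC_ne C e2, togC_ne C (show l + 1 ≠ k + 1 by omega)]; exact hC.2.2 l hl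
  · rw [togC_ne C (show k ≠ k + 1 by omega), togC_same, togC_ne C (show k + 2 ≠ k + 1 by omega)]
    exact s3
  · intro r' hr' k' hk' hv
    apply h.2.2.1 r' hr' k' hk'
    unfold Viol at hv ⊢
    rwa [togC_SS C (by omega), togC_SS C (by omega), togC_SS C (by omega),
      togC_SS C (by omega)] at hv
  · intro k' hk' hk'' hv
    apply h.2.2.2 k' hk' hk''
    unfold Viol at hv ⊢
    rwa [togC_SS (l := k') C le_rfl, togC_ne C (show k' + 1 ≠ k + 1 by omega),
      togC_ne C (show k' + 2 ≠ k + 1 by omega)] at hv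
  · funext l
    by_cases e : l = k + 1
    · subst e
      rw [togC_same, togC_ne C (show k ≠ k + 1 by omega), togC_ne C (show k + 2 ≠ k + 1 by omega),
        togC_same, s4]
    · rw [togC_ne _ e, togC_ne _ e]
  · rw [togC_same]
    refine tog_sum_M g1 g2 h.2.1 g3 fun i hi => ?_
    have := pre_le hC (k + 2) i
    rw [hq i hi] at this
    omega

theorem togC_cond {p q : ℕ → ℕ} (hq : ∀ i, M ≤ i → q i = 0) {r k : ℕ} {C : ℕ → ℕ → ℕ}
    (hC : C ∈ Pre M p q) (h : IsSel M r k C) {α : Fin M → ℕ} {π : Equiv.Perm (Fin M)}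
    (hc : Cond α π C) :
    Cond α (π * Equiv.swap ⟨k, by have := h.1; omega⟩ ⟨k + 1, h.1⟩) (togC r k C) := by
  have hk := h.1
  obtain ⟨-, -, -, hs⟩ := togC_spec hq hC h
  have c1 := hc ⟨k, by omega⟩
  have c2 := hc ⟨k + 1, hk⟩
  simp only [rho, Fin.val_rev] at c1 c2
  rintro ⟨l, hl⟩
  by_cases e1 : l = k
  · subst e1
    simp only [Equiv.Perm.mul_apply, Equiv.swap_apply_left, rho, Fin.val_rev]
    rw [togC_ne C (Nat.succ_ne_self _).symm]
    rw [show l + 1 + 1 = l + 2 from rfl] at c2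
    omega
  · by_cases e2 : l = k + 1
    · subst e2
      simp only [Equiv.Perm.mul_apply, Equiv.swap_apply_right, rho, Fin.val_rev]
      rw [togC_ne (l := k + 1 + 1) C (by omega)]
      simp only [show k + 1 + 1 = k + 2 from rfl] at c2 ⊢
      omega
    · rw [togC_ne C e2, togC_ne C (show l + 1 ≠ k + 1 by omega), Equiv.Perm.mul_apply, Equiv.swap_apply_of_ne_of_ne]
      · exact hc ⟨l, hl⟩
      · intro e; exact e1 (congrArg Fin.val e)
      · intro e; exact e2 (congrArg Fin.val e)

theorem lat_perm {p q : ℕ → ℕ} (hq : ∀ i, M ≤ i → q i = 0) {C : ℕ → ℕ → ℕ}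
    (hC : C ∈ Pre M p q) (h : Lat M C) {α : Fin M → ℕ} (hα : StrictAnti α)
    {π : Equiv.Perm (Fin M)} (hc : Cond α π C) : π = 1 := by
  refine strictAnti_perm hα ?_
  rcases M with _ | m
  · intro i; exact i.elim0
  rw [Fin.strictAnti_iff_succ_lt]
  intro i
  have c1 := hc i.castSucc
  have c2 := hc i.succ
  have hv := h i (m + 1) (by omega)
  unfold Viol at hv
  have z : ∀ k, C k (m + 1) = 0 := fun k => by
    have := pre_le hC k (m + 1)
    rw [hq _ le_rfl] at this
    omega
  rw [SS_succ _ (m + 1), SS_succ _ (m + 1), z, z] at hv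
  simp only [rho, Fin.val_rev, Fin.val_castSucc, Fin.val_succ, Function.comp,
    show (i : ℕ) + 1 + 1 = i + 2 from rfl] at c1 c2 ⊢
  have := i.isLt
  omega

open Classical in
theorem signed_count {p q : ℕ → ℕ} (hq : ∀ i, M ≤ i → q i = 0) {α : Fin M → ℕ}
    (hα : StrictAnti α) :
    ∑ π : Equiv.Perm (Fin M), sg π * (Nat.card {C // C ∈ Pre M p q ∧ Cond α π C} : ℝ) =
      (Nat.card {C // C ∈ Pre M p q ∧ Lat M C ∧ Cond α 1 C} : ℝ) := by
  let F : Finset (ℕ → ℕ → ℕ) := (pre_finite p q hq).toFinset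
  have hF : ∀ C, C ∈ F ↔ C ∈ Pre M p q := fun C => by simp [F]
  have card1 : ∀ Q : (ℕ → ℕ → ℕ) → Prop, (Nat.card {C // C ∈ Pre M p q ∧ Q C} : ℝ) =
      ∑ C ∈ F, if Q C then (1 : ℝ) else 0 := by
    intro Q
    have e : Nat.card {C // C ∈ Pre M p q ∧ Q C} = (F.filter Q).card :=
      Nat.subtype_card _ fun C => by rw [Finset.mem_filter, hF]
    rw [e]
    simp
  rw [card1]
  simp only [card1, Finset.mul_sum]
  rw [← Finset.sum_product']
  rw [← Finset.sum_filter_add_sum_filter_not _ (fun x => Lat M x.2)]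
  have hbad : ∑ x ∈ ((Finset.univ : Finset (Equiv.Perm (Fin M))) ×ˢ F).filter
      (fun x => ¬ Lat M x.2), sg x.1 * (if Cond α x.1 x.2 then (1 : ℝ) else 0) = 0 := by
    simp only [mul_ite, mul_one, mul_zero]
    rw [← Finset.sum_filter]
    have sel : ∀ x ∈ ((((Finset.univ : Finset (Equiv.Perm (Fin M))) ×ˢ F).filter
      (fun x => ¬ Lat M x.2)).filter (fun x => Cond α x.1 x.2)),
        ∃ y : ℕ × ℕ, IsSel M y.1 y.2 x.2 := fun x hx => by
      simp only [Finset.mem_filter] at hx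
      exact exists_sel hx.1.2
    have sel' : ∀ x hx, IsSel M (sel x hx).choose.1 (sel x hx).choose.2 x.2 :=
      fun x hx => (sel x hx).choose_spec
    refine Finset.sum_involution (fun x hx =>
      (x.1 * Equiv.swap ⟨(sel x hx).choose.2, by have := (sel' x hx).1; omega⟩
        ⟨(sel x hx).choose.2 + 1, (sel' x hx).1⟩,
        togC (sel x hx).choose.1 (sel x hx).choose.2 x.2)) ?_ ?_ ?_ ?_
    · intro x hx
      simp only
      rw [sg_mul, sg_swap]
      · ring
      · intro e
        have := congrArg Fin.val e
        simp at this
    · intro x hx _ e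
      have h1 := congrArg Prod.fst e
      simp only [mul_eq_left] at h1
      have h2 := congrFun (congrArg DFunLike.coe h1) ⟨(sel x hx).choose.2,
        by have := (sel' x hx).1; omega⟩
      simp at h2
    · intro x hx
      have hx' := hx
      simp only [Finset.mem_filter, Finset.mem_product, Finset.mem_univ, true_and, hF] at hx'
      have hs := togC_spec hq hx'.1.1 (sel' x hx)
      simp only [Finset.mem_filter, Finset.mem_product, Finset.mem_univ, true_and, hF]
      refine ⟨⟨hs.1, fun hL => ?_⟩, togC_cond hq hx'.1.1 (sel' x hx) hx'.2⟩
      exact hL _ _ hs.2.1.1 hs.2.1.2.1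
    · intro x hx
      have hx' := hx
      simp only [Finset.mem_filter, Finset.mem_product, Finset.mem_univ, true_and, hF] at hx'
      have hs := togC_spec hq hx'.1.1 (sel' x hx)
      generalize_proofs m1 m2 m3 m4 m5 m6
      have m4' := m4.choose_spec
      obtain ⟨u1, u2⟩ := sel_unique m4' hs.2.1
      simp only [u1, u2]
      refine Prod.ext ?_ ?_
      · simp only [mul_assoc, Equiv.swap_mul_self, mul_one]
      · exact hs.2.2.1
  rw [hbad, add_zero]
  simp only [mul_ite, mul_one, mul_zero]
  rw [Finset.sum_filter, Finset.sum_product_right]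
  refine Finset.sum_congr rfl fun C hC => ?_
  rw [hF] at hC
  by_cases hL : Lat M C
  · simp only [hL, if_true, true_and]
    rw [Finset.sum_eq_single 1]
    · simp
    · intro π _ hπ
      rw [if_neg]
      intro hc
      exact hπ (lat_perm hq hC hL hα hc)
    · simp
  · simp [hL]
end part4

section part5
open MvPolynomial

variable {M : ℕ}

/-! ### Fillings and chains -/

theorem initial_count (a b : ℕ) (P : ℕ → Prop) [DecidablePred P]
    (hP : ∀ j j', a ≤ j → j ≤ j' → j' < b → P j' → P j) (j : ℕ) (ha : a ≤ j) (hb : j < b) :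
    P j ↔ j < a + ((Finset.Ico a b).filter P).card := by
  constructor
  · intro h
    have : Finset.Ico a (j + 1) ⊆ (Finset.Ico a b).filter P := by
      intro l hl
      rw [Finset.mem_Ico] at hl
      rw [Finset.mem_filter, Finset.mem_Ico]
      exact ⟨⟨hl.1, by omega⟩, hP l j hl.1 (by omega) hb h⟩
    have := Finset.card_le_card this
    rw [Nat.card_Ico] at this
    omega
  · intro h
    by_contra hn
    have : (Finset.Ico a b).filter P ⊆ Finset.Ico a j := by
      intro l hl
      rw [Finset.mem_filter, Finset.mem_Ico] at hl
      rw [Finset.mem_Ico]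
      refine ⟨hl.1.1, ?_⟩
      by_contra hc
      exact hn (hP j l ha (by omega) hl.1.2 hl.2)
    have := Finset.card_le_card this
    rw [Nat.card_Ico] at this
    omega

/-- correspondence between fillings of `q / p` and chains -/
def Rel (q p : ℕ → ℕ) (T C : ℕ → ℕ → ℕ) : Prop :=
  (∀ i j, ¬ (j < q i ∧ p i ≤ j) → T i j = 0) ∧ (∀ k i, p i ≤ C k i ∧ C k i ≤ q i) ∧
    ∀ i j k, p i ≤ j → j < q i → (T i j < k ↔ j < C k i)

theorem rel_unique_T {q p : ℕ → ℕ} {T T' C : ℕ → ℕ → ℕ} (h : Rel q p T C) (h' : Rel q p T' C) :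
    T = T' := by
  funext i j
  by_cases hj : j < q i ∧ p i ≤ j
  · have e : ∀ k, T i j < k ↔ T' i j < k := fun k =>
      (h.2.2 i j k hj.2 hj.1).trans (h'.2.2 i j k hj.2 hj.1).symm
    have e1 := (e (T i j + 1)).mp (by omega)
    have e2 := (e (T' i j + 1)).mpr (by omega)
    omega
  · rw [h.1 i j hj, h'.1 i j hj]

theorem rel_unique_C {q p : ℕ → ℕ} {T C C' : ℕ → ℕ → ℕ} (h : Rel q p T C) (h' : Rel q p T C') :
    C = C' := by
  funext k i
  have b := h.2.1 k i
  have b' := h'.2.1 k i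
  rcases lt_trichotomy (C k i) (C' k i) with hl | hl | hl
  · have := (h.2.2 i (C k i) k b.1 (by omega)).mp ((h'.2.2 i (C k i) k b.1 (by omega)).mpr hl)
    omega
  · exact hl
  · have := (h'.2.2 i (C' k i) k b'.1 (by omega)).mp ((h.2.2 i (C' k i) k b'.1 (by omega)).mpr hl)
    omega

theorem rel_card {q p : ℕ → ℕ} {PT PC : (ℕ → ℕ → ℕ) → Prop}
    (hT : ∀ T, PT T → ∃ C, Rel q p T C) (hC : ∀ C, PC C → ∃ T, Rel q p T C)
    (hiff : ∀ T C, Rel q p T C → (PT T ↔ PC C)) :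
    Nat.card {T // PT T} = Nat.card {C // PC C} := by
  refine Nat.card_eq_of_bijective (fun T : {T // PT T} =>
    (⟨(hT T.1 T.2).choose, (hiff _ _ (hT T.1 T.2).choose_spec).mp T.2⟩ : {C // PC C})) ⟨?_, ?_⟩
  · rintro ⟨T, h⟩ ⟨T', h'⟩ e
    have e := congrArg Subtype.val e
    simp only at e
    have r1 := (hT T h).choose_spec
    have r2 := (hT T' h').choose_spec
    rw [← e] at r2
    exact Subtype.ext (rel_unique_T r1 r2)
  · rintro ⟨C, h⟩
    obtain ⟨T, hR⟩ := hC C h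
    have hT' := (hiff T C hR).mpr h
    refine ⟨⟨T, hT'⟩, Subtype.ext ?_⟩
    exact rel_unique_C (hT T hT').choose_spec hR

theorem exists_C {q p : ℕ → ℕ} {T : ℕ → ℕ → ℕ} (hpq : ∀ i, p i ≤ q i)
    (h0 : ∀ i j, ¬ (j < q i ∧ p i ≤ j) → T i j = 0)
    (hrow : ∀ i j1 j2, j1 < j2 → p i ≤ j1 → j2 < q i → T i j1 ≤ T i j2) :
    ∃ C, Rel q p T C := by
  classical
  refine ⟨fun k i => p i + ((Finset.Ico (p i) (q i)).filter fun j => T i j < k).card, h0, ?_, ?_⟩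
  · intro k i
    have := Finset.card_filter_le (Finset.Ico (p i) (q i)) (fun j => T i j < k)
    rw [Nat.card_Ico] at this
    have := hpq i
    simp only
    omega
  · intro i j k h1 h2
    refine initial_count (p i) (q i) (fun j => T i j < k) ?_ j h1 h2
    intro j j' ha hjj hb hlt
    rcases hjj.eq_or_lt with rfl | hjj
    · exact hlt
    · exact (hrow i j j' hjj ha hb).trans_lt hlt

theorem exists_T {q p : ℕ → ℕ} {K : ℕ} {C : ℕ → ℕ → ℕ} (h : C ∈ Pre K p q) :
    ∃ T, Rel q p T C := by
  classical
  have hm : ∀ i, Monotone (fun k => C k i) := fun i => by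
    refine monotone_nat_of_le_succ fun k => ?_
    by_cases hk : k < K
    · exact (h.2.2 k hk).1 i
    · rw [h.2.1 k (by omega), h.2.1 (k + 1) (by omega)]
  refine ⟨fun i j => if j < q i ∧ p i ≤ j then
    ((Finset.Ico 0 K).filter fun k => C (k + 1) i ≤ j).card else 0, ?_, ?_, ?_⟩
  · intro i j hj; simp only [if_neg hj]
  · intro k i
    refine ⟨?_, pre_le h k i⟩
    have := hm i (Nat.zero_le k)
    simp only at this
    rwa [h.1] at this
  · intro i j k h1 h2
    simp only [if_pos (And.intro h2 h1)]
    rcases k with _ | k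
    · rw [h.1]; omega
    · by_cases hk : k < K
      · have := initial_count 0 K (fun k => C (k + 1) i ≤ j) (fun a b _ hab _ hb =>
          (hm i (show a + 1 ≤ b + 1 by omega)).trans hb) k (by omega) hk
        rw [zero_add] at this
        omega
      · have := Finset.card_filter_le (Finset.Ico 0 K) (fun k => C (k + 1) i ≤ j)
        rw [Nat.card_Ico] at this
        rw [h.2.1 (k + 1) (by omega)]
        omega

/-- column-strict, rowwise weakly increasing fillings with entries `< K` -/
def Fill (K : ℕ) (q p : ℕ → ℕ) (T : ℕ → ℕ → ℕ) : Prop :=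
  (∀ i j, ¬ (j < q i ∧ p i ≤ j) → T i j = 0) ∧
  (∀ i j1 j2, j1 < j2 → p i ≤ j1 → j2 < q i → T i j1 ≤ T i j2) ∧
  (∀ i1 i2 j, i1 < i2 → p i1 ≤ j → j < q i2 → T i1 j < T i2 j) ∧
  (∀ i j, p i ≤ j → j < q i → T i j < K)

theorem fill_iff {q p : ℕ → ℕ} (hp : Antitone p) (hq : Antitone q) {K : ℕ}
    {T C : ℕ → ℕ → ℕ} (h : Rel q p T C) : Fill K q p T ↔ C ∈ Pre K p q := by
  obtain ⟨h0, hb, hr⟩ := h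
  constructor
  · rintro ⟨-, f2, f3, f4⟩
    refine ⟨?_, ?_, ?_⟩
    · funext i
      by_contra hne
      have := hb 0 i
      have := (hr i (p i) 0 le_rfl (by omega)).mpr (by omega)
      omega
    · intro k hk
      funext i
      by_contra hne
      have b := hb k i
      have := (hr i (C k i) k b.1 (by omega)).mp ((f4 i _ b.1 (by omega)).trans_le hk)
      omega
    · intro k hk
      refine ⟨fun i => ?_, fun i => ?_⟩
      · by_contra hc
        have b := hb (k + 1) i
        have b' := hb k i
        have := (hr i (C (k + 1) i) k b.1 (by omega)).mpr (by omega)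
        have := (hr i (C (k + 1) i) (k + 1) b.1 (by omega)).mp (by omega)
        omega
      · by_contra hc
        have b := hb (k + 1) (i + 1)
        have b' := hb k i
        have a1 := hp (Nat.le_succ i)
        have a2 := hq (Nat.le_succ i)
        simp only [Nat.succ_eq_add_one] at a1 a2
        have g1 := (hr (i + 1) (C k i) (k + 1) (by omega) (by omega)).mpr (by omega)
        have g2 := (hr i (C k i) k (by omega) (by omega)).not.mpr (by omega)
        have := f3 i (i + 1) (C k i) (by omega) (by omega) (by omega)
        omega
  · rintro ⟨c1, c2, c3⟩
    have canti : ∀ k, k ≤ K → Antitone (C k) := by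
      intro k hk
      rcases k with _ | k
      · rw [c1]; exact hp
      · have h1 := c3 k (by omega)
        exact antitone_nat_of_succ_le fun i => (h1.2 i).trans (h1.1 i)
    have lt : ∀ i j, p i ≤ j → j < q i → T i j < K := fun i j h1 h2 => by
      rw [hr i j K h1 h2, c2 K le_rfl]; exact h2
    refine ⟨h0, ?_, ?_, lt⟩
    · intro i j1 j2 hj h1 h2
      have := (hr i j2 (T i j2 + 1) (by omega) h2).mp (by omega)
      have := (hr i j1 (T i j2 + 1) (by omega) (by omega)).mpr (by omega)
      omega
    · intro i1 i2 j hi h1 h2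
      have a1 := hp hi.le
      have a2 := hq hi.le
      have := lt i2 j (by omega) h2
      have g1 := (hr i2 j (T i2 j + 1) (by omega) h2).mp (by omega)
      have g2 := (c3 (T i2 j) this).2 (i2 - 1)
      rw [Nat.sub_add_cancel (by omega)] at g2
      have g3 := canti (T i2 j) this.le (show i1 ≤ i2 - 1 by omega)
      exact (hr i1 j (T i2 j) h1 (by omega)).mpr (by omega)

theorem count_rows {lam mu : YoungDiagram} {T C : ℕ → ℕ → ℕ} (h : Rel lam.rowLen mu.rowLen T C)
    (Q : ℕ × ℕ → Prop) [DecidablePred Q] (R k : ℕ) (hR : ∀ c, c ∈ lam → Q c → c.1 < R) :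
    (lam.cells.filter fun c => c ∉ mu.cells ∧ T c.1 c.2 = k ∧ Q c).card =
      ∑ i ∈ Finset.range R, ((Finset.Ico (C k i) (C (k + 1) i)).filter fun j => Q (i, j)).card := by
  rw [Finset.card_eq_sum_card_fiberwise (f := Prod.fst) (t := Finset.range R)]
  · refine Finset.sum_congr rfl fun i _ => ?_
    have hinj : Function.Injective (fun j : ℕ => (i, j)) := fun a b e => by simpa using e
    refine Eq.trans ?_ (Finset.card_image_of_injective _ hinj)
    refine congrArg Finset.card ?_
    ext ⟨i', j⟩
    simp only [Finset.mem_filter, Finset.mem_image, Finset.mem_Ico,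
      Prod.mk.injEq, YoungDiagram.mem_cells, YoungDiagram.mem_iff_lt_rowLen]
    constructor
    · rintro ⟨⟨h1, h2, h3, h4⟩, rfl⟩
      refine ⟨j, ⟨⟨?_, ?_⟩, h4⟩, rfl, rfl⟩
      · by_contra hc
        have := (h.2.2 i' j k (by omega) h1).mpr (by omega)
        omega
      · exact (h.2.2 i' j (k + 1) (by omega) h1).mp (by omega)
    · rintro ⟨j', ⟨⟨h1, h2⟩, h3⟩, rfl, rfl⟩
      have b1 := h.2.1 k i
      have b2 := h.2.1 (k + 1) i
      have g1 := (h.2.2 i j' k (by omega) (by omega)).not.mpr (by omega)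
      have g2 := (h.2.2 i j' (k + 1) (by omega) (by omega)).mpr (by omega)
      exact ⟨⟨by omega, by omega, by omega, h3⟩, rfl⟩
  · intro c hc
    simp only [Finset.coe_filter, Set.mem_ofPred_eq, YoungDiagram.mem_cells] at hc
    simpa using hR c hc.1 hc.2.2.2

theorem count_content {lam mu : YoungDiagram} {T C : ℕ → ℕ → ℕ}
    (h : Rel lam.rowLen mu.rowLen T C) (hmono : ∀ k i, C k i ≤ C (k + 1) i)
    (hM : lam.card ≤ M) (k : ℕ) :
    SS (C k) M + (lam.cells.filter fun c => c ∉ mu.cells ∧ T c.1 c.2 = k).card =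
      SS (C (k + 1)) M := by
  have := count_rows h (fun _ => True) M k (by
    intro c hc _
    by_contra hn
    have hz := rowLen_zero_of_card_le lam M hM c.1 (by omega)
    have : (c.1, c.2) ∈ lam := hc
    rw [YoungDiagram.mem_iff_lt_rowLen] at this
    omega)
  simp only [and_true, Finset.filter_true, Nat.card_Ico] at this
  have e : (lam.cells.filter fun c => c ∉ mu.cells ∧ T c.1 c.2 = k).card =
    ∑ i ∈ Finset.range M, (C (k + 1) i - C k i) := by
    rw [← this]
  rw [e, SS, SS, ← Finset.sum_add_distrib]
  refine Finset.sum_congr rfl fun i _ => ?_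
  have := hmono k i
  omega

theorem count_prefix {lam mu : YoungDiagram} {T C : ℕ → ℕ → ℕ}
    (h : Rel lam.rowLen mu.rowLen T C) (hmono : ∀ k i, C k i ≤ C (k + 1) i) (r j k : ℕ) :
    SS (C k) r + prefixCount lam mu T r j k =
      SS (C (k + 1)) r + (C (k + 1) r - max j (C k r)) := by
  have := count_rows h (fun c => c.1 < r ∨ (c.1 = r ∧ j ≤ c.2)) (r + 1) k (by
    intro c _ hc
    omega)
  rw [Finset.sum_range_succ] at this
  have e1 : ∀ i ∈ Finset.range r, ((Finset.Ico (C k i) (C (k + 1) i)).filter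
      fun j' => ((i, j') : ℕ × ℕ).1 < r ∨ (((i, j') : ℕ × ℕ).1 = r ∧ j ≤ ((i, j') : ℕ × ℕ).2)).card =
      C (k + 1) i - C k i := by
    intro i hi
    rw [Finset.mem_range] at hi
    rw [Finset.filter_true_of_mem (by intro _ _; left; exact hi), Nat.card_Ico]
  have e2 : ((Finset.Ico (C k r) (C (k + 1) r)).filter
      fun j' => ((r, j') : ℕ × ℕ).1 < r ∨ (((r, j') : ℕ × ℕ).1 = r ∧ j ≤ ((r, j') : ℕ × ℕ).2)) =
      Finset.Ico (max j (C k r)) (C (k + 1) r) := by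
    ext l
    simp only [Finset.mem_filter, Finset.mem_Ico, lt_irrefl, false_or, true_and, max_le_iff]
    tauto
  rw [Finset.sum_congr rfl e1, e2, Nat.card_Ico] at this
  have e3 : prefixCount lam mu T r j k = ∑ i ∈ Finset.range r, (C (k + 1) i - C k i) +
      (C (k + 1) r - max j (C k r)) := by
    rw [← this, prefixCount]
  rw [e3, ← add_assoc]
  congr 1
  rw [SS, SS, ← Finset.sum_add_distrib]
  refine Finset.sum_congr rfl fun i _ => ?_
  have := hmono k i
  omega

theorem pre_mono {K : ℕ} {p q : ℕ → ℕ} {C : ℕ → ℕ → ℕ} (h : C ∈ Pre K p q) (k i : ℕ) :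
    C k i ≤ C (k + 1) i := by
  by_cases hk : k < K
  · exact (h.2.2 k hk).1 i
  · rw [h.2.1 k (by omega), h.2.1 (k + 1) (by omega)]

theorem rl_anti (Y : YoungDiagram) : Antitone Y.rowLen := fun i j h => Y.rowLen_anti i j h

theorem lr_fill {lam mu nu : YoungDiagram} (hn : nu.card ≤ M) {T : ℕ → ℕ → ℕ}
    (h : IsLR lam mu nu T) : Fill M lam.rowLen mu.rowLen T := by
  obtain ⟨h1, h2, h3, h4, h5⟩ := h
  simp only [YoungDiagram.mem_iff_lt_rowLen, not_lt] at h1 h2 h3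
  refine ⟨h1, ?_, ?_, ?_⟩
  · intro i j1 j2 a b c
    exact h2 i j1 j2 a (by omega) b c (by omega)
  · intro i1 i2 j a b c
    have a1 := rl_anti mu a.le
    have a2 := rl_anti lam a.le
    exact h3 i1 i2 j a (by omega) b c (by omega)
  · intro i j a b
    by_contra hc
    have := h4 (T i j)
    rw [rowLen_zero_of_card_le nu M hn _ (by omega), Finset.card_eq_zero] at this
    have hm : (i, j) ∈ (lam.cells.filter fun c => c ∉ mu.cells ∧ T c.1 c.2 = T i j) := by
      simp only [Finset.mem_filter, YoungDiagram.mem_cells, YoungDiagram.mem_iff_lt_rowLen]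
      exact ⟨b, by omega, trivial⟩
    rw [this] at hm
    simp at hm

theorem lrCoeff_eq {lam mu nu : YoungDiagram} (hl : lam.card ≤ M) (hn : nu.card ≤ M) :
    lrCoeff lam mu nu = Nat.card {C // C ∈ Pre M mu.rowLen lam.rowLen ∧ Lat M C ∧
      Cond (sh M nu) 1 C} := by
  have hle : mu ≤ lam ↔ ∀ i, mu.rowLen i ≤ lam.rowLen i := by
    constructor
    · intro h i
      by_contra hc
      have : (i, lam.rowLen i) ∈ mu := by rw [YoungDiagram.mem_iff_lt_rowLen]; omega
      have := h this
      rw [YoungDiagram.mem_iff_lt_rowLen] at this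
      omega
    · rintro h ⟨i, j⟩ hm
      rw [YoungDiagram.mem_iff_lt_rowLen] at hm ⊢
      exact hm.trans_le (h i)
  unfold lrCoeff
  split_ifs with hmu
  · rw [hle] at hmu
    refine rel_card ?_ ?_ (q := lam.rowLen) (p := mu.rowLen) ?_
    · intro T hT
      have hf := lr_fill hn hT
      exact exists_C hmu hf.1 hf.2.1
    · intro C hC
      exact exists_T hC.1
    · intro T C hR
      constructor
      · intro hT
        have hf := lr_fill hn hT
        have hC := (fill_iff (rl_anti mu) (rl_anti lam) hR).mp hf
        obtain ⟨-, -, -, h4, h5⟩ := hT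
        refine ⟨hC, ?_, ?_⟩
        · intro k r hk hv
          have p1 := count_prefix hR (pre_mono hC) r (C (k + 1) r) (k + 1)
          have p2 := count_prefix hR (pre_mono hC) r (C (k + 1) r) k
          have := h5 r (C (k + 1) r) k
          unfold Viol at hv
          have e1 := SS_succ (C (k + 1)) r
          have e2 := SS_succ (C (k + 2)) r
          have := pre_mono hC (k + 1) r
          rw [show k + 1 + 1 = k + 2 from rfl] at *
          omega
        · intro k
          have := count_content hR (pre_mono hC) hl k
          rw [h4] at this
          simp only [sh, Equiv.Perm.coe_one, id]
          omega
      · rintro ⟨hC, hL, hc⟩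
        have hf := (fill_iff (rl_anti mu) (rl_anti lam) hR).mpr hC
        obtain ⟨f1, f2, f3, f4⟩ := hf
        refine ⟨?_, ?_, ?_, ?_, ?_⟩
        · simp only [YoungDiagram.mem_iff_lt_rowLen, not_lt]
          exact f1
        · simp only [YoungDiagram.mem_iff_lt_rowLen, not_lt]
          intro i j1 j2 a _ b c _
          exact f2 i j1 j2 a b c
        · simp only [YoungDiagram.mem_iff_lt_rowLen, not_lt]
          intro i1 i2 j a _ b c _
          exact f3 i1 i2 j a b c
        · intro k
          have := count_content hR (pre_mono hC) hl k
          by_cases hk : k < M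
          · have hc' := hc ⟨k, hk⟩
            simp only [sh, Equiv.Perm.coe_one, id] at hc'
            omega
          · rw [hC.2.1 k (by omega), hC.2.1 (k + 1) (by omega)] at this
            rw [rowLen_zero_of_card_le nu M hn k (by omega)]
            omega
        · intro r j k
          have p1 := count_prefix hR (pre_mono hC) r j (k + 1)
          have p2 := count_prefix hR (pre_mono hC) r j k
          have m0 : SS (C k) r ≤ SS (C (k + 1)) r := Finset.sum_le_sum fun i _ => pre_mono hC k i
          have m1 := pre_mono hC (k + 1) r
          rw [show k + 1 + 1 = k + 2 from rfl] at *
          by_cases hk : k + 1 < M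
          · have hv := hL k r hk
            unfold Viol at hv
            have e1 := SS_succ (C (k + 1)) r
            have e2 := SS_succ (C (k + 2)) r
            omega
          · rw [hC.2.1 (k + 1) (by omega), hC.2.1 (k + 2) (by omega)] at p1
            omega
  · have : IsEmpty {C // C ∈ Pre M mu.rowLen lam.rowLen ∧ Lat M C ∧ Cond (sh M nu) 1 C} := by
      constructor
      rintro ⟨C, hC, -⟩
      apply hmu
      rw [hle]
      intro i
      have := pre_le hC 0 i
      rwa [hC.1] at this
    simp

theorem fSYT_eq {lam : YoungDiagram} (hl : lam.card ≤ M) :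
    fSYT lam = Nat.card (Chain M lam.card (⊥ : YoungDiagram).rowLen lam.rowLen fun _ => 1) := by
  classical
  set N := lam.card with hN
  have step1 : fSYT lam = Nat.card {T : ℕ → ℕ → ℕ // Fill N lam.rowLen (⊥ : YoungDiagram).rowLen T ∧
      ∀ k, k < N → (lam.cells.filter fun c => c ∉ (⊥ : YoungDiagram).cells ∧ T c.1 c.2 = k).card = 1} := by
    have conv : ∀ T : ℕ → ℕ → ℕ, (∀ k, k < N → ∃! c : ℕ × ℕ, c ∈ lam.cells ∧ T c.1 c.2 = k) ↔
        ∀ k, k < N → (lam.cells.filter fun c => c ∉ (⊥ : YoungDiagram).cells ∧ T c.1 c.2 = k).card = 1 := by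
      intro T
      refine forall_congr' fun k => forall_congr' fun _ => ?_
      rw [Finset.card_eq_one]
      simp only [Finset.ext_iff, Finset.mem_filter, Finset.mem_singleton, YoungDiagram.mem_cells,
        YoungDiagram.notMem_bot, not_false_eq_true, true_and, ExistsUnique]
      constructor
      · rintro ⟨c, h1, h2⟩
        refine ⟨c, fun a => ⟨h2 a, ?_⟩⟩
        rintro rfl; exact h1
      · rintro ⟨c, h1⟩
        exact ⟨c, (h1 c).mpr rfl, fun y hy => (h1 y).mp hy⟩
    have bound : ∀ T : ℕ → ℕ → ℕ, (∀ k, k < N →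
        (lam.cells.filter fun c => c ∉ (⊥ : YoungDiagram).cells ∧ T c.1 c.2 = k).card = 1) →
        ∀ c ∈ lam.cells, T c.1 c.2 < N := by
      intro T hT
      have h1 : (lam.cells.filter fun c => T c.1 c.2 < N).card = N := by
        rw [Finset.card_eq_sum_card_fiberwise (f := fun c => T c.1 c.2) (t := Finset.range N)]
        · rw [Finset.sum_congr rfl (g := fun _ => 1), Finset.sum_const, Finset.card_range]
          · simp
          · intro k hk
            rw [Finset.mem_range] at hk
            rw [← hT k hk, Finset.filter_filter]
            congr 1
            ext c
            simp only [Finset.mem_filter, YoungDiagram.mem_cells, YoungDiagram.notMem_bot,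
              not_false_eq_true, true_and]
            constructor
            · rintro ⟨a, b, c⟩; exact ⟨a, c⟩
            · rintro ⟨a, b⟩; exact ⟨a, by omega, b⟩
        · intro c hc
          simp only [Finset.coe_filter, Set.mem_ofPred_eq] at hc
          simpa using hc.2
      have h2 : (lam.cells.filter fun c => T c.1 c.2 < N) = lam.cells :=
        Finset.eq_of_subset_of_card_le (Finset.filter_subset _ _) (by rw [h1])
      intro c hc
      rw [← h2, Finset.mem_filter] at hc
      exact hc.2
    unfold fSYT
    refine Nat.card_eq_of_bijective (fun T : {T : SemistandardYoungTableau lam // IsStandard lam T} =>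
      (⟨T.1.entry, ?_, (conv _).mp T.2⟩ : {T : ℕ → ℕ → ℕ // Fill N lam.rowLen
        (⊥ : YoungDiagram).rowLen T ∧ ∀ k, k < N →
        (lam.cells.filter fun c => c ∉ (⊥ : YoungDiagram).cells ∧ T c.1 c.2 = k).card = 1})) ⟨?_, ?_⟩
    · refine ⟨?_, ?_, ?_, ?_⟩
      · intro i j hij
        refine T.1.zeros' ?_
        rw [YoungDiagram.mem_iff_lt_rowLen]
        rw [rowLen_bot] at hij
        omega
      · intro i j1 j2 a _ b
        refine T.1.row_weak' a ?_
        rwa [YoungDiagram.mem_iff_lt_rowLen]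
      · intro i1 i2 j a _ b
        refine T.1.col_strict' a ?_
        rwa [YoungDiagram.mem_iff_lt_rowLen]
      · intro i j _ b
        refine bound _ ((conv _).mp T.2) (i, j) ?_
        rwa [YoungDiagram.mem_cells, YoungDiagram.mem_iff_lt_rowLen]
    · rintro ⟨T, hT⟩ ⟨T', hT'⟩ e
      have e := congrArg Subtype.val e
      simp only at e
      apply Subtype.ext
      cases T; cases T'
      simpa using e
    · rintro ⟨T, ⟨f1, f2, f3, f4⟩, hT⟩
      simp only [rowLen_bot, Nat.zero_le, and_true, forall_true_left] at f1 f2 f3 f4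
      refine ⟨⟨⟨T, ?_, ?_, ?_⟩, (conv T).mpr hT⟩, rfl⟩
      · intro i j1 j2 a b
        rw [YoungDiagram.mem_iff_lt_rowLen] at b
        exact f2 i j1 j2 a b
      · intro i1 i2 j a b
        rw [YoungDiagram.mem_iff_lt_rowLen] at b
        exact f3 i1 i2 j a b
      · intro i j h
        rw [YoungDiagram.mem_iff_lt_rowLen] at h
        exact f1 i j h
  rw [step1]
  refine rel_card ?_ ?_ (q := lam.rowLen) (p := (⊥ : YoungDiagram).rowLen) ?_
  · intro T hT
    exact exists_C (fun i => by simp [rowLen_bot]) hT.1.1 hT.1.2.1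
  · intro C hC
    exact exists_T (K := N) ⟨hC.1, hC.2.1, hC.2.2.1⟩
  · intro T C hR
    rw [fill_iff (K := N) (rl_anti _) (rl_anti lam) hR]
    constructor
    · rintro ⟨hC, hT⟩
      refine ⟨hC.1, hC.2.1, hC.2.2, fun k hk => ?_⟩
      have := count_content hR (pre_mono hC) hl k
      rw [hT k hk] at this
      exact this.symm
    · rintro ⟨c1, c2, c3, c4⟩
      refine ⟨⟨c1, c2, c3⟩, fun k hk => ?_⟩
      have := count_content hR (pre_mono (K := N) ⟨c1, c2, c3⟩) hl k
      have h4 := c4 k hk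
      simp only [SS] at this
      exact Nat.add_left_cancel (this.trans h4)
end part5

section part6
open MvPolynomial

variable {M : ℕ}

/-! ### Jacobi–Trudi and the Littlewood–Richardson rule -/

def hI (M a b : ℕ) : MvPolynomial (Fin M) ℝ := if b ≤ a then hh M (a - b) else 0

def JJ (M : ℕ) (ν : YoungDiagram) : MvPolynomial (Fin M) ℝ :=
  ∑ π : Equiv.Perm (Fin M), sg π • ∏ k : Fin M, hI M (sh M ν (π k)) (rho M k)

theorem pieri_perm (μ ν : YoungDiagram) (h : μ.card + ν.card ≤ M) (π : Equiv.Perm (Fin M)) :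
    alt (sh M μ) * ∏ k : Fin M, hI M (sh M ν (π k)) (rho M k) =
      ∑ lam ∈ YD (μ.card + ν.card),
        (Nat.card {C // C ∈ Pre M μ.rowLen lam.rowLen ∧ Cond (sh M ν) π C} : ℝ) •
          alt (sh M lam) := by
  by_cases hp : ∀ k, rho M k ≤ sh M ν (π k)
  · let γ : ℕ → ℕ := fun k => if hk : k < M then sh M ν (π ⟨k, hk⟩) - rho M ⟨k, hk⟩ else 0
    have hγ : ∀ k : Fin M, γ k = sh M ν (π k) - rho M k := fun k => by simp [γ]
    have e1 : ∏ k : Fin M, hI M (sh M ν (π k)) (rho M k) = ∏ k ∈ Finset.range M, hh M (γ k) := by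
      rw [Finset.prod_range]
      refine Finset.prod_congr rfl fun k _ => ?_
      rw [hI, if_pos (hp k), hγ]
    have e2 : ∑ k ∈ Finset.range M, γ k = ν.card := by
      rw [Finset.sum_range]
      have h1 : ∑ k : Fin M, γ k + ∑ k, rho M k = ∑ k, sh M ν (π k) := by
        rw [← Finset.sum_add_distrib]
        refine Finset.sum_congr rfl fun k _ => ?_
        rw [hγ, Nat.sub_add_cancel (hp k)]
      rw [Equiv.sum_comp π (sh M ν), sh_sum ν (by omega)] at h1
      omega
    have h2 := multi_pieri (M := M) M μ γ (by rw [e2]; exact h)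
    rw [e2] at h2
    rw [e1, h2]
    refine Finset.sum_congr rfl fun lam _ => ?_
    have e3 : Chain M M μ.rowLen lam.rowLen γ =
        {C | C ∈ Pre M μ.rowLen lam.rowLen ∧ Cond (sh M ν) π C} := by
      ext C
      simp only [Chain, Pre, Cond, Set.mem_ofPred_eq, and_assoc]
      refine and_congr_right fun _ => and_congr_right fun _ => and_congr_right fun _ => ?_
      constructor
      · intro h k
        have h1 := h k k.isLt
        have := hp k
        rw [hγ] at h1
        simp only [SS]
        omega
      · intro h k hk
        have h1 := h ⟨k, hk⟩
        have h2 := hp ⟨k, hk⟩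
        have h3 := hγ ⟨k, hk⟩
        simp only [SS] at h1 h3
        omega
    rw [e3]
    rfl
  · push Not at hp
    obtain ⟨k, hk⟩ := hp
    rw [Finset.prod_eq_zero (Finset.mem_univ k), mul_zero]
    · symm
      refine Finset.sum_eq_zero fun lam _ => ?_
      have : IsEmpty {C // C ∈ Pre M μ.rowLen lam.rowLen ∧ Cond (sh M ν) π C} := by
        constructor
        rintro ⟨C, hC, hc⟩
        have h1 := hc k
        have h2 : SS (C k) M ≤ SS (C (k + 1)) M := Finset.sum_le_sum fun i _ => pre_mono hC k i
        omega
      simp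
    · rw [hI, if_neg (by omega)]

theorem LR_rule (μ ν : YoungDiagram) (h : μ.card + ν.card ≤ M) :
    alt (sh M μ) * JJ M ν = ∑ lam ∈ YD (μ.card + ν.card), (lrCoeff lam μ ν : ℝ) • alt (sh M lam) := by
  rw [JJ, Finset.mul_sum]
  simp only [mul_smul_comm, pieri_perm μ ν h, Finset.smul_sum]
  rw [Finset.sum_comm]
  refine Finset.sum_congr rfl fun lam hl => ?_
  rw [mem_YD] at hl
  simp only [smul_smul]
  rw [← Finset.sum_smul, signed_count (fun i hi => rowLen_zero_of_card_le lam M (by omega) i hi)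
    (sh_strictAnti ν), lrCoeff_eq (M := M) (by omega) (by omega)]

/-- the canonical chain -/
def DD (q : ℕ → ℕ) : ℕ → ℕ → ℕ := fun k i => if i < k then q i else 0

theorem DD_SS (q : ℕ → ℕ) (k r : ℕ) :
    SS (DD q (k + 1)) r = SS (DD q k) r + if k < r then q k else 0 := by
  induction r with
  | zero => simp [SS]
  | succ r ih =>
    rw [SS_succ, SS_succ, ih]
    simp only [DD]
    rcases lt_trichotomy k r with h | h | h
    · simp [h, show ¬ r < k + 1 by omega, show ¬ r < k by omega, show k < r + 1 by omega]
    · subst h; simp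
    · simp [show r < k + 1 by omega, h, show ¬ k < r by omega, show ¬ k < r + 1 by omega]

theorem lat_unique {lam : YoungDiagram} (hl : lam.card ≤ M) {C : ℕ → ℕ → ℕ}
    (hC : C ∈ Pre M (⊥ : YoungDiagram).rowLen lam.rowLen) (hL : Lat M C) : C = DD lam.rowLen := by
  have mono : ∀ k r, SS (C k) r ≤ SS (C (k + 1)) r := fun k r =>
    Finset.sum_le_sum fun i _ => pre_mono hC k i
  have z : ∀ k i, k ≤ i → C k i = 0 := by
    intro k
    induction k with
    | zero => intro i _; rw [hC.1, rowLen_bot]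
    | succ k ih =>
      intro i hi
      by_cases hk : k < M
      · have := (hC.2.2 k hk).2 (i - 1)
        rw [Nat.sub_add_cancel (by omega), ih (i - 1) (by omega)] at this
        omega
      · rw [hC.2.1 (k + 1) (by omega), rowLen_zero_of_card_le lam M hl i (by omega)]
  have B : ∀ i k, i ≤ k → SS (C (k + 1)) i = SS (C k) i := by
    intro i
    induction i with
    | zero => intro k _; simp [SS]
    | succ i ih =>
      intro k hk
      obtain ⟨k, rfl⟩ : ∃ k', k = k' + 1 := ⟨k - 1, by omega⟩
      by_cases hkM : k + 1 < M
      · have h1 := hL k i hkM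
        unfold Viol at h1
        have h2 := ih k (by omega)
        have h3 := mono (k + 1) (i + 1)
        rw [show k + 1 + 1 = k + 2 from rfl] at *
        omega
      · rw [hC.2.1 (k + 1) (by omega), hC.2.1 (k + 1 + 1) (by omega)]
  have B' : ∀ i k, i < k → C (k + 1) i = C k i := by
    intro i k hik
    have h1 := B i k (by omega)
    have h2 := B (i + 1) k (by omega)
    rw [SS_succ, SS_succ] at h2
    omega
  have B'' : ∀ i d, C (i + 1 + d) i = C (i + 1) i := by
    intro i d
    induction d with
    | zero => rfl
    | succ d ih => rw [← add_assoc, B' i _ (by omega), ih]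
  funext k i
  simp only [DD]
  split_ifs with h
  · have h1 := B'' i (k - (i + 1))
    have h2 := B'' i M
    rw [show i + 1 + (k - (i + 1)) = k by omega] at h1
    rw [hC.2.1 (i + 1 + M) (by omega)] at h2
    omega
  · exact z k i (by omega)

theorem DD_mem {lam : YoungDiagram} (hl : lam.card ≤ M) :
    DD lam.rowLen ∈ Pre M (⊥ : YoungDiagram).rowLen lam.rowLen ∧ Lat M (DD lam.rowLen) ∧
      Cond (sh M lam) 1 (DD lam.rowLen) := by
  refine ⟨⟨?_, ?_, ?_⟩, ?_, ?_⟩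
  · funext i; simp [DD, rowLen_bot]
  · intro k hk
    funext i
    simp only [DD]
    split_ifs with h
    · rfl
    · rw [rowLen_zero_of_card_le lam M hl i (by omega)]
  · intro k hk
    refine ⟨fun i => ?_, fun i => ?_⟩
    · simp only [DD]; split_ifs <;> omega
    · have := rl_anti lam (Nat.le_succ i)
      simp only [Nat.succ_eq_add_one] at this
      simp only [DD]; split_ifs <;> omega
  · intro k r hk hv
    unfold Viol at hv
    have h1 := DD_SS lam.rowLen k r
    have h2 := DD_SS lam.rowLen (k + 1) (r + 1)
    have := rl_anti lam (Nat.le_succ k)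
    simp only [Nat.succ_eq_add_one] at this
    rw [show k + 1 + 1 = k + 2 from rfl] at h2
    split_ifs at h1 h2 <;> omega
  · intro k
    rw [DD_SS, if_pos k.isLt]
    simp only [sh, Equiv.Perm.coe_one, id]
    omega

theorem lrCoeff_bot {lam nu : YoungDiagram} (hl : lam.card ≤ M) (hn : nu.card ≤ M) :
    (lam = nu → lrCoeff lam ⊥ nu = 1) ∧ (lam ≠ nu → lrCoeff lam ⊥ nu = 0) := by
  rw [lrCoeff_eq hl hn]
  constructor
  · rintro rfl
    rw [Nat.card_eq_one_iff_unique]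
    refine ⟨⟨?_⟩, ⟨⟨_, DD_mem hl⟩⟩⟩
    rintro ⟨C, hC, hL, -⟩ ⟨C', hC', hL', -⟩
    exact Subtype.ext ((lat_unique hl hC hL).trans (lat_unique hl hC' hL').symm)
  · intro hne
    have : IsEmpty {C // C ∈ Pre M (⊥ : YoungDiagram).rowLen lam.rowLen ∧ Lat M C ∧
        Cond (sh M nu) 1 C} := by
      constructor
      rintro ⟨C, hC, hL, hc⟩
      apply hne
      obtain rfl := lat_unique hl hC hL
      refine sh_inj hl hn (funext fun k => ?_)
      have h1 := hc k
      have h2 := (DD_mem hl).2.2 k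
      simp only [Equiv.Perm.coe_one, id] at h1 h2
      omega
    simp

theorem JT (ν : YoungDiagram) (h : ν.card ≤ M) : alt (rho M) * JJ M ν = alt (sh M ν) := by
  have hb : (⊥ : YoungDiagram).card = 0 := by simp
  have h1 := LR_rule (M := M) ⊥ ν (by omega)
  rw [sh_bot, hb, zero_add] at h1
  rw [h1, Finset.sum_eq_single ν]
  · rw [(lrCoeff_bot h h).1 rfl]; simp
  · intro lam hl hne
    rw [mem_YD] at hl
    rw [(lrCoeff_bot (by omega) h).2 hne]; simp
  · intro hn; exact absurd (mem_YD.mpr rfl) hn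

theorem alt_rho_ne : alt (rho M) ≠ 0 := by
  intro h
  have := cf_alt (rho_strictAnti (M := M)) rho_strictAnti
  rw [h, if_pos rfl] at this
  simp at this
end part6

section part7
open MvPolynomial

variable {M : ℕ}

/-! ### Power sums and characters -/

section chars
variable {ι : Type} [Fintype ι] [DecidableEq ι]

def wt (w : ι → Fin M) : MvPolynomial (Fin M) ℝ := ∏ i, X (w i)

def cnt (w : ι → Fin M) : Fin M → ℕ := fun k => (Finset.univ.filter fun i => w i = k).card

theorem wt_eq (w : ι → Fin M) : wt w = mon (cnt w) := by
  rw [mon_eq_prod, wt, ← Finset.prod_fiberwise (s := Finset.univ) (g := w)]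
  refine Finset.prod_congr rfl fun k _ => ?_
  rw [Finset.prod_congr rfl (g := fun _ => X k), Finset.prod_const]
  · rfl
  · intro i hi
    rw [Finset.mem_filter] at hi
    rw [hi.2]

theorem cnt_sum (w : ι → Fin M) : ∑ k, cnt w k = Fintype.card ι := by
  rw [← Finset.card_univ, Finset.card_eq_sum_card_fiberwise (f := w) (t := Finset.univ)]
  · rfl
  · intro i _; simp

theorem rename_wt (π : Equiv.Perm (Fin M)) (w : ι → Fin M) : rename π (wt w) = wt (π ∘ w) := by
  simp [wt]

def Fx (σ : Equiv.Perm ι) : Finset (ι → Fin M) := Finset.univ.filter fun w => ∀ i, w (σ i) = w i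

def GG (M : ℕ) (σ : Equiv.Perm ι) : MvPolynomial (Fin M) ℝ := ∑ w ∈ Fx σ, wt w

theorem GG_symm (σ : Equiv.Perm ι) : IsSymmetric (GG M σ) := by
  intro π
  rw [GG, map_sum]
  simp only [rename_wt]
  refine Finset.sum_bij' (fun w _ => π ∘ w) (fun w _ => π.symm ∘ w) ?_ ?_ ?_ ?_ ?_
  · intro w hw
    simp only [Fx, Finset.mem_filter, Finset.mem_univ, true_and] at hw ⊢
    intro i; simp [hw i]
  · intro w hw
    simp only [Fx, Finset.mem_filter, Finset.mem_univ, true_and] at hw ⊢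
    intro i; simp [hw i]
  · intro w _; funext i; simp
  · intro w _; funext i; simp
  · intro w _; rfl

theorem GG_hom (σ : Equiv.Perm ι) : Hom (GG M σ) (Fintype.card ι) := by
  intro β hβ
  rw [GG, cf_sum] at hβ
  obtain ⟨w, _, hw⟩ := Finset.exists_ne_zero_of_sum_ne_zero hβ
  rw [wt_eq, cf_mon] at hw
  split_ifs at hw with h
  · rw [h, cnt_sum]
  · exact absurd rfl hw

/-- the irreducible characters of the symmetric group -/
def chi (M : ℕ) (lam : YoungDiagram) (σ : Equiv.Perm ι) : ℝ :=
  cf (sh M lam) (alt (rho M) * GG M σ)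

theorem frob (h : Fintype.card ι ≤ M) (σ : Equiv.Perm ι) :
    alt (rho M) * GG M σ = ∑ lam ∈ YD (Fintype.card ι), chi M lam σ • alt (sh M lam) := by
  refine anti_expand ((alt_anti _).mul (GG_symm σ)) h fun β hβ => ?_
  rw [((alt_hom _).mul (GG_hom σ)) β hβ, add_comm]

theorem frob' (h : Fintype.card ι ≤ M) (σ : Equiv.Perm ι) :
    GG M σ = ∑ lam ∈ YD (Fintype.card ι), chi M lam σ • JJ M lam := by
  refine mul_left_cancel₀ alt_rho_ne ?_
  rw [frob h, Finset.mul_sum]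
  refine Finset.sum_congr rfl fun lam hl => ?_
  rw [mem_YD] at hl
  rw [mul_smul_comm, JT lam (by omega)]

theorem GG_prod (p : ι → Prop) [DecidablePred p] (σ : Equiv.Perm {i // p i})
    (τ : Equiv.Perm {i // ¬ p i}) :
    GG M (Equiv.Perm.subtypeCongr σ τ) = GG M σ * GG M τ := by
  rw [GG, GG, GG, Finset.sum_mul_sum, ← Finset.sum_product']
  refine Finset.sum_equiv (Equiv.piEquivPiSubtypeProd p (fun _ => Fin M)) ?_ ?_
  · intro w
    simp only [Fx, Finset.mem_filter, Finset.mem_univ, true_and, Finset.mem_product,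
      Equiv.piEquivPiSubtypeProd_apply]
    constructor
    · intro h
      refine ⟨fun i => ?_, fun i => ?_⟩
      · rw [← h i.1, Equiv.Perm.subtypeCongr.left_apply _ _ i.2]
      · rw [← h i.1, Equiv.Perm.subtypeCongr.right_apply _ _ i.2]
    · rintro ⟨h1, h2⟩ i
      by_cases hi : p i
      · rw [Equiv.Perm.subtypeCongr.left_apply _ _ hi]; exact h1 ⟨i, hi⟩
      · rw [Equiv.Perm.subtypeCongr.right_apply _ _ hi]; exact h2 ⟨i, hi⟩
  · intro w _
    simp only [wt, Equiv.piEquivPiSubtypeProd_apply]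
    rw [← Fintype.prod_subtype_mul_prod_subtype p]

theorem chi_prod (p : ι → Prop) [DecidablePred p] (σ : Equiv.Perm {i // p i})
    (τ : Equiv.Perm {i // ¬ p i}) {a b : ℕ} (ha : Fintype.card {i // p i} = a)
    (hb : Fintype.card {i // ¬ p i} = b) (hM : a + b ≤ M) {lam : YoungDiagram}
    (hl : lam.card = a + b) :
    chi M lam (Equiv.Perm.subtypeCongr σ τ) = ∑ mu ∈ YD a, ∑ nu ∈ YD b,
      (lrCoeff lam mu nu : ℝ) * (chi M mu σ * chi M nu τ) := by
  have h1 : alt (rho M) * GG M (Equiv.Perm.subtypeCongr σ τ) =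
      ∑ lam ∈ YD (a + b), (∑ mu ∈ YD a, ∑ nu ∈ YD b,
        (lrCoeff lam mu nu : ℝ) * (chi M mu σ * chi M nu τ)) • alt (sh M lam) := by
    rw [GG_prod, ← mul_assoc, frob (by omega), frob' (M := M) (by omega) τ, ha, hb,
      Finset.sum_mul_sum]
    simp only [Finset.sum_smul]
    rw [Finset.sum_comm (s := YD (a + b))]
    refine Finset.sum_congr rfl fun mu hmu => ?_
    rw [Finset.sum_comm (s := YD (a + b))]
    refine Finset.sum_congr rfl fun nu hnu => ?_
    rw [mem_YD] at hmu hnu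
    rw [smul_mul_smul_comm, LR_rule mu nu (by omega), Finset.smul_sum, hmu, hnu]
    refine Finset.sum_congr rfl fun lam _ => ?_
    rw [smul_smul, mul_comm]
  rw [chi, h1, cf_sum_alt hM _ hl]

theorem hh_one : hh M 1 = ∑ k, X k := by
  refine cf_ext fun β => ?_
  have hX : ∀ k : Fin M, (X k : MvPolynomial (Fin M) ℝ) = mon (Pi.single k 1) := by
    intro k
    rw [mon_eq_prod, Finset.prod_eq_single k]
    · simp
    · intro b _ hb; simp [hb]
    · simp
  simp only [hX]
  rw [cf_hh, cf_sum]
  simp only [cf_mon]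
  split_ifs with h
  · have h1 : ∃ k, β k ≠ 0 := by
      by_contra hc
      push Not at hc
      simp [hc] at h
    obtain ⟨k, hk⟩ := h1
    have h2 : ∑ l ∈ Finset.univ.erase k, β l = 0 ∧ β k = 1 := by
      rw [← Finset.add_sum_erase _ _ (Finset.mem_univ k)] at h
      omega
    have h3 : β = Pi.single k 1 := by
      funext l
      by_cases hl : l = k
      · subst hl; simp [h2.2]
      · rw [Finset.sum_eq_zero_iff] at h2
        rw [h2.1 l (by simp [hl])]
        simp [hl]
    rw [Finset.sum_eq_single k]
    · simp [h3]
    · intro l _ hl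
      rw [if_neg]
      intro e
      have := congrFun (h3.symm.trans e) k
      simp [hl.symm] at this
    · simp
  · symm
    refine Finset.sum_eq_zero fun k _ => ?_
    rw [if_neg]
    rintro rfl
    exact h (by simp)

theorem GG_one : GG M (1 : Equiv.Perm ι) = (hh M 1) ^ Fintype.card ι := by
  have h1 : (Fx (1 : Equiv.Perm ι) : Finset (ι → Fin M)) = Finset.univ := by
    ext w; simp [Fx]
  rw [GG, h1, hh_one, ← Finset.card_univ, ← Finset.prod_const]
  simp only [wt]
  rw [Finset.prod_univ_sum]
  simp

theorem chi_one (h : Fintype.card ι ≤ M) {lam : YoungDiagram} (hl : lam.card = Fintype.card ι) :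
    chi M lam (1 : Equiv.Perm ι) = fSYT lam := by
  have hb : (⊥ : YoungDiagram).card = 0 := by simp
  have h1 := multi_pieri (M := M) (Fintype.card ι) ⊥ (fun _ => 1) (by simp [hb, h])
  simp only [Finset.prod_const, Finset.card_range, hb, Finset.sum_const, smul_eq_mul, mul_one,
    zero_add, sh_bot] at h1
  rw [chi, GG_one, h1, cf_sum_alt h _ hl, fSYT_eq (M := M) (by omega), hl]

end chars
end part7

section part8
open MvPolynomial

variable {M : ℕ}

/-! ### Class sum of transpositions -/

def th (k : Fin M) (f : MvPolynomial (Fin M) ℝ) : MvPolynomial (Fin M) ℝ := X k * pderiv k f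

theorem th_add (k : Fin M) (f g) : th k (f + g) = th k f + th k g := by simp [th, mul_add]
theorem th_smul (k : Fin M) (c : ℝ) (f) : th k (c • f) = c • th k f := by simp [th]
theorem th_sum {κ : Type*} (k : Fin M) (s : Finset κ) (f : κ → MvPolynomial (Fin M) ℝ) :
    th k (∑ i ∈ s, f i) = ∑ i ∈ s, th k (f i) := by simp [th, Finset.mul_sum]
theorem th_mul (k : Fin M) (f g) : th k (f * g) = th k f * g + f * th k g := by
  simp [th, Derivation.leibniz]; ring

theorem th_X (k l : Fin M) : th k (X l) = if k = l then X l else 0 := by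
  unfold th
  rw [pderiv_X]
  by_cases h : k = l
  · subst h; simp
  · simp [h]

theorem th_mon (k : Fin M) (β : Fin M → ℕ) : th k (mon β) = (β k : ℝ) • mon β := by
  unfold th mon
  rw [X_mul_pderiv_monomial, Nat.cast_smul_eq_nsmul]
  rfl

theorem eq_sum_mon (f : MvPolynomial (Fin M) ℝ) : ∃ (s : Finset (Fin M → ℕ)) (c : (Fin M → ℕ) → ℝ),
    f = ∑ β ∈ s, c β • mon β := by
  refine ⟨f.support.map Finsupp.equivFunOnFinite.toEmbedding, fun β => cf β f, ?_⟩
  conv_lhs => rw [f.as_sum]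
  rw [Finset.sum_map]
  refine Finset.sum_congr rfl fun d _ => ?_
  simp [mon, cf, smul_monomial]

theorem cf_th (k : Fin M) (β : Fin M → ℕ) (f) : cf β (th k f) = β k * cf β f := by
  obtain ⟨s, c, rfl⟩ := eq_sum_mon f
  rw [th_sum, cf_sum, cf_sum, Finset.mul_sum]
  refine Finset.sum_congr rfl fun γ _ => ?_
  rw [th_smul, th_mon, cf_smul, cf_smul, cf_smul, cf_mon]
  split_ifs with h
  · rw [h]; ring
  · ring

theorem th_prod {κ : Type*} [DecidableEq κ] (k : Fin M) (s : Finset κ)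
    (f : κ → MvPolynomial (Fin M) ℝ) :
    th k (∏ i ∈ s, f i) = ∑ i ∈ s, th k (f i) * ∏ j ∈ s.erase i, f j := by
  induction s using Finset.induction_on with
  | empty => simp [th]
  | insert a s ha ih =>
    rw [Finset.prod_insert ha, th_mul, ih, Finset.sum_insert ha, Finset.erase_insert ha,
      Finset.mul_sum]
    congr 1
    refine Finset.sum_congr rfl fun i hi => ?_
    have : a ≠ i := fun h => ha (h ▸ hi)
    rw [Finset.erase_insert_of_ne this, Finset.prod_insert (by simp [ha])]
    ring

theorem vdm (M : ℕ) : ∃ b : Fin M → Fin M → MvPolynomial (Fin M) ℝ,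
    (∀ k l, k ≠ l → alt (rho M) = (X k - X l) * b k l) ∧
    (∀ k l, k ≠ l → b k l = - b l k) ∧
    ∀ k, th k (alt (rho M)) = ∑ l ∈ Finset.univ.erase k, X k * b k l := by
  classical
  let S : Finset (Fin M × Fin M) := Finset.univ.filter fun p => p.1 < p.2
  let F : Fin M × Fin M → MvPolynomial (Fin M) ℝ := fun p => X p.2 - X p.1
  have hS : ∀ k l : Fin M, (k, l) ∈ S ↔ k < l := by simp [S]
  have ha : alt (rho M) = sg (Fin.revPerm (n := M)) • ∏ p ∈ S, F p := by
    have h1 : ∏ p ∈ S, F p = (Matrix.vandermonde (fun k : Fin M => (X k : MvPolynomial (Fin M) ℝ))).det := by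
      rw [Matrix.det_vandermonde, Finset.prod_sigma']
      refine Finset.prod_bij' (fun p _ => ⟨p.1, p.2⟩) (fun p _ => (p.1, p.2)) ?_ ?_ ?_ ?_ ?_ <;>
        simp [S, F]
    rw [h1, ← Matrix.det_transpose, Matrix.det_apply, alt, Finset.smul_sum]
    refine Fintype.sum_equiv (Equiv.mulLeft Fin.revPerm) _ _ fun π => ?_
    rw [mon_eq_prod]
    have : (Equiv.Perm.sign (Fin.revPerm * π : Equiv.Perm (Fin M))) • ∏ i, (Matrix.vandermonde (fun k : Fin M => (X k : MvPolynomial (Fin M) ℝ))).transpose ((Fin.revPerm * π : Equiv.Perm (Fin M)) i) i = sg (Fin.revPerm * π) • ∏ k, X k ^ (rho M ∘ π) k := by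
      rw [sg, Units.smul_def, Int.cast_smul_eq_zsmul]
      rfl
    rw [Equiv.coe_mulLeft, this, smul_smul, sg_mul, ← mul_assoc, sg_sq, one_mul]
  set c := sg (Fin.revPerm (n := M))
  let b : Fin M → Fin M → MvPolynomial (Fin M) ℝ := fun k l =>
    if k < l then - (c • ∏ p ∈ S.erase (k, l), F p) else c • ∏ p ∈ S.erase (l, k), F p
  have hb : ∀ k l, k < l → b k l = - (c • ∏ p ∈ S.erase (k, l), F p) := fun k l h => by simp [b, h]
  have hb' : ∀ k l, l < k → b k l = (c • ∏ p ∈ S.erase (l, k), F p) := fun k l h => by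
    simp [b, h.le, not_lt.2 h.le]
  have hneg : ∀ k l, k ≠ l → b k l = - b l k := by
    intro k l h
    rcases lt_or_gt_of_ne h with h | h
    · rw [hb _ _ h, hb' _ _ h]
    · rw [hb _ _ h, hb' _ _ h]; simp
  refine ⟨b, ?_, hneg, ?_⟩
  · have : ∀ k l, k < l → alt (rho M) = (X k - X l) * b k l := by
      intro k l h
      rw [ha, hb k l h, ← Finset.mul_prod_erase S F ((hS k l).2 h)]
      simp only [F]
      rw [mul_neg, ← neg_mul, neg_sub, mul_smul_comm]
    intro k l h
    rcases lt_or_gt_of_ne h with h' | h'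
    · exact this k l h'
    · rw [hneg k l h, this l k h']; ring
  · intro k
    rw [ha, th_smul, th_prod, Finset.smul_sum]
    have h2 : ∀ p ∈ S, c • (th k (F p) * ∏ j ∈ S.erase p, F j) =
        (if k = p.2 then X k * b k p.1 else 0) + (if k = p.1 then X k * b k p.2 else 0) := by
      rintro ⟨i, j⟩ hp
      have hij := (hS i j).1 hp
      have : th k (F (i, j)) = (if k = j then X j else 0) - (if k = i then X i else 0) := by
        have : F (i, j) = X j + (-1 : ℝ) • X i := by simp [F, sub_eq_add_neg]
        rw [this, th_add, th_smul, th_X, th_X, neg_one_smul, sub_eq_add_neg]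
      rw [this]
      simp only
      by_cases h1 : k = j
      · subst h1
        rw [if_pos rfl, if_neg hij.ne', if_pos rfl, if_neg hij.ne', hb' _ _ hij]
        simp
      · by_cases h2 : k = i
        · subst h2
          rw [if_pos rfl, if_neg hij.ne, if_pos rfl, if_neg hij.ne, hb _ _ hij]
          simp
        · simp [h1, h2]
    rw [Finset.sum_congr rfl h2, Finset.sum_add_distrib]
    simp only [S, Finset.sum_filter, Fintype.sum_prod_type]
    rw [← Finset.sum_filter_add_sum_filter_not (Finset.univ.erase k) (fun l => l < k)]
    congr 1
    · rw [Finset.sum_filter, Finset.sum_erase _ (by simp)]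
      refine Finset.sum_congr rfl fun i _ => ?_
      rw [Finset.sum_eq_single k]
      · simp
      · intro j _ hj; simp [hj.symm]
      · simp
    · rw [Finset.sum_eq_single k]
      · rw [Finset.sum_filter]
        simp only [if_true]
        rw [← Finset.sum_erase (Finset.univ) (a := k) (by simp)]
        refine Finset.sum_congr rfl fun i hi => ?_
        have : k ≠ i := (Finset.ne_of_mem_erase hi).symm
        by_cases h : k < i
        · simp [h, h.le]
        · have h' : i < k := by omega
          simp [h, h']
      · intro j _ hj; simp [hj.symm]
      · simp
end part8

section part9
open MvPolynomial

variable {M : ℕ}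

section trans
variable {ι : Type} [Fintype ι] [DecidableEq ι]

def QS (σ : Equiv.Perm ι) (k l : Fin M) : Finset ((ι → Fin M) × ι × ι) :=
  Finset.univ.filter fun z => z.2.1 ≠ z.2.2 ∧ (∀ x, z.1 (Equiv.swap z.2.1 z.2.2 (σ x)) = z.1 x) ∧
    z.1 z.2.1 = k ∧ z.1 z.2.2 = l

def QQ (σ : Equiv.Perm ι) (k l : Fin M) : MvPolynomial (Fin M) ℝ := ∑ z ∈ QS σ k l, wt z.1

def RS (σ : Equiv.Perm ι) (k l : Fin M) : Finset ((ι → Fin M) × ι × ι) :=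
  Finset.univ.filter fun z => z.1 z.2.1 = k ∧ Function.update z.1 z.2.1 l z.2.2 = l ∧
    ∀ x, z.1 x = Function.update (Function.update z.1 z.2.1 l) z.2.2 k (σ x)

theorem wt_update (w : ι → Fin M) (i : ι) (l : Fin M) :
    X l * wt w = X (w i) * wt (Function.update w i l) := by
  rw [wt, wt, ← Finset.mul_prod_erase _ _ (Finset.mem_univ i),
    ← Finset.mul_prod_erase _ (fun x => X (Function.update w i l x)) (Finset.mem_univ i),
    Function.update_self]
  rw [Finset.prod_congr rfl (g := fun x => X (Function.update w i l x)) (s₁ := Finset.univ.erase i)]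
  · ring
  · intro x hx
    rw [Function.update_of_ne (Finset.ne_of_mem_erase hx)]

theorem RS_swap_mem {σ : Equiv.Perm ι} {k l : Fin M} {w : ι → Fin M} {i j : ι}
    (h : (w, i, j) ∈ RS σ k l) : (Function.update w i l, j, σ i) ∈ RS σ l k := by
  simp only [RS, Finset.mem_filter, Finset.mem_univ, true_and] at h ⊢
  obtain ⟨h1, h2, h3⟩ := h
  refine ⟨h2, ?_, ?_⟩
  · rw [← h3 i, h1]
  · intro x
    by_cases hx : x = i
    · subst hx; simp
    · rw [Function.update_of_ne hx, Function.update_of_ne (by simpa using hx), h3 x]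

theorem RS_swap (σ : Equiv.Perm ι) (k l : Fin M) :
    X l * ∑ z ∈ RS σ k l, wt z.1 = X k * ∑ z ∈ RS σ l k, wt z.1 := by
  rw [Finset.mul_sum, Finset.mul_sum]
  refine Finset.sum_bij' (fun z _ => (Function.update z.1 z.2.1 l, z.2.2, σ z.2.1))
    (fun z _ => (Function.update z.1 (σ.symm z.2.2) k, σ.symm z.2.2, z.2.1)) ?_ ?_ ?_ ?_ ?_
  · rintro ⟨w, i, j⟩ h
    exact RS_swap_mem h
  · rintro ⟨u, j, m⟩ h
    simp only [RS, Finset.mem_filter, Finset.mem_univ, true_and] at h ⊢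
    obtain ⟨h1, h2, h3⟩ := h
    have hm : u (σ.symm m) = l := by rw [h3]; simp
    have hu : Function.update (Function.update u (σ.symm m) k) (σ.symm m) l = u := by
      rw [Function.update_idem, ← hm, Function.update_eq_self]
    refine ⟨by simp, ?_, ?_⟩
    · rw [hu, h1]
    · rw [hu]
      intro x
      by_cases hx : x = σ.symm m
      · subst hx; simpa using h2.symm
      · rw [Function.update_of_ne hx, h3 x, Function.update_of_ne]
        intro hc; exact hx (by rw [← hc]; simp)
  · rintro ⟨w, i, j⟩ h
    simp only [RS, Finset.mem_filter, Finset.mem_univ, true_and] at h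
    simp [← h.1]
  · rintro ⟨u, j, m⟩ h
    simp only [RS, Finset.mem_filter, Finset.mem_univ, true_and] at h
    have hm : u (σ.symm m) = l := by rw [h.2.2]; simp
    simp [← hm]
  · rintro ⟨w, i, j⟩ h
    simp only [RS, Finset.mem_filter, Finset.mem_univ, true_and] at h
    simp only
    rw [wt_update w i l, h.1]

theorem th_wt (k : Fin M) (w : ι → Fin M) : th k (wt w) = (cnt w k : ℝ) • wt w := by
  rw [wt_eq, th_mon]

theorem th_GG (σ : Equiv.Perm ι) (k : Fin M) :
    th k (GG M σ) = ∑ w ∈ Fx σ, (cnt w k : ℝ) • wt w := by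
  rw [GG, th_sum]
  exact Finset.sum_congr rfl fun w _ => th_wt k w

theorem update_swap {w : ι → Fin M} {i j : ι} {k l : Fin M} (hi : w i = k) (hj : w j = l) (y : ι) :
    Function.update (Function.update w i l) j k y = w (Equiv.swap i j y) := by
  by_cases h1 : y = j
  · subst h1; simp [hi]
  · rw [Function.update_of_ne h1]
    by_cases h2 : y = i
    · subst h2; simp [hj]
    · rw [Function.update_of_ne h2, Equiv.swap_apply_of_ne_of_ne h2 h1]

theorem RS_sum (σ : Equiv.Perm ι) (k l : Fin M) :
    ∑ z ∈ RS σ k l, wt z.1 = th k (GG M σ) + QQ σ k l := by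
  rw [← Finset.sum_filter_add_sum_filter_not (RS σ k l) (fun z => z.2.1 = z.2.2)]
  congr 1
  · have h1 : th k (GG M σ) =
        ∑ z ∈ (Fx σ ×ˢ Finset.univ).filter (fun z : (ι → Fin M) × ι => z.1 z.2 = k), wt z.1 := by
      rw [th_GG, Finset.sum_filter, Finset.sum_product]
      refine Finset.sum_congr rfl fun w _ => ?_
      simp only
      rw [← Finset.sum_filter, Finset.sum_const, Nat.cast_smul_eq_nsmul]
      rfl
    rw [h1]
    refine Finset.sum_bij' (fun z _ => (z.1, z.2.1)) (fun z _ => (z.1, z.2, z.2)) ?_ ?_ ?_ ?_ ?_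
    · rintro ⟨w, i, j⟩ h
      simp only [RS, Fx, Finset.mem_filter, Finset.mem_univ, true_and,
        Finset.mem_product, and_true] at h ⊢
      obtain ⟨⟨h1, h2, h3⟩, rfl⟩ := h
      refine ⟨fun x => ?_, h1⟩
      have := h3 x
      rw [Function.update_idem, ← h1, Function.update_eq_self] at this
      exact this.symm
    · rintro ⟨w, i⟩ h
      simp only [RS, Fx, Finset.mem_filter, Finset.mem_univ, true_and,
        Finset.mem_product, and_true] at h ⊢
      obtain ⟨h1, h2⟩ := h
      refine ⟨h2, by simp, fun x => ?_⟩
      rw [Function.update_idem, ← h2, Function.update_eq_self, h1]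
    · rintro ⟨w, i, j⟩ h
      simp only [Finset.mem_filter] at h
      simp [h.2]
    · rintro ⟨w, i⟩ h
      rfl
    · rintro ⟨w, i, j⟩ h
      rfl
  · rw [QQ]
    refine Finset.sum_congr ?_ fun _ _ => rfl
    ext ⟨w, i, j⟩
    simp only [RS, QS, Finset.mem_filter, Finset.mem_univ, true_and]
    constructor
    · rintro ⟨⟨h1, h2, h3⟩, h4⟩
      rw [Function.update_of_ne (Ne.symm h4)] at h2
      refine ⟨h4, fun x => ?_, h1, h2⟩
      rw [h3 x, update_swap h1 h2]
    · rintro ⟨h4, h3, h1, h2⟩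
      refine ⟨⟨h1, ?_, fun x => ?_⟩, h4⟩
      · rw [Function.update_of_ne (Ne.symm h4), h2]
      · rw [← h3 x, update_swap h1 h2]

theorem QQ_symm (σ : Equiv.Perm ι) (k l : Fin M) : QQ σ k l = QQ σ l k := by
  rw [QQ, QQ]
  refine Finset.sum_bij' (fun z _ => (z.1, z.2.2, z.2.1)) (fun z _ => (z.1, z.2.2, z.2.1))
    ?_ ?_ ?_ ?_ ?_
  · rintro ⟨w, i, j⟩ h
    simp only [QS, Finset.mem_filter, Finset.mem_univ, true_and] at h ⊢
    rw [Equiv.swap_comm]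
    exact ⟨h.1.symm, h.2.1, h.2.2.2, h.2.2.1⟩
  · rintro ⟨w, i, j⟩ h
    simp only [QS, Finset.mem_filter, Finset.mem_univ, true_and] at h ⊢
    rw [Equiv.swap_comm]
    exact ⟨h.1.symm, h.2.1, h.2.2.2, h.2.2.1⟩
  all_goals simp

theorem QQ_rel (σ : Equiv.Perm ι) (k l : Fin M) :
    (X k - X l) * QQ σ k l = X l * th k (GG M σ) - X k * th l (GG M σ) := by
  have h := RS_swap σ k l
  rw [RS_sum, RS_sum, QQ_symm σ l k] at h
  linear_combination - h

theorem QQ_diag (σ : Equiv.Perm ι) (k : Fin M) :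
    QQ σ k k = th k (th k (GG M σ)) - th k (GG M σ) := by
  have h := RS_sum σ k k
  have h2 : ∑ z ∈ RS σ k k, wt z.1 = th k (th k (GG M σ)) := by
    have h1 : RS σ k k =
        ((Fx σ ×ˢ (Finset.univ ×ˢ Finset.univ)).filter
          fun z : (ι → Fin M) × ι × ι => z.1 z.2.1 = k ∧ z.1 z.2.2 = k) := by
      ext ⟨w, i, j⟩
      simp only [RS, Fx, Finset.mem_filter, Finset.mem_univ, true_and, Finset.mem_product, and_true]
      constructor
      · rintro ⟨h1, h2, h3⟩
        have h5 : Function.update w i k = w := by rw [← h1, Function.update_eq_self]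
        rw [h5] at h2 h3
        have h6 : Function.update w j k = w := by rw [← h2, Function.update_eq_self]
        rw [h6] at h3
        exact ⟨fun x => (h3 x).symm, h1, h2⟩
      · rintro ⟨h3, h1, h2⟩
        have h5 : Function.update w i k = w := by rw [← h1, Function.update_eq_self]
        have h6 : Function.update w j k = w := by rw [← h2, Function.update_eq_self]
        rw [h5, h6]
        exact ⟨h1, h2, fun x => (h3 x).symm⟩
    rw [h1, Finset.sum_filter, Finset.sum_product, th_GG, th_sum]
    refine Finset.sum_congr rfl fun w _ => ?_
    rw [th_smul, th_wt, smul_smul, ← Finset.sum_filter]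
    simp only
    rw [Finset.sum_const]
    rw [Finset.filter_product (fun i => w i = k) (fun i => w i = k), Finset.card_product,
      ← Nat.cast_mul, Nat.cast_smul_eq_nsmul]
    rfl
  rw [h2] at h
  rw [h]; ring

theorem sum_QQ (σ : Equiv.Perm ι) :
    ∑ i, ∑ j, (if i ≠ j then GG M (Equiv.swap i j * σ) else 0) = ∑ k, ∑ l, QQ σ k l := by
  have h : ∀ i j : ι, (if i ≠ j then GG M (Equiv.swap i j * σ) else 0) = ∑ k, ∑ l, ∑ w : ι → Fin M,
      if i ≠ j ∧ (∀ x, w (Equiv.swap i j (σ x)) = w x) ∧ w i = k ∧ w j = l then wt w else 0 := by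
    intro i j
    have : ∀ k, ∑ l, ∑ w : ι → Fin M,
      (if i ≠ j ∧ (∀ x, w (Equiv.swap i j (σ x)) = w x) ∧ w i = k ∧ w j = l then wt w else 0) =
      ∑ w : ι → Fin M, if i ≠ j ∧ (∀ x, w (Equiv.swap i j (σ x)) = w x) ∧ w i = k then wt w else 0 := by
      intro k
      rw [Finset.sum_comm]
      refine Finset.sum_congr rfl fun w _ => ?_
      rw [Finset.sum_eq_single (w j)]
      · simp
      · intro l _ hl; simp [hl.symm]
      · simp
    simp only [this]
    rw [Finset.sum_comm]
    by_cases hij : i ≠ j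
    · rw [if_pos hij, GG, Fx, Finset.sum_filter]
      refine Finset.sum_congr rfl fun w _ => ?_
      rw [Finset.sum_eq_single (w i)]
      · simp only [hij, Equiv.Perm.mul_apply, and_true, true_and, ne_eq, not_false_eq_true]
        congr
      · intro l _ hl; simp [hl.symm]
      · simp
    · simp [hij]
  simp only [h]
  have h2 : ∀ k l, QQ σ k l = ∑ i, ∑ j, ∑ w : ι → Fin M,
      if i ≠ j ∧ (∀ x, w (Equiv.swap i j (σ x)) = w x) ∧ w i = k ∧ w j = l then wt w else 0 := by
    intro k l
    rw [QQ, QS, Finset.sum_filter, Fintype.sum_prod_type, Finset.sum_comm, Fintype.sum_prod_type]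
  simp only [h2]
  rw [Finset.sum_congr rfl fun i _ => Finset.sum_comm]
  rw [Finset.sum_comm]
  refine Finset.sum_congr rfl fun k _ => ?_
  rw [Finset.sum_congr rfl fun i _ => Finset.sum_comm]
  rw [Finset.sum_comm]

theorem sum_th_GG (σ : Equiv.Perm ι) : ∑ k, th k (GG M σ) = (Fintype.card ι : ℝ) • GG M σ := by
  simp only [th_GG]
  rw [Finset.sum_comm, GG, Finset.smul_sum]
  refine Finset.sum_congr rfl fun w _ => ?_
  rw [← Finset.sum_smul, ← cnt_sum w]
  push_cast; rfl

theorem sum_th2_alt (α : Fin M → ℕ) :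
    ∑ k, th k (th k (alt α)) = (∑ k, (α k : ℝ) ^ 2) • alt α := by
  have : ∀ k, th k (th k (alt α)) = ∑ π : Equiv.Perm (Fin M),
      ((α (π k) : ℝ) ^ 2) • (sg π • mon (α ∘ π)) := by
    intro k
    rw [alt, th_sum, th_sum]
    refine Finset.sum_congr rfl fun π _ => ?_
    rw [th_smul, th_mon, th_smul, th_smul, th_mon, smul_comm, Function.comp, pow_two, mul_smul,
      smul_comm (sg π)]
  simp only [this]
  rw [Finset.sum_comm, alt, Finset.smul_sum]
  refine Finset.sum_congr rfl fun π _ => ?_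
  rw [← Finset.sum_smul, Equiv.sum_comp π (fun k => (α k : ℝ) ^ 2)]

theorem class_sum (σ : Equiv.Perm ι) :
    alt (rho M) * ∑ i, ∑ j, (if i ≠ j then GG M (Equiv.swap i j * σ) else 0) =
      ∑ k, th k (th k (alt (rho M) * GG M σ)) -
        ((∑ k, (rho M k : ℝ) ^ 2) + (2 * M - 1) * Fintype.card ι) • (alt (rho M) * GG M σ) := by
  classical
  rw [sum_QQ]
  obtain ⟨b, hb1, hb2, hb3⟩ := vdm M
  set a := alt (rho M) with ha
  set G := GG M σ with hG
  have h1 : ∑ k, ∑ l, QQ σ k l = ∑ k, (th k (th k G) - th k G) +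
      ∑ k, ∑ l, if k ≠ l then QQ σ k l else 0 := by
    rw [← Finset.sum_add_distrib]
    refine Finset.sum_congr rfl fun k _ => ?_
    rw [← QQ_diag, ← Finset.add_sum_erase _ _ (Finset.mem_univ k), ← Finset.sum_filter]
    congr 1
    refine Finset.sum_congr ?_ fun _ _ => rfl
    ext l; simp [eq_comm]
  have h2 : a * (∑ k, ∑ l, if k ≠ l then QQ σ k l else 0) =
      2 * ∑ k, ∑ l, if k ≠ l then b k l * X l * th k G else 0 := by
    have e1 : ∀ k l, a * (if k ≠ l then QQ σ k l else 0) =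
        (if k ≠ l then b k l * X l * th k G else 0) + (if l ≠ k then b l k * X k * th l G else 0) := by
      intro k l
      by_cases h : k = l
      · simp [h]
      · rw [if_pos h, if_pos h, if_pos (Ne.symm h)]
        have := QQ_rel σ k l
        rw [hb1 k l h, hb2 l k (Ne.symm h)]
        linear_combination b k l * this
    rw [Finset.mul_sum]
    simp only [Finset.mul_sum, e1]
    simp only [Finset.sum_add_distrib]
    rw [Finset.sum_comm (f := fun k l => if l ≠ k then b l k * X k * th l G else 0)]
    simp only [← Finset.mul_sum]
    ring
  have h3 : ∀ k, (∑ l, if k ≠ l then b k l * X l * th k G else 0) =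
      th k a * th k G - ((M : ℝ) - 1) • (a * th k G) := by
    intro k
    rw [hb3 k, Finset.sum_mul]
    have e2 : ((M : ℝ) - 1) • (a * th k G) = ∑ l ∈ Finset.univ.erase k, a * th k G := by
      rw [Finset.sum_const, Finset.card_erase_of_mem (Finset.mem_univ k), Finset.card_univ,
        Fintype.card_fin, ← Nat.cast_smul_eq_nsmul ℝ, Nat.cast_sub, Nat.cast_one]
      exact k.pos
    rw [e2, ← Finset.sum_sub_distrib, ← Finset.sum_filter]
    refine Finset.sum_congr ?_ fun l hl => ?_
    · ext l; simp [eq_comm]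
    · rw [hb1 k l (Finset.ne_of_mem_erase hl).symm]
      ring
  have h4 : ∀ k, th k (th k (a * G)) = th k (th k a) * G + 2 * (th k a * th k G) + a * th k (th k G) := by
    intro k
    rw [th_mul, th_add, th_mul, th_mul]; ring
  rw [h1, mul_add, h2]
  simp only [h3, h4]
  simp only [Finset.sum_add_distrib, Finset.sum_sub_distrib]
  rw [← Finset.sum_mul, ha, sum_th2_alt, ← ha, sum_th_GG, ← Finset.smul_sum]
  rw [← Finset.mul_sum (f := fun k => th k G), sum_th_GG, ← hG]
  simp only [← Finset.mul_sum, smul_eq_C_mul, map_add, map_sub, map_mul, map_one]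
  simp only [map_ofNat]
  ring

end trans
end part9

section part10
open MvPolynomial

variable {M : ℕ}

section diagsec

theorem rowLen_le_of_card_le (Y : YoungDiagram) (M : ℕ) (h : Y.card ≤ M) (i : ℕ) :
    Y.rowLen i ≤ M := by
  by_cases hi : i < M
  · rw [card_eq_sum Y M h] at h
    exact (Finset.single_le_sum (f := fun i => Y.rowLen i) (fun _ _ => Nat.zero_le _)
      (Finset.mem_range.2 hi)).trans h
  · rw [rowLen_zero_of_card_le Y M h i (by omega)]; omega

theorem card_transpose' (Y : YoungDiagram) : Y.transpose.card = Y.card := by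
  simp [YoungDiagram.card, YoungDiagram.transpose]

theorem diag_eq (Y : YoungDiagram) (M : ℕ) (h : Y.card ≤ M) :
    2 * (diag Y : ℝ) = ∑ k ∈ Finset.range M, (Y.rowLen k : ℝ) * (Y.rowLen k - 1 - 2 * k) := by
  have hT : Y.transpose.card ≤ M := by rw [card_transpose']; exact h
  have hc0 : ∀ j, M ≤ j → Y.colLen j = 0 := fun j hj => by
    rw [← YoungDiagram.rowLen_transpose]; exact rowLen_zero_of_card_le _ M hT j hj
  have hcM : ∀ j, Y.colLen j ≤ M := fun j => by
    rw [← YoungDiagram.rowLen_transpose]; exact rowLen_le_of_card_le _ M hT j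
  have hr : (∑ᶠ i : ℕ, ((Y.rowLen i).choose 2 : ℤ)) =
      ∑ i ∈ Finset.range M, ((Y.rowLen i).choose 2 : ℤ) := by
    refine finsum_eq_sum_of_support_subset _ fun i hi => ?_
    simp only [Finset.coe_range, Set.mem_Iio]
    by_contra hc
    refine hi ?_
    simp only
    rw [rowLen_zero_of_card_le Y M h i (by omega)]; rfl
  have hcc : (∑ᶠ i : ℕ, ((Y.colLen i).choose 2 : ℤ)) =
      ∑ i ∈ Finset.range M, ((Y.colLen i).choose 2 : ℤ) := by
    refine finsum_eq_sum_of_support_subset _ fun i hi => ?_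
    simp only [Finset.coe_range, Set.mem_Iio]
    by_contra hc
    refine hi ?_
    simp only
    rw [hc0 i (by omega)]; rfl
  have h1 : ∑ j ∈ Finset.range M, (Y.colLen j).choose 2 = ∑ i ∈ Finset.range M, i * Y.rowLen i := by
    have e1 : ∀ j, (Y.colLen j).choose 2 = ∑ i ∈ Finset.range M, if (i, j) ∈ Y then i else 0 := by
      intro j
      rw [Nat.choose_two_right, ← Finset.sum_range_id, ← Finset.sum_filter]
      refine Finset.sum_congr ?_ fun _ _ => rfl
      ext i
      simp only [Finset.mem_range, Finset.mem_filter, YoungDiagram.mem_iff_lt_colLen]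
      have := hcM j
      omega
    simp only [e1]
    rw [Finset.sum_comm]
    refine Finset.sum_congr rfl fun i _ => ?_
    rw [← Finset.sum_filter, Finset.sum_const, smul_eq_mul, mul_comm]
    congr 1
    have : (Finset.range M).filter (fun j => (i, j) ∈ Y) = Finset.range (Y.rowLen i) := by
      ext j
      simp only [Finset.mem_range, Finset.mem_filter, YoungDiagram.mem_iff_lt_rowLen]
      have := rowLen_le_of_card_le Y M h i
      omega
    rw [this, Finset.card_range]
  have h2 : ((∑ j ∈ Finset.range M, (Y.colLen j).choose 2 : ℕ) : ℝ) =
      ∑ i ∈ Finset.range M, (i : ℝ) * Y.rowLen i := by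
    rw [h1]; push_cast; rfl
  rw [diag, hr, hcc]
  push_cast at h2 ⊢
  rw [h2, ← Finset.sum_sub_distrib, Finset.mul_sum]
  refine Finset.sum_congr rfl fun i _ => ?_
  rw [Nat.cast_choose_two]
  ring

end diagsec

section trans
variable {ι : Type} [Fintype ι] [DecidableEq ι]

theorem chi_swap (h : Fintype.card ι ≤ M) {lam : YoungDiagram} (hl : lam.card = Fintype.card ι)
    (σ : Equiv.Perm ι) :
    ∑ i, ∑ j, (if i ≠ j then chi M lam (Equiv.swap i j * σ) else 0) =
      2 * (diag lam : ℝ) * chi M lam σ := by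
  have h1 := congrArg (cf (sh M lam)) (class_sum (M := M) σ)
  have h2 : cf (sh M lam)
      (alt (rho M) * ∑ i, ∑ j, (if i ≠ j then GG M (Equiv.swap i j * σ) else 0)) =
      ∑ i, ∑ j, (if i ≠ j then chi M lam (Equiv.swap i j * σ) else 0) := by
    rw [Finset.mul_sum, cf_sum]
    refine Finset.sum_congr rfl fun i _ => ?_
    rw [Finset.mul_sum, cf_sum]
    refine Finset.sum_congr rfl fun j _ => ?_
    split_ifs
    · rfl
    · simp
  rw [← h2, h1, cf_sub, cf_smul, cf_sum, diag_eq lam M (by omega)]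
  simp only [cf_th]
  rw [chi]
  simp only [← mul_assoc]
  rw [← Finset.sum_mul, ← sub_mul]
  congr 1
  have h3 : (Fintype.card ι : ℝ) = ∑ k : Fin M, (lam.rowLen k : ℝ) := by
    rw [← hl, card_eq_sum lam M (by omega), Finset.sum_range]; push_cast; rfl
  rw [h3, Finset.mul_sum, ← Finset.sum_add_distrib, ← Finset.sum_sub_distrib, Finset.sum_range]
  refine Finset.sum_congr rfl fun k _ => ?_
  have h4 : (rho M k : ℝ) = M - 1 - k := by
    have : rho M k + 1 + k = M := by
      have := k.2
      simp only [rho, Fin.val_rev]; omega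
    have h5 := congrArg (Nat.cast (R := ℝ)) this
    push_cast at h5
    linarith
  simp only [sh]
  push_cast
  rw [h4]; ring

end trans
end part10

section part11
open MvPolynomial

variable {M : ℕ}

theorem prod_mon {κ : Type*} (s : Finset κ) (p : κ → Fin M → ℕ) :
    ∏ k ∈ s, mon (p k) = mon (∑ k ∈ s, p k) := by
  classical
  induction s using Finset.induction_on with
  | empty => simp [mon_eq_prod]
  | insert a s ha ih => rw [Finset.prod_insert ha, Finset.sum_insert ha, ih, mon_mul]

theorem cf_one_prod_hh (γ : Fin M → ℕ) :
    cf (fun _ => 1) (∏ k, hh M (γ k)) =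
      ((Finset.univ.filter fun w : Fin M → Fin M => cnt w = γ).card : ℝ) := by
  classical
  simp only [hh]
  rw [Finset.prod_univ_sum, cf_sum]
  simp only [prod_mon, cf_mon]
  rw [← Finset.sum_filter, Finset.sum_const, nsmul_eq_mul, mul_one]
  congr 1
  symm
  refine Finset.card_bij (fun w _ => fun k i => if w i = k then 1 else 0) ?_ ?_ ?_
  · intro w hw
    simp only [Finset.mem_filter, Finset.mem_univ, true_and] at hw
    simp only [Finset.mem_filter, Fintype.mem_piFinset, Finset.mem_piAntidiag, Finset.mem_univ,
      implies_true, and_true]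
    refine ⟨fun k => ?_, ?_⟩
    · rw [← hw, cnt, Finset.card_filter]
    · funext i
      simp
  · intro w _ w' _ h
    funext i
    have := congrFun (congrFun h (w i)) i
    simp only [if_true] at this
    by_contra hc
    rw [if_neg (fun h => hc h.symm)] at this
    omega
  · intro p hp
    simp only [Finset.mem_filter, Fintype.mem_piFinset, Finset.mem_piAntidiag, Finset.mem_univ,
      implies_true, and_true] at hp
    obtain ⟨h1, h2⟩ := hp
    have h3 : ∀ i, ∃ k, ∀ l, p l i = if k = l then 1 else 0 := by
      intro i
      have h4 : ∑ k, p k i = 1 := by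
        have := congrFun h2 i
        simp only [Finset.sum_apply] at this
        exact this.symm
      have h5 : ∃ k, p k i ≠ 0 := by
        by_contra hc
        push Not at hc
        simp [hc] at h4
      obtain ⟨k, hk⟩ := h5
      refine ⟨k, fun l => ?_⟩
      rw [← Finset.add_sum_erase _ _ (Finset.mem_univ k)] at h4
      have h6 : ∑ x ∈ Finset.univ.erase k, p x i = 0 := by omega
      split_ifs with hl
      · subst hl; omega
      · rw [Finset.sum_eq_zero_iff] at h6
        exact h6 l (by simp [Ne.symm hl])
    choose w hw using h3
    have h7 : (fun k i => if w i = k then 1 else 0) = p := by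
      funext k i; rw [hw]
    refine ⟨w, ?_, h7⟩
    simp only [Finset.mem_filter, Finset.mem_univ, true_and]
    funext k
    rw [← h1 k, cnt, Finset.card_filter]
    simp only [hw]

theorem cf_hh_pow (γ : Fin M → ℕ) :
    cf γ (hh M 1 ^ M) = cf (fun _ => 1) (∏ k, hh M (γ k)) := by
  have h1 : (Fx (1 : Equiv.Perm (Fin M)) : Finset (Fin M → Fin M)) = Finset.univ := by
    ext w; simp [Fx]
  have h := GG_one (M := M) (ι := Fin M)
  rw [Fintype.card_fin] at h
  rw [cf_one_prod_hh, ← h, GG, h1, cf_sum]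
  simp only [wt_eq, cf_mon]
  rw [← Finset.sum_filter, Finset.sum_const, nsmul_eq_mul, mul_one]
  simp only [eq_comm]

theorem cf_one_JJ (lam : YoungDiagram) :
    cf (fun _ => 1) (JJ M lam) = chi M lam (1 : Equiv.Perm (Fin M)) := by
  classical
  rw [chi, GG_one, Fintype.card_fin, alt, Finset.sum_mul, cf_sum, JJ, cf_sum]
  refine Fintype.sum_equiv (Equiv.inv _) _ _ fun π => ?_
  rw [cf_smul, smul_mul_assoc, cf_smul, Equiv.inv_apply, sg_inv, cf_mon_mul]
  congr 1
  split_ifs with h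
  · rw [cf_hh_pow, ← Equiv.prod_comp π (fun k => hh M ((sh M lam - rho M ∘ ⇑π⁻¹) k))]
    congr 1
    refine Finset.prod_congr rfl fun k _ => ?_
    have h1 : rho M k ≤ sh M lam (π k) := by simpa using h (π k)
    rw [hI, if_pos h1]
    simp
  · have : ∃ k, ¬ rho M k ≤ sh M lam (π k) := by
      by_contra hc
      push Not at hc
      refine h fun k => ?_
      have := hc (π⁻¹ k)
      simpa using this
    obtain ⟨k, hk⟩ := this
    rw [Finset.prod_eq_zero (Finset.mem_univ k), cf_zero]
    rw [hI, if_neg hk]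

theorem cnt_one_iff (w : Fin M → Fin M) : (fun _ => 1) = cnt w ↔ Function.Injective w := by
  constructor
  · intro h i j hij
    have := congrFun h (w i)
    simp only [cnt] at this
    have h2 := Finset.card_le_one.1 this.symm.le
    exact h2 i (by simp) j (by simp [hij])
  · intro h
    have hs : Function.Surjective w := Finite.injective_iff_surjective.1 h
    funext k
    obtain ⟨i, rfl⟩ := hs k
    have : (Finset.univ.filter fun j => w j = w i) = {i} := by
      ext j; simp [h.eq_iff]
    rw [cnt, this, Finset.card_singleton]

theorem ortho (σ : Equiv.Perm (Fin M)) :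
    ∑ lam ∈ YD M, chi M lam (1 : Equiv.Perm (Fin M)) * chi M lam σ =
      if σ = 1 then (M.factorial : ℝ) else 0 := by
  classical
  have h := congrArg (cf (fun _ => 1)) (frob' (M := M) (by simp) σ)
  rw [cf_sum, Fintype.card_fin] at h
  have h1 : ∑ lam ∈ YD M, chi M lam (1 : Equiv.Perm (Fin M)) * chi M lam σ =
      ∑ lam ∈ YD M, cf (fun _ => 1) (chi M lam σ • JJ M lam) := by
    refine Finset.sum_congr rfl fun lam _ => ?_
    rw [cf_smul, cf_one_JJ, mul_comm]
  rw [h1, ← h, GG, cf_sum]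
  simp only [wt_eq, cf_mon, cnt_one_iff]
  split_ifs with hσ
  · subst hσ
    have h2 : (Fx (1 : Equiv.Perm (Fin M)) : Finset (Fin M → Fin M)) = Finset.univ := by
      ext w; simp [Fx]
    rw [h2, ← Finset.sum_filter, Finset.sum_const, nsmul_eq_mul, mul_one, ← Fintype.card_subtype,
      Fintype.card_congr (Equiv.subtypeInjectiveEquivEmbedding (Fin M) (Fin M)),
      Fintype.card_embedding_eq]
    simp [Nat.descFactorial_self]
  · refine Finset.sum_eq_zero fun w hw => ?_
    rw [if_neg]
    intro hi
    apply hσ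
    ext i
    simp only [Fx, Finset.mem_filter, Finset.mem_univ, true_and] at hw
    rw [hi (hw i)]; rfl

theorem chi_triv {ι : Type} [Fintype ι] [DecidableEq ι] (hM : 0 < M) (hc : Fintype.card ι ≤ M)
    {lam : YoungDiagram}
    (hl : lam.card = Fintype.card ι) (hr : lam.rowLen 0 = Fintype.card ι) (σ : Equiv.Perm ι) :
    chi M lam σ = 1 := by
  classical
  have hz : ∀ k : Fin M, k ≠ ⟨0, hM⟩ → lam.rowLen k = 0 := by
    intro k hk
    have h1 := card_eq_sum lam M (by omega)
    rw [Finset.sum_range, ← Finset.add_sum_erase _ _ (Finset.mem_univ (⟨0, hM⟩ : Fin M))] at h1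
    have h2 : ∑ x ∈ Finset.univ.erase (⟨0, hM⟩ : Fin M), lam.rowLen x = 0 := by
      simp only at h1
      omega
    rw [Finset.sum_eq_zero_iff] at h2
    exact h2 k (by simp [hk])
  rw [chi, alt, Finset.sum_mul, cf_sum, Finset.sum_eq_single (1 : Equiv.Perm (Fin M))]
  · rw [smul_mul_assoc, cf_smul, cf_mon_mul, if_pos]
    · rw [GG, cf_sum, Finset.sum_eq_single (fun _ => ⟨0, hM⟩)]
      · rw [wt_eq, cf_mon, if_pos]
        · simp [sg]
        · funext k
          simp only [cnt, Pi.sub_apply, sh, Function.comp, Equiv.Perm.one_apply]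
          by_cases hk : k = ⟨0, hM⟩
          · subst hk; simp [hr]
          · rw [hz k hk]
            simp [Ne.symm hk]
      · intro w _ hw
        rw [wt_eq, cf_mon, if_neg]
        intro hc
        apply hw
        funext i
        by_contra hi
        have := congrFun hc (w i)
        simp only [cnt, Pi.sub_apply, sh, Function.comp, Equiv.Perm.one_apply] at this
        rw [hz _ hi] at this
        simp only [zero_add, Nat.sub_self] at this
        have h3 := Finset.card_eq_zero.1 this.symm
        have : i ∈ (Finset.univ.filter fun j => w j = w i) := by simp
        rw [h3] at this
        simp at this
      · intro h; exact absurd (by simp [Fx]) h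
    · intro k
      simp [sh]
  · intro π _ hπ
    rw [smul_mul_assoc, cf_smul, cf_mon_mul, if_neg, mul_zero]
    intro hle
    apply hπ
    have h1 : ∀ k ∈ (Finset.univ : Finset (Fin M)), (k : ℕ) ≤ π k := by
      intro k _
      by_cases hk : k = ⟨0, hM⟩
      · subst hk; simp
      · have := hle k
        simp only [sh, Function.comp, hz k hk, rho, Fin.val_rev] at this
        have h1 := k.2
        have h2 := (π k).2
        omega
    have h2 := (Finset.sum_eq_sum_iff_of_le h1).1 (Equiv.sum_comp π (fun k => (k : ℕ))).symm
    ext k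
    rw [← h2 k (Finset.mem_univ k)]; rfl
  · simp
end part11

section part12
section oper
variable {ι : Type} [Fintype ι] [DecidableEq ι]

theorem swap_eq_swap {i j i' j' : ι} (h : i ≠ j) (he : Equiv.swap i j = Equiv.swap i' j') :
    (i' = i ∧ j' = j) ∨ (i' = j ∧ j' = i) := by
  have h1 : Equiv.swap i' j' i = j := by rw [← he]; simp
  have h2 : Equiv.swap i' j' j = i := by rw [← he]; simp
  rw [Equiv.swap_apply_def] at h1 h2
  split_ifs at h1 h2 <;> grind

/-- sum over all left multiplications by swaps -/
def SN (q : ι → ι → ℝ) (F : Equiv.Perm ι → ℝ) (g : Equiv.Perm ι) : ℝ :=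
  ∑ i, ∑ j, if i ≠ j then q i j * F (Equiv.swap i j * g) else 0

theorem SN_left (F : Equiv.Perm ι → ℝ) (z g : Equiv.Perm ι) :
    SN (fun _ _ => 1) (fun h => F (z * h)) g = SN (fun _ _ => 1) F (z * g) := by
  unfold SN
  refine Fintype.sum_equiv z _ _ fun i => Fintype.sum_equiv z _ _ fun j => ?_
  simp only [ne_eq, EmbeddingLike.apply_eq_iff_eq]
  rw [← mul_assoc, Equiv.mul_swap_eq_swap_mul, mul_assoc]

end oper

variable {N : ℕ}

def ww (a b : ℝ) (A : Finset (Fin N)) (i : Fin N) : ℝ := if i ∈ A then a else b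

def qq (a b : ℝ) (A : Finset (Fin N)) (i j : Fin N) : ℝ := ww a b A i * ww a b A j / (N : ℝ) ^ 2

def c0 (a b : ℝ) (A : Finset (Fin N)) : ℝ := (a ^ 2 * A.card + b ^ 2 * Aᶜ.card) / (N : ℝ) ^ 2

theorem transMat_eq (a b : ℝ) (A : Finset (Fin N)) (x y : Equiv.Perm (Fin N)) :
    transMat a b A x y = (if y = x then c0 a b A else 0) +
      ∑ i, ∑ j, if i ≠ j then (if y = Equiv.swap i j * x then qq a b A i j else 0) else 0 := by
  unfold transMat
  by_cases hyx : y = x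
  · subst hyx
    rw [if_pos rfl, if_pos rfl, Finset.sum_eq_zero, add_zero]
    · rfl
    intro i _
    refine Finset.sum_eq_zero fun j _ => ?_
    by_cases hij : i = j
    · simp [hij]
    · rw [if_pos hij, if_neg]
      intro h
      have : Equiv.swap i j = 1 := by
        have := h.symm
        rwa [mul_eq_right] at this
      exact hij (Equiv.swap_eq_one_iff.1 this)
  · rw [if_neg hyx, if_neg hyx, zero_add]
    by_cases hs : ∃ i j : Fin N, i ≠ j ∧ y * x⁻¹ = Equiv.swap i j
    · obtain ⟨i, j, hij, hy⟩ := hs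
      have hsum : (∑ i', ∑ j', if i' ≠ j' then
          (if y = Equiv.swap i' j' * x then qq a b A i' j' else 0) else 0) = 2 * qq a b A i j := by
        have e : ∀ i' j', (if i' ≠ j' then
          (if y = Equiv.swap i' j' * x then qq a b A i' j' else 0) else 0) =
            (if i' = i then (if j' = j then qq a b A i j else 0) else 0) +
            (if i' = j then (if j' = i then qq a b A j i else 0) else 0) := by
          intro i' j'
          have hiff : y = Equiv.swap i' j' * x ↔ Equiv.swap i j = Equiv.swap i' j' := by
            rw [← hy, mul_inv_eq_iff_eq_mul]
          by_cases h1 : i' = j'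
          · subst h1
            have e1 : ¬ (i' = i ∧ i' = j) := fun h => hij (h.1.symm.trans h.2)
            grind
          · rw [if_pos h1]
            by_cases h2 : Equiv.swap i j = Equiv.swap i' j'
            · rw [if_pos (hiff.2 h2)]
              rcases swap_eq_swap hij h2 with ⟨rfl, rfl⟩ | ⟨rfl, rfl⟩
              · simp [hij]
              · simp [hij.symm]
            · rw [if_neg (fun h => h2 (hiff.1 h))]
              have h3 : ¬ (i' = i ∧ j' = j) := by rintro ⟨rfl, rfl⟩; exact h2 rfl
              have h4 : ¬ (i' = j ∧ j' = i) := by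
                rintro ⟨rfl, rfl⟩; exact h2 (Equiv.swap_comm _ _)
              grind
        simp only [e, Finset.sum_add_distrib]
        have e3 : ∀ p q : Fin N, ∀ r : ℝ,
            (∑ i', ∑ j', if i' = p then (if j' = q then r else 0) else 0) = r := by
          intro p q r
          rw [Finset.sum_eq_single p]
          · simp
          · intro i' _ h; simp [h]
          · simp
        rw [e3, e3]
        have : qq a b A j i = qq a b A i j := by unfold qq; ring
        rw [this]; ring
      rw [hsum, hy]
      have ex1 : (∃ i' j' : Fin N, i' ≠ j' ∧ i' ∈ A ∧ j' ∈ A ∧ Equiv.swap i j = Equiv.swap i' j') ↔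
          i ∈ A ∧ j ∈ A := by
        constructor
        · rintro ⟨i', j', h1, h2, h3, h4⟩
          rcases swap_eq_swap hij h4 with ⟨rfl, rfl⟩ | ⟨rfl, rfl⟩
          · exact ⟨h2, h3⟩
          · exact ⟨h3, h2⟩
        · rintro ⟨h2, h3⟩; exact ⟨i, j, hij, h2, h3, rfl⟩
      have ex2 : (∃ i' j' : Fin N, i' ≠ j' ∧ i' ∉ A ∧ j' ∉ A ∧ Equiv.swap i j = Equiv.swap i' j') ↔
          i ∉ A ∧ j ∉ A := by
        constructor
        · rintro ⟨i', j', h1, h2, h3, h4⟩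
          rcases swap_eq_swap hij h4 with ⟨rfl, rfl⟩ | ⟨rfl, rfl⟩
          · exact ⟨h2, h3⟩
          · exact ⟨h3, h2⟩
        · rintro ⟨h2, h3⟩; exact ⟨i, j, hij, h2, h3, rfl⟩
      have ex3 : (∃ i' j' : Fin N, i' ∈ A ∧ j' ∉ A ∧ Equiv.swap i j = Equiv.swap i' j') ↔
          (i ∈ A ∧ j ∉ A) ∨ (j ∈ A ∧ i ∉ A) := by
        constructor
        · rintro ⟨i', j', h2, h3, h4⟩
          rcases swap_eq_swap hij h4 with ⟨rfl, rfl⟩ | ⟨rfl, rfl⟩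
          · exact Or.inl ⟨h2, h3⟩
          · exact Or.inr ⟨h2, h3⟩
        · rintro (⟨h2, h3⟩ | ⟨h2, h3⟩)
          · exact ⟨i, j, h2, h3, rfl⟩
          · exact ⟨j, i, h2, h3, Equiv.swap_comm _ _⟩
      simp only [ex1, ex2, ex3, qq, ww]
      by_cases hi : i ∈ A <;> by_cases hj : j ∈ A <;> simp [hi, hj] <;> ring
    · have hn : ∀ i j : Fin N, i ≠ j → ¬ y * x⁻¹ = Equiv.swap i j := fun i j h h' => hs ⟨i, j, h, h'⟩
      rw [if_neg, if_neg, if_neg]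
      · symm
        refine Finset.sum_eq_zero fun i _ => Finset.sum_eq_zero fun j _ => ?_
        by_cases hij : i = j
        · simp [hij]
        · rw [if_pos hij, if_neg]
          intro h
          exact hn i j hij (by rw [h]; simp)
      · rintro ⟨i, j, h1, h2, h3⟩
        exact hn i j (fun h => h2 (h ▸ h1)) h3
      · rintro ⟨i, j, h1, h2, h3, h4⟩
        exact hn i j h1 h4
      · rintro ⟨i, j, h1, h2, h3, h4⟩
        exact hn i j h1 h4

theorem transMat_mulVec (a b : ℝ) (A : Finset (Fin N)) (F : Equiv.Perm (Fin N) → ℝ)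
    (x : Equiv.Perm (Fin N)) :
    (transMat a b A).mulVec F x = c0 a b A * F x + SN (qq a b A) F x := by
  rw [Matrix.mulVec, dotProduct]
  simp only [transMat_eq, add_mul, Finset.sum_add_distrib]
  congr 1
  · rw [Finset.sum_eq_single x]
    · simp
    · intro y _ h; simp [h]
    · simp
  · unfold SN
    simp only [Finset.sum_mul]
    rw [Finset.sum_comm]
    refine Finset.sum_congr rfl fun i _ => ?_
    rw [Finset.sum_comm]
    refine Finset.sum_congr rfl fun j _ => ?_
    by_cases hij : i ≠ j
    · rw [if_pos hij]
      rw [Finset.sum_eq_single (Equiv.swap i j * x)]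
      · simp [hij]
      · intro y _ h; simp [h]
      · simp
    · simp [hij]

theorem transMat_symm (a b : ℝ) (A : Finset (Fin N)) : (transMat a b A).transpose = transMat a b A := by
  ext x y
  rw [Matrix.transpose_apply, transMat_eq, transMat_eq]
  congr 1
  · simp only [eq_comm]
  · refine Finset.sum_congr rfl fun i _ => Finset.sum_congr rfl fun j _ => ?_
    have : x = Equiv.swap i j * y ↔ y = Equiv.swap i j * x := by
      constructor <;> (rintro rfl; simp)
    simp only [this]

theorem transMat_right (a b : ℝ) (A : Finset (Fin N)) (x y g : Equiv.Perm (Fin N)) :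
    transMat a b A (x * g) (y * g) = transMat a b A x y := by
  rw [transMat_eq, transMat_eq]
  simp only [← mul_assoc, mul_left_inj]

theorem transMat_pow_right (a b : ℝ) (A : Finset (Fin N)) (m : ℕ) (x y g : Equiv.Perm (Fin N)) :
    (transMat a b A ^ m) (x * g) (y * g) = (transMat a b A ^ m) x y := by
  induction m generalizing x y with
  | zero => simp [Matrix.one_apply]
  | succ m ih =>
    rw [pow_succ, Matrix.mul_apply, Matrix.mul_apply, ← Equiv.sum_comp (Equiv.mulRight g)]
    refine Finset.sum_congr rfl fun z _ => ?_
    rw [Equiv.coe_mulRight, ih, transMat_right]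

theorem SN_comm (a b : ℝ) (A : Finset (Fin N)) (F : Equiv.Perm (Fin N) → ℝ) (s : ℝ)
    (h : ∀ g, SN (fun _ _ => 1) F g = s * F g) (g : Equiv.Perm (Fin N)) :
    SN (fun _ _ => 1) ((transMat a b A).mulVec F) g = s * (transMat a b A).mulVec F g := by
  have h1 : (transMat a b A).mulVec F = fun g => c0 a b A * F g + SN (qq a b A) F g := by
    funext g; exact transMat_mulVec a b A F g
  have h2 : ∀ z, SN (fun _ _ => 1) (fun h => F (z * h)) g = s * F (z * g) := fun z => by
    rw [SN_left, h]
  rw [h1]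
  simp only
  have h3 : SN (fun _ _ => 1) (fun g => c0 a b A * F g + SN (qq a b A) F g) g =
      c0 a b A * SN (fun _ _ => 1) F g +
      ∑ i, ∑ j, if i ≠ j then qq a b A i j * SN (fun _ _ => 1)
        (fun h => F (Equiv.swap i j * h)) g else 0 := by
    have e : ∀ p q : Fin N → Fin N → ℝ, (∑ i, ∑ j, p i j) + (∑ i, ∑ j, q i j) = ∑ i, ∑ j, (p i j + q i j) := by
      intro p q; simp only [Finset.sum_add_distrib]
    have e2 : ∀ k l : Fin N, (if k ≠ l then (1 : ℝ) * (c0 a b A * F (Equiv.swap k l * g) +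
        SN (qq a b A) F (Equiv.swap k l * g)) else 0) =
        c0 a b A * (if k ≠ l then 1 * F (Equiv.swap k l * g) else 0) +
        ∑ i, ∑ j, if i ≠ j then qq a b A i j *
          (if k ≠ l then 1 * F (Equiv.swap i j * (Equiv.swap k l * g)) else 0) else 0 := by
      intro k l
      by_cases hkl : k ≠ l
      · simp only [if_pos hkl, one_mul, SN]
      · simp only [if_neg hkl, mul_zero, ite_self, Finset.sum_const_zero, add_zero]
    conv_lhs => unfold SN
    simp only [SN] at e2
    simp only [e2, Finset.sum_add_distrib, ← Finset.mul_sum]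
    congr 1
    have e4 : ∀ i j, (if i ≠ j then qq a b A i j * SN (fun _ _ => 1)
        (fun h => F (Equiv.swap i j * h)) g else 0) = ∑ k, ∑ l, if i ≠ j then qq a b A i j *
          (if k ≠ l then 1 * F (Equiv.swap i j * (Equiv.swap k l * g)) else 0) else 0 := by
      intro i j
      by_cases hij : i ≠ j
      · simp only [if_pos hij, SN, Finset.mul_sum]
      · simp only [if_neg hij, Finset.sum_const_zero]
    simp only [e4]
    rw [Finset.sum_congr rfl fun k _ => Finset.sum_comm]
    rw [Finset.sum_comm]
    refine Finset.sum_congr rfl fun i _ => ?_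
    rw [Finset.sum_congr rfl fun k _ => Finset.sum_comm]
    rw [Finset.sum_comm]
  rw [h3, h, mul_add, SN, Finset.mul_sum]
  congr 1
  · ring
  refine Finset.sum_congr rfl fun i _ => ?_
  rw [Finset.mul_sum]
  refine Finset.sum_congr rfl fun j _ => ?_
  rw [h2]
  split_ifs <;> ring
end part12

section part13
section sub
variable {ι : Type} [Fintype ι] [DecidableEq ι]

theorem swap_sub_left (p : ι → Prop) [DecidablePred p] (σ : Equiv.Perm {i // p i})
    (τ : Equiv.Perm {i // ¬ p i}) (i j : {i // p i}) :
    Equiv.swap (i : ι) j * Equiv.Perm.subtypeCongr σ τ =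
      Equiv.Perm.subtypeCongr (Equiv.swap i j * σ) τ := by
  ext x
  rw [Equiv.Perm.mul_apply]
  by_cases h : p x
  · rw [Equiv.Perm.subtypeCongr.left_apply _ _ h, Equiv.Perm.subtypeCongr.left_apply _ _ h,
      Function.Injective.swap_apply Subtype.val_injective]
    rfl
  · rw [Equiv.Perm.subtypeCongr.right_apply _ _ h, Equiv.Perm.subtypeCongr.right_apply _ _ h,
      Equiv.swap_apply_of_ne_of_ne]
    · intro hc; exact (τ ⟨x, h⟩).2 (hc ▸ i.2)
    · intro hc; exact (τ ⟨x, h⟩).2 (hc ▸ j.2)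

theorem swap_sub_right (p : ι → Prop) [DecidablePred p] (σ : Equiv.Perm {i // p i})
    (τ : Equiv.Perm {i // ¬ p i}) (i j : {i // ¬ p i}) :
    Equiv.swap (i : ι) j * Equiv.Perm.subtypeCongr σ τ =
      Equiv.Perm.subtypeCongr σ (Equiv.swap i j * τ) := by
  ext x
  rw [Equiv.Perm.mul_apply]
  by_cases h : p x
  · rw [Equiv.Perm.subtypeCongr.left_apply _ _ h, Equiv.Perm.subtypeCongr.left_apply _ _ h,
      Equiv.swap_apply_of_ne_of_ne]
    · intro hc; exact i.2 (hc ▸ (σ ⟨x, h⟩).2)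
    · intro hc; exact j.2 (hc ▸ (σ ⟨x, h⟩).2)
  · rw [Equiv.Perm.subtypeCongr.right_apply _ _ h, Equiv.Perm.subtypeCongr.right_apply _ _ h,
      Function.Injective.swap_apply Subtype.val_injective]
    rfl

theorem sum_sub (p : ι → Prop) [DecidablePred p] [Fintype {i // p i}] (f : ι → ι → ℝ) :
    (∑ i, ∑ j, if p i ∧ p j then f i j else 0) = ∑ i : {i // p i}, ∑ j : {i // p i}, f i j := by
  have h1 : ∀ g : ι → ℝ, (∑ i, if p i then g i else 0) = ∑ i : {i // p i}, g i := by
    intro g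
    rw [← Finset.sum_filter]
    exact (Finset.sum_subtype _ (by simp) g)
  have h2 : ∀ i, (∑ j, if p i ∧ p j then f i j else 0) =
      if p i then (∑ j : {i // p i}, f i j) else 0 := by
    intro i
    by_cases hi : p i
    · simp only [hi, true_and, if_true]; exact h1 _
    · simp [hi]
  simp only [h2]
  exact h1 _

theorem chi_prod_inst {M : ℕ} (p : ι → Prop) [DecidablePred p] [I : Fintype {i // p i}]
    (σ : Equiv.Perm {i // p i})
    (τ : Equiv.Perm {i // ¬ p i}) {a b : ℕ} (ha : Fintype.card {i // p i} = a)
    (hb : Fintype.card {i // ¬ p i} = b) (hM : a + b ≤ M) {lam : YoungDiagram}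
    (hl : lam.card = a + b) :
    chi M lam (Equiv.Perm.subtypeCongr σ τ) = ∑ mu ∈ YD a, ∑ nu ∈ YD b,
      (lrCoeff lam mu nu : ℝ) * (chi M mu σ * chi M nu τ) := by
  obtain rfl : I = Subtype.fintype p := Subsingleton.elim _ _
  exact chi_prod p σ τ ha hb hM hl

end sub

theorem SN_split {N : ℕ} (a b : ℝ) (A : Finset (Fin N)) (F : Equiv.Perm (Fin N) → ℝ)
    (σ : Equiv.Perm {i // i ∈ A}) (τ : Equiv.Perm {i // ¬ i ∈ A}) :
    SN (qq a b A) F (Equiv.Perm.subtypeCongr σ τ) =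
      a * b / (N : ℝ) ^ 2 * SN (fun _ _ => 1) F (Equiv.Perm.subtypeCongr σ τ) +
      (a ^ 2 - a * b) / (N : ℝ) ^ 2 *
        SN (fun _ _ => 1) (fun s => F (Equiv.Perm.subtypeCongr s τ)) σ +
      (b ^ 2 - a * b) / (N : ℝ) ^ 2 *
        SN (fun _ _ => 1) (fun s => F (Equiv.Perm.subtypeCongr σ s)) τ := by
  have hA : SN (fun _ _ => 1) (fun s => F (Equiv.Perm.subtypeCongr s τ)) σ =
      ∑ i, ∑ j, if i ∈ A ∧ j ∈ A then
        (if i ≠ j then 1 * F (Equiv.swap i j * Equiv.Perm.subtypeCongr σ τ) else 0) else 0 := by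
    rw [sum_sub (fun i => i ∈ A), SN]
    refine Finset.sum_congr rfl fun i _ => Finset.sum_congr rfl fun j _ => ?_
    rw [swap_sub_left (fun i => i ∈ A)]
    simp only [ne_eq, Subtype.val_inj]
  have hB : SN (fun _ _ => 1) (fun s => F (Equiv.Perm.subtypeCongr σ s)) τ =
      ∑ i, ∑ j, if ¬ i ∈ A ∧ ¬ j ∈ A then
        (if i ≠ j then 1 * F (Equiv.swap i j * Equiv.Perm.subtypeCongr σ τ) else 0) else 0 := by
    rw [sum_sub (fun i => ¬ i ∈ A), SN]
    refine Finset.sum_congr rfl fun i _ => Finset.sum_congr rfl fun j _ => ?_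
    rw [swap_sub_right (fun i => i ∈ A)]
    simp only [ne_eq, Subtype.val_inj]
  rw [hA, hB, SN, SN]
  simp only [Finset.mul_sum, ← Finset.sum_add_distrib]
  refine Finset.sum_congr rfl fun i _ => Finset.sum_congr rfl fun j _ => ?_
  by_cases hij : i ≠ j
  · by_cases hi : i ∈ A <;> by_cases hj : j ∈ A <;>
      simp only [hi, hj, hij, qq, ww, if_true, if_false, not_true_eq_false, not_false_eq_true,
        and_true, and_false, and_self, ne_eq] <;> ring
  · simp [hij]

section main
variable {n : ℕ} (a b : ℝ) (A : Finset (Fin (2 * n)))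

theorem power_formula (hn : 1 ≤ n) (hA : A.card = n) {lam : YoungDiagram}
    (hl : lam.card = 2 * n) (m : ℕ) :
    (∀ g, SN (fun _ _ => 1) ((transMat a b A ^ m).mulVec (chi (2 * n) lam)) g =
      2 * (diag lam : ℝ) * (transMat a b A ^ m).mulVec (chi (2 * n) lam) g) ∧
    ∀ (σ : Equiv.Perm {i // i ∈ A}) (τ : Equiv.Perm {i // ¬ i ∈ A}),
      (transMat a b A ^ m).mulVec (chi (2 * n) lam) (Equiv.Perm.subtypeCongr σ τ) =
      ∑ mu ∈ YD n, ∑ nu ∈ YD n, (lrCoeff lam mu nu : ℝ) * eig a b n lam mu nu ^ m *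
        (chi (2 * n) mu σ * chi (2 * n) nu τ) := by
  have cA : Fintype.card {i // i ∈ A} = n := by simp [hA]
  have cB : Fintype.card {i // ¬ i ∈ A} = n := by
    rw [Fintype.card_subtype_compl]; simp [hA]; omega
  induction m with
  | zero =>
    simp only [pow_zero, Matrix.one_mulVec, mul_one]
    constructor
    · intro g
      rw [← chi_swap (by simp) (by simp [hl]), SN]
      simp only [one_mul]
    · intro σ τ
      exact chi_prod_inst (fun i => i ∈ A) σ τ cA cB (by omega) (by omega)
  | succ m ih =>
    obtain ⟨ih1, ih2⟩ := ih
    set F := (transMat a b A ^ m).mulVec (chi (2 * n) lam) with hF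
    have hstep : (transMat a b A ^ (m + 1)).mulVec (chi (2 * n) lam) = (transMat a b A).mulVec F := by
      rw [pow_succ', hF, Matrix.mulVec_mulVec]
    rw [hstep]
    refine ⟨SN_comm a b A F _ ih1, fun σ τ => ?_⟩
    rw [transMat_mulVec, SN_split, ih1, ih2]
    have hSA : SN (fun _ _ => 1) (fun s => F (Equiv.Perm.subtypeCongr s τ)) σ =
        ∑ mu ∈ YD n, ∑ nu ∈ YD n, (lrCoeff lam mu nu : ℝ) * eig a b n lam mu nu ^ m *
        ((2 * (diag mu : ℝ) * chi (2 * n) mu σ) * chi (2 * n) nu τ) := by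
      have e : ∀ mu ∈ YD n, 2 * (diag mu : ℝ) * chi (2 * n) mu σ =
          ∑ i, ∑ j, (if i ≠ j then chi (2 * n) mu (Equiv.swap i j * σ) else 0) := by
        intro mu hmu
        rw [mem_YD] at hmu
        rw [chi_swap (by omega) (by omega)]
      rw [Finset.sum_congr rfl fun mu hmu => Finset.sum_congr rfl fun nu _ => by rw [e mu hmu]]
      simp only [SN, ih2]
      simp only [Finset.mul_sum, Finset.sum_mul]
      have e5 : ∀ i j : {i // i ∈ A}, (if i ≠ j then ∑ mu ∈ YD n, ∑ nu ∈ YD n,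
          1 * ((lrCoeff lam mu nu : ℝ) * eig a b n lam mu nu ^ m *
            (chi (2 * n) mu (Equiv.swap i j * σ) * chi (2 * n) nu τ)) else 0) =
          ∑ mu ∈ YD n, ∑ nu ∈ YD n, (lrCoeff lam mu nu : ℝ) * eig a b n lam mu nu ^ m *
            ((if i ≠ j then chi (2 * n) mu (Equiv.swap i j * σ) else 0) * chi (2 * n) nu τ) := by
        intro i j
        split_ifs
        · simp only [one_mul]
        · simp
      simp only [e5]
      rw [Finset.sum_congr rfl fun k _ => Finset.sum_comm]
      rw [Finset.sum_comm]
      refine Finset.sum_congr rfl fun mu _ => ?_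
      rw [Finset.sum_congr rfl fun k _ => Finset.sum_comm]
      rw [Finset.sum_comm]
    have hSB : SN (fun _ _ => 1) (fun s => F (Equiv.Perm.subtypeCongr σ s)) τ =
        ∑ mu ∈ YD n, ∑ nu ∈ YD n, (lrCoeff lam mu nu : ℝ) * eig a b n lam mu nu ^ m *
        (chi (2 * n) mu σ * (2 * (diag nu : ℝ) * chi (2 * n) nu τ)) := by
      have e : ∀ nu ∈ YD n, 2 * (diag nu : ℝ) * chi (2 * n) nu τ =
          ∑ i, ∑ j, (if i ≠ j then chi (2 * n) nu (Equiv.swap i j * τ) else 0) := by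
        intro nu hnu
        rw [mem_YD] at hnu
        rw [chi_swap (by omega) (by omega)]
      rw [Finset.sum_congr rfl fun mu _ => Finset.sum_congr rfl fun nu hnu => by rw [e nu hnu]]
      simp only [SN, ih2]
      simp only [Finset.mul_sum]
      have e5 : ∀ i j : {i // ¬ i ∈ A}, (if i ≠ j then ∑ mu ∈ YD n, ∑ nu ∈ YD n,
          1 * ((lrCoeff lam mu nu : ℝ) * eig a b n lam mu nu ^ m *
            (chi (2 * n) mu σ * chi (2 * n) nu (Equiv.swap i j * τ))) else 0) =
          ∑ mu ∈ YD n, ∑ nu ∈ YD n, (lrCoeff lam mu nu : ℝ) * eig a b n lam mu nu ^ m *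
            (chi (2 * n) mu σ * (if i ≠ j then chi (2 * n) nu (Equiv.swap i j * τ) else 0)) := by
        intro i j
        split_ifs
        · simp only [one_mul]
        · simp
      simp only [e5]
      rw [Finset.sum_congr rfl fun k _ => Finset.sum_comm]
      rw [Finset.sum_comm]
      refine Finset.sum_congr rfl fun mu _ => ?_
      rw [Finset.sum_congr rfl fun k _ => Finset.sum_comm]
      rw [Finset.sum_comm]
    rw [hSA, hSB]
    simp only [Finset.mul_sum, ← Finset.sum_add_distrib]
    refine Finset.sum_congr rfl fun mu _ => Finset.sum_congr rfl fun nu _ => ?_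
    have hcard : (Aᶜ.card : ℝ) = n := by
      rw [Finset.card_compl, hA, Fintype.card_fin]
      congr 1
      omega
    have hn0 : (n : ℝ) ≠ 0 := by positivity
    rw [pow_succ (eig a b n lam mu nu) m, c0, hA, hcard]
    generalize hE : eig a b n lam mu nu ^ m = E
    rw [eig]
    generalize chi (2 * n) mu σ = X
    generalize chi (2 * n) nu τ = Y
    push_cast
    field_simp
    ring

theorem stoch (hn : 1 ≤ n) (hA : A.card = n) (hab : a + b = 2) :
    (transMat a b A).mulVec (fun _ => 1) = fun _ => 1 := by
  funext g
  rw [transMat_mulVec, SN]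
  have hcard : (Aᶜ.card : ℝ) = n := by
    rw [Finset.card_compl, hA, Fintype.card_fin]
    congr 1
    omega
  have hn0 : (n : ℝ) ≠ 0 := by positivity
  have h1 : ∀ i, ∑ j, (if i ≠ j then qq a b A i j * 1 else 0) =
      (∑ j, qq a b A i j) - qq a b A i i := by
    intro i
    rw [eq_sub_iff_add_eq, ← Finset.add_sum_erase _ (fun j => qq a b A i j) (Finset.mem_univ i),
      add_comm, ← Finset.sum_filter]
    simp only [mul_one]
    congr 1
    refine Finset.sum_congr ?_ fun _ _ => rfl
    ext j; simp [eq_comm]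
  have hs : ∀ x y : ℝ, (∑ i, if i ∈ A then x else y) = n * x + n * y := by
    intro x y
    rw [Finset.sum_ite]
    simp only [Finset.sum_const, nsmul_eq_mul]
    have e1 : (Finset.univ.filter fun i => i ∈ A) = A := by ext; simp
    have e2 : (Finset.univ.filter fun i => i ∉ A) = Aᶜ := by ext; simp
    rw [e1, e2, hA, hcard]
  simp only [h1, Finset.sum_sub_distrib]
  have h2 : ∑ i, qq a b A i i = (n * a ^ 2 + n * b ^ 2) / (2 * n) ^ 2 := by
    rw [← hs, Finset.sum_div]
    refine Finset.sum_congr rfl fun i _ => ?_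
    unfold qq ww
    push_cast
    split_ifs <;> ring
  have h3 : ∑ i, ∑ j, qq a b A i j = (n * a + n * b) * (n * a + n * b) / (2 * n) ^ 2 := by
    rw [← hs, Finset.sum_mul_sum, Finset.sum_div]
    refine Finset.sum_congr rfl fun i _ => ?_
    rw [Finset.sum_div]
    refine Finset.sum_congr rfl fun j _ => ?_
    unfold qq ww
    push_cast
    rfl
  rw [h2, h3, c0, hA, hcard]
  have hb : b = 2 - a := by linarith
  subst hb
  push_cast
  field_simp
  ring

theorem stoch_pow (hn : 1 ≤ n) (hA : A.card = n) (hab : a + b = 2) (m : ℕ) :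
    (transMat a b A ^ m).mulVec (fun _ => 1) = fun _ => 1 := by
  induction m with
  | zero => simp
  | succ m ih => rw [pow_succ, ← Matrix.mulVec_mulVec, stoch a b A hn hA hab, ih]

theorem diag_entry (hn : 1 ≤ n) (hA : A.card = n) (m : ℕ) :
    ((2 * n).factorial : ℝ) * (transMat a b A ^ m) 1 1 = ∑ lam ∈ YD (2 * n),
      (fSYT lam : ℝ) * (transMat a b A ^ m).mulVec (chi (2 * n) lam) 1 := by
  have h1 : ∀ lam ∈ YD (2 * n), (fSYT lam : ℝ) * (transMat a b A ^ m).mulVec (chi (2 * n) lam) 1 =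
      ∑ y, (transMat a b A ^ m) 1 y * (chi (2 * n) lam (1 : Equiv.Perm (Fin (2 * n))) * chi (2 * n) lam y) := by
    intro lam hl
    rw [mem_YD] at hl
    rw [chi_one (by simp) (by simp [hl]), Matrix.mulVec, dotProduct, Finset.mul_sum]
    refine Finset.sum_congr rfl fun y _ => by ring
  rw [Finset.sum_congr rfl h1, Finset.sum_comm]
  simp only [← Finset.mul_sum, ortho]
  rw [Finset.sum_eq_single 1]
  · simp [mul_comm]
  · intro y _ hy; simp [hy]
  · simp

theorem one_entry (hn : 1 ≤ n) (hA : A.card = n) {lam : YoungDiagram}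
    (hl : lam.card = 2 * n) (m : ℕ) :
    (transMat a b A ^ m).mulVec (chi (2 * n) lam) 1 =
      ∑ mu ∈ YD n, ∑ nu ∈ YD n, (lrCoeff lam mu nu : ℝ) * eig a b n lam mu nu ^ m *
        (fSYT mu * fSYT nu) := by
  have cA : Fintype.card {i // i ∈ A} = n := by simp [hA]
  have cB : Fintype.card {i // ¬ i ∈ A} = n := by
    rw [Fintype.card_subtype_compl]; simp [hA]; omega
  have h := (power_formula a b A hn hA hl m).2 1 1
  have h1 : Equiv.Perm.subtypeCongr (1 : Equiv.Perm {i // i ∈ A}) (1 : Equiv.Perm {i // ¬ i ∈ A}) = 1 := by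
    ext x
    by_cases hx : x ∈ A
    · rw [Equiv.Perm.subtypeCongr.left_apply _ _ hx]; rfl
    · rw [Equiv.Perm.subtypeCongr.right_apply _ _ hx]; rfl
  rw [h1] at h
  rw [h]
  refine Finset.sum_congr rfl fun mu hmu => Finset.sum_congr rfl fun nu hnu => ?_
  rw [mem_YD] at hmu hnu
  rw [chi_one (by omega) (by omega), chi_one (by omega) (by omega)]

theorem final_bound (hab : a + b = 2) (hn : 1 ≤ n) (hA : A.card = n)
    (x : Equiv.Perm (Fin (2 * n))) (t : ℕ) :
    dTV (fun y => (transMat a b A ^ t) x y) (unif (2 * n)) ^ 2 ≤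
      (1 / 4) * ∑ᶠ lam : YoungDiagram, ∑ᶠ mu : YoungDiagram, ∑ᶠ nu : YoungDiagram,
        if lam.card = 2 * n ∧ lam.rowLen 0 ≠ 2 * n ∧ mu.card = n ∧ nu.card = n then
          (lrCoeff lam mu nu * fSYT lam * fSYT mu * fSYT nu : ℝ) *
            |eig a b n lam mu nu| ^ (2 * t)
        else 0 := by
  classical
  have hfs : (∑ᶠ lam : YoungDiagram, ∑ᶠ mu : YoungDiagram, ∑ᶠ nu : YoungDiagram,
        if lam.card = 2 * n ∧ lam.rowLen 0 ≠ 2 * n ∧ mu.card = n ∧ nu.card = n then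
          (lrCoeff lam mu nu * fSYT lam * fSYT mu * fSYT nu : ℝ) *
            |eig a b n lam mu nu| ^ (2 * t)
        else 0) = ∑ lam ∈ (YD (2 * n)).filter (fun lam => lam.rowLen 0 ≠ 2 * n),
          (fSYT lam : ℝ) * (transMat a b A ^ (2 * t)).mulVec (chi (2 * n) lam) 1 := by
    have e3 : ∀ lam mu : YoungDiagram, (∑ᶠ nu : YoungDiagram,
        if lam.card = 2 * n ∧ lam.rowLen 0 ≠ 2 * n ∧ mu.card = n ∧ nu.card = n then
          (lrCoeff lam mu nu * fSYT lam * fSYT mu * fSYT nu : ℝ) *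
            |eig a b n lam mu nu| ^ (2 * t)
        else 0) = ∑ nu ∈ YD n, if lam.card = 2 * n ∧ lam.rowLen 0 ≠ 2 * n ∧ mu.card = n ∧ nu.card = n then
          (lrCoeff lam mu nu * fSYT lam * fSYT mu * fSYT nu : ℝ) *
            |eig a b n lam mu nu| ^ (2 * t)
        else 0 := by
      intro lam mu
      refine finsum_eq_sum_of_support_subset _ fun nu h => ?_
      rw [Finset.mem_coe, mem_YD]
      by_contra hc
      exact h (if_neg fun h' => hc h'.2.2.2)
    simp only [e3]
    have e2 : ∀ lam : YoungDiagram, (∑ᶠ mu : YoungDiagram, ∑ nu ∈ YD n,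
        if lam.card = 2 * n ∧ lam.rowLen 0 ≠ 2 * n ∧ mu.card = n ∧ nu.card = n then
          (lrCoeff lam mu nu * fSYT lam * fSYT mu * fSYT nu : ℝ) *
            |eig a b n lam mu nu| ^ (2 * t)
        else 0) = ∑ mu ∈ YD n, ∑ nu ∈ YD n, if lam.card = 2 * n ∧ lam.rowLen 0 ≠ 2 * n ∧ mu.card = n ∧ nu.card = n then
          (lrCoeff lam mu nu * fSYT lam * fSYT mu * fSYT nu : ℝ) *
            |eig a b n lam mu nu| ^ (2 * t)
        else 0 := by
      intro lam
      refine finsum_eq_sum_of_support_subset _ fun nu h => ?_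
      rw [Finset.mem_coe, mem_YD]
      by_contra hc
      exact h (Finset.sum_eq_zero fun _ _ => if_neg fun h' => hc h'.2.2.1)
    simp only [e2]
    rw [finsum_eq_sum_of_support_subset (s := (YD (2 * n)).filter (fun lam => lam.rowLen 0 ≠ 2 * n))]
    · refine Finset.sum_congr rfl fun lam hl => ?_
      rw [Finset.mem_filter, mem_YD] at hl
      rw [one_entry a b A hn hA hl.1, Finset.mul_sum]
      refine Finset.sum_congr rfl fun mu hmu => ?_
      rw [Finset.mul_sum]
      refine Finset.sum_congr rfl fun nu hnu => ?_
      rw [mem_YD] at hmu hnu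
      rw [if_pos ⟨hl.1, hl.2, hmu, hnu⟩, (even_two_mul t).pow_abs]
      ring
    · intro lam h
      rw [Finset.mem_coe, Finset.mem_filter, mem_YD]
      by_contra hc
      exact h (Finset.sum_eq_zero fun _ _ => Finset.sum_eq_zero fun _ _ =>
        if_neg fun h' => hc ⟨h'.1, h'.2.1⟩)
  have hN : (0 : ℝ) < ((2 * n).factorial : ℝ) := by exact_mod_cast Nat.factorial_pos _
  set P := transMat a b A with hP
  have hx : (P ^ (2 * t)) 1 1 = (P ^ (2 * t)) x x := by
    have := transMat_pow_right a b A (2 * t) 1 1 x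
    rw [one_mul] at this
    exact this.symm
  have hsym : ∀ y, (P ^ t) y x = (P ^ t) x y := by
    intro y
    have : (P ^ t).transpose = P ^ t := by rw [Matrix.transpose_pow, hP, transMat_symm]
    rw [← this, Matrix.transpose_apply, this]
  have h2t : (P ^ (2 * t)) x x = ∑ y, (P ^ t) x y ^ 2 := by
    rw [two_mul t, pow_add, Matrix.mul_apply]
    refine Finset.sum_congr rfl fun y _ => ?_
    rw [hsym]; ring
  have hrow : ∑ y, (P ^ t) x y = 1 := by
    have := congrFun (stoch_pow a b A hn hA hab t) x
    rw [Matrix.mulVec, dotProduct] at this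
    simpa using this
  have hcard : (Finset.univ : Finset (Equiv.Perm (Fin (2 * n)))).card = (2 * n).factorial := by
    rw [Finset.card_univ, Fintype.card_perm, Fintype.card_fin]
  have hCS : (∑ y, |(P ^ t) x y - unif (2 * n) y|) ^ 2 ≤
      ((2 * n).factorial : ℝ) * (P ^ (2 * t)) 1 1 - 1 := by
    have h1 := sq_sum_le_card_mul_sum_sq (s := Finset.univ)
      (f := fun y => |(P ^ t) x y - unif (2 * n) y|)
    refine h1.trans (le_of_eq ?_)
    rw [hcard, hx, h2t]
    simp only [sq_abs, unif, sub_sq]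
    rw [Finset.sum_add_distrib, Finset.sum_sub_distrib, Finset.sum_const, hcard, ← Finset.sum_mul,
      ← Finset.mul_sum, hrow, nsmul_eq_mul]
    field_simp
    ring
  have hsplit : ((2 * n).factorial : ℝ) * (P ^ (2 * t)) 1 1 - 1 ≤
      ∑ lam ∈ (YD (2 * n)).filter (fun lam => lam.rowLen 0 ≠ 2 * n),
          (fSYT lam : ℝ) * (P ^ (2 * t)).mulVec (chi (2 * n) lam) 1 := by
    rw [diag_entry a b A hn hA, ← Finset.sum_filter_add_sum_filter_not (YD (2 * n))
      (fun lam => lam.rowLen 0 ≠ 2 * n)]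
    have h1 : ∀ lam ∈ (YD (2 * n)).filter (fun lam => ¬ lam.rowLen 0 ≠ 2 * n),
        (fSYT lam : ℝ) * (P ^ (2 * t)).mulVec (chi (2 * n) lam) 1 = 1 := by
      intro lam hl
      rw [Finset.mem_filter, mem_YD, not_not] at hl
      have hc : (chi (2 * n) lam : Equiv.Perm (Fin (2 * n)) → ℝ) = fun _ => 1 := by
        funext g
        exact chi_triv (by omega) (by simp) (by simp [hl.1]) (by simp [hl.2]) g
      rw [← chi_one (ι := Fin (2 * n)) (M := 2 * n) (by simp) (by simp [hl.1]), hc,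
        stoch_pow a b A hn hA hab]
      norm_num
    rw [Finset.sum_congr rfl h1, Finset.sum_const, nsmul_eq_mul, mul_one]
    have h2 : ((YD (2 * n)).filter (fun lam => ¬ lam.rowLen 0 ≠ 2 * n)).card ≤ 1 := by
      rw [Finset.card_le_one]
      have key : ∀ lam : YoungDiagram, lam.card = 2 * n → lam.rowLen 0 = 2 * n →
          ∀ i, lam.rowLen (i + 1) = 0 := by
        intro lam hc hr i
        have h3 := yd_card_eq lam ((2 * n + 1 + i) + 1) (fun j hj =>
          rowLen_zero_of_card_le lam (2 * n) hc.le j (by omega))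
        rw [Finset.sum_range_succ', hr, hc] at h3
        have h4 : ∑ k ∈ Finset.range (2 * n + 1 + i), lam.rowLen (k + 1) = 0 := by
          omega
        rw [Finset.sum_eq_zero_iff] at h4
        exact h4 i (by rw [Finset.mem_range]; omega)
      intro l1 h1 l2 h2
      rw [Finset.mem_filter, mem_YD, not_not] at h1 h2
      apply yd_ext
      intro i
      cases i with
      | zero => rw [h1.2, h2.2]
      | succ i => rw [key l1 h1.1 h1.2, key l2 h2.1 h2.2]
    have h3 : ((((YD (2 * n)).filter (fun lam => ¬ lam.rowLen 0 ≠ 2 * n)).card : ℕ) : ℝ) ≤ 1 := by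
      exact_mod_cast h2
    linarith
  rw [hfs, dTV, div_pow]
  linarith

end main
end part13

/-- The `ℓ²` bound: for the bRT shuffle with `|A| = |B| = n`, `N = 2n`,
for every starting permutation `x` and every `t ≥ 0`,
`d_TV(P^t(x,·), U)² ≤ (1/4) Σ_{λ ⊢ 2n, λ ≠ (2n)} Σ_{μ,ν ⊢ n} c^λ_{μ,ν} f_λ f_μ f_ν
|Eig^λ_{μ,ν}|^{2t}`. -/
theorem brt_l2_bound (a b : ℝ) (hb : 0 < b) (hba : b ≤ a) (hab : a + b = 2)
    (n : ℕ) (hn : 1 ≤ n) (A : Finset (Fin (2 * n))) (hA : A.card = n)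
    (x : Equiv.Perm (Fin (2 * n))) (t : ℕ) :
    dTV (fun y => (transMat a b A ^ t) x y) (unif (2 * n)) ^ 2 ≤
      (1 / 4) * ∑ᶠ lam : YoungDiagram, ∑ᶠ mu : YoungDiagram, ∑ᶠ nu : YoungDiagram,
        if lam.card = 2 * n ∧ lam.rowLen 0 ≠ 2 * n ∧ mu.card = n ∧ nu.card = n then
          (lrCoeff lam mu nu * fSYT lam * fSYT mu * fSYT nu : ℝ) *
            |eig a b n lam mu nu| ^ (2 * t)
        else 0 := by
  exact final_bound a b A hab hn hA x t

end BRT
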